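/- Let (u, π, v, θ) be a smooth solution of the stationary 3D tropical climate model. Suppose p ∈ (3/2, 3), q ∈ [2, 2p′), r ∈ [2, 2p′) where p′ = p/(p−1), α ∈ [0, 2/p − 1/3], β ∈ [0, 3/q − 1/2], γ ∈ [0, 3/r − 1/2], and the inequalities α + ((4p−6)q/((6−q)p))·β ≤ 1, α + ((4p−6)r/((6−r)p))·γ ≤ 1, and β + γ < 3/q + 3/r − 2 hold. Assume that liminf_{R→+∞} ( X_{α,p,R} + Y_{β,q,R} + Z_{γ,r,R} ) < +∞. Then u = 0, v = 0 and θ = 0 identically on ℝ³. -/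

import Mathlib

open MeasureTheory Filter Metric

noncomputable section

abbrev R3 : Type := EuclideanSpace ℝ (Fin 3)

/-- Partial derivative of `f` in the `j`-th coordinate direction. -/
def pd (f : R3 → ℝ) (j : Fin 3) (x : R3) : ℝ :=
  fderiv ℝ f x (EuclideanSpace.single j 1)

/-- Laplacian of `f`. -/
def lap (f : R3 → ℝ) (x : R3) : ℝ := ∑ j, pd (pd f j) j x

/-- The stationary 3D tropical climate model:
`-Δu + (u·∇)u + ∇π + div(v⊗v) = 0`, `-Δv + (u·∇)v + ∇θ + (v·∇)u = 0`,
`-Δθ + u·∇θ + div v = 0`, `div u = 0`. -/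
def TCM (u v : R3 → R3) (pr θ : R3 → ℝ) : Prop :=
  (∀ i x, -lap (fun y => u y i) x + (∑ j, u x j * pd (fun y => u y i) j x)
      + pd pr i x + (∑ j, pd (fun y => v y j * v y i) j x) = 0) ∧
  (∀ i x, -lap (fun y => v y i) x + (∑ j, u x j * pd (fun y => v y i) j x)
      + pd θ i x + (∑ j, v x j * pd (fun y => u y i) j x) = 0) ∧
  (∀ x, -lap θ x + (∑ j, u x j * pd θ j x) + (∑ j, pd (fun y => v y j) j x) = 0) ∧
  (∀ x, (∑ j, pd (fun y => u y j) j x) = 0)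

/-- The annulus `B_{2R} \ B_R`. -/
def annulus (R : ℝ) : Set R3 := ball (0 : R3) (2 * R) \ ball 0 R

/-- `L^p` norm of a scalar function on a set `E`. -/
def lpS (g : R3 → ℝ) (p : ℝ) (E : Set R3) : ℝ := (∫ x in E, |g x| ^ p) ^ (1 / p)

/-- `X_{α,p,R} = R^{-α} ‖f‖_{L^p(B_{2R} \ B_R)}` for a vector field `f`. -/
def XnV (f : R3 → R3) (a p R : ℝ) : ℝ := R ^ (-a) * lpS (fun x => ‖f x‖) p (annulus R)

/-- `X_{α,p,R} = R^{-α} ‖f‖_{L^p(B_{2R} \ B_R)}` for a scalar function `f`. -/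
def XnS (f : R3 → ℝ) (a p R : ℝ) : ℝ := R ^ (-a) * lpS f p (annulus R)

/-!
Testing the equations with the solution times a cutoff at scale `R` bounds the energy of a ball by
fluxes across the surrounding shell. To bound the pressure flux, average the pressure radially at
scales `0 < t < T`, with `T` comparable to the width of the shell. Since the velocity is solenoidal,
only the gradient of the average at scale `T` counts, and the momentum equation controls it by
lower-order norms. By the same equation the derivative in `t` of the averages is a kernel average of
derivatives of the stress `u ⊗ u + v ⊗ v`, whose integral over `t` takes the place of a
Calderón–Zygmund estimate. Interpolating between the growth assumption and `L⁶`, the fluxes are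
bounded by powers `< 1` of the energy of the shell. Iterating over nested balls bounds the total
energy; the energy of the shells then tends to zero, and the same estimate forces the energy of
every ball to vanish.
-/

open scoped ContDiff

/-! ### Calculus of partial derivatives -/

section PartialDerivatives

variable {f g : R3 → ℝ} {w : R3 → R3} {j : Fin 3} {x : R3}

@[fun_prop]
theorem contDiff_pd (hf : ContDiff ℝ ∞ f) : ContDiff ℝ ∞ (pd f j) :=
  (hf.fderiv_right (m := ∞) (by simp)).clm_apply contDiff_const

@[fun_prop]
theorem contDiff_lap (hf : ContDiff ℝ ∞ f) : ContDiff ℝ ∞ (lap f) :=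
  ContDiff.sum fun _ _ => contDiff_pd (contDiff_pd hf)

@[fun_prop]
theorem contDiff_coord (hw : ContDiff ℝ ∞ w) (i : Fin 3) : ContDiff ℝ ∞ fun y => w y i :=
  contDiff_euclidean.1 hw i

theorem differentiable_of_contDiff (hf : ContDiff ℝ ∞ f) : Differentiable ℝ f :=
  hf.differentiable (by simp)

theorem pd_fun_mul (hf : DifferentiableAt ℝ f x) (hg : DifferentiableAt ℝ g x) :
    pd (fun y => f y * g y) j x = pd f j x * g x + f x * pd g j x := by
  simp only [pd, fderiv_fun_mul hf hg, add_apply,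
    smul_apply, smul_eq_mul]
  ring

theorem pd_fun_add (hf : DifferentiableAt ℝ f x) (hg : DifferentiableAt ℝ g x) :
    pd (fun y => f y + g y) j x = pd f j x + pd g j x := by
  simp only [pd, fderiv_fun_add hf hg, add_apply]

theorem pd_fun_sum {ι : Type*} {s : Finset ι} {F : ι → R3 → ℝ}
    (hF : ∀ i ∈ s, DifferentiableAt ℝ (F i) x) :
    pd (fun y => ∑ i ∈ s, F i y) j x = ∑ i ∈ s, pd (F i) j x := by
  simp only [pd, fderiv_fun_sum hF, sum_apply]

theorem pd_const_mul (c : ℝ) (hf : DifferentiableAt ℝ f x) :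
    pd (fun y => c * f y) j x = c * pd f j x := by
  simp only [pd, fderiv_const_mul hf, smul_apply, smul_eq_mul]

theorem pd_fun_sq (hf : DifferentiableAt ℝ f x) :
    pd (fun y => f y ^ 2) j x = 2 * f x * pd f j x := by
  simp only [sq, pd_fun_mul hf hf]
  ring

theorem norm_sq_eq_sum (x : R3) : ‖x‖ ^ 2 = ∑ i, x i ^ 2 := EuclideanSpace.real_norm_sq_eq x

theorem pd_norm_sq (hw : ContDiff ℝ ∞ w) :
    pd (fun y => ‖w y‖ ^ 2) j x = 2 * ∑ i, w x i * pd (fun y => w y i) j x := by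
  have hd i := differentiable_of_contDiff (contDiff_coord hw i)
  simp only [norm_sq_eq_sum]
  rw [pd_fun_sum (F := fun i y => w y i ^ 2) fun i _ => (hd i x).pow 2]
  simp only [pd_fun_sq (hd _ x), Finset.mul_sum, mul_assoc]

theorem pd_comm (hf : ContDiff ℝ ∞ f) (i j : Fin 3) (x : R3) :
    pd (pd f i) j x = pd (pd f j) i x := by
  have hd : DifferentiableAt ℝ (fderiv ℝ f) x :=
    (hf.fderiv_right (m := ∞) (by simp)).differentiable (by simp) x
  have pd_pd (i j : Fin 3) : pd (pd f i) j x =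
      fderiv ℝ (fderiv ℝ f) x (EuclideanSpace.single j 1) (EuclideanSpace.single i 1) := by
    change fderiv ℝ (fun y => fderiv ℝ f y (EuclideanSpace.single i 1)) x _ = _
    simp [fderiv_clm_apply hd (differentiableAt_const _)]
  have hsymm : IsSymmSndFDerivAt ℝ f x := hf.contDiffAt.isSymmSndFDerivAt (by
    rw [minSmoothness_of_isRCLikeNormedField]
    exact WithTop.coe_le_coe.2 (le_top (a := (2 : ℕ∞))))
  rw [pd_pd, pd_pd, hsymm.eq]

theorem pd_eq_zero_of_isOpen {c : ℝ} {U : Set R3} (hU : IsOpen U) (h : ∀ x ∈ U, f x = c)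
    (hx : x ∈ U) : pd f j x = 0 := by
  have hfc : f =ᶠ[nhds x] fun _ => c := by filter_upwards [hU.mem_nhds hx] with y hy using h y hy
  simp [pd, hfc.fderiv_eq]

theorem hasCompactSupport_pd (hf : HasCompactSupport f) : HasCompactSupport (pd f j) :=
  hf.fderiv_apply (𝕜 := ℝ) _

theorem hasCompactSupport_lap (hf : HasCompactSupport f) : HasCompactSupport (lap f) := by
  have hpd j : HasCompactSupport (pd (pd f j) j) := hasCompactSupport_pd (hasCompactSupport_pd hf)
  have hlap : lap f = pd (pd f 0) 0 + pd (pd f 1) 1 + pd (pd f 2) 2 := by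
    ext x; simp only [lap, Fin.sum_univ_three, Pi.add_apply]
  rw [hlap]
  exact ((hpd 0).add (hpd 1)).add (hpd 2)

theorem integrable_mul_of_hasCompactSupport (hf : Continuous f) (hc : HasCompactSupport f)
    (hg : Continuous g) : Integrable fun x => f x * g x :=
  (hf.mul hg).integrable_of_hasCompactSupport hc.mul_right

theorem integral_mul_sum {ι : Type*} {s : Finset ι} {F : ι → R3 → ℝ} (hf : Continuous f)
    (hc : HasCompactSupport f) (hF : ∀ i ∈ s, Continuous (F i)) :
    ∫ x, f x * ∑ i ∈ s, F i x = ∑ i ∈ s, ∫ x, f x * F i x := by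
  simp only [Finset.mul_sum]
  exact integral_finsetSum _ fun i hi => integrable_mul_of_hasCompactSupport hf hc (hF i hi)

theorem integral_mul_pd_eq_neg (hf : ContDiff ℝ ∞ f) (hc : HasCompactSupport f)
    (hg : ContDiff ℝ ∞ g) (j : Fin 3) : ∫ x, f x * pd g j x = -∫ x, pd f j x * g x :=
  integral_mul_fderiv_eq_neg_fderiv_mul_of_integrable
    (integrable_mul_of_hasCompactSupport (contDiff_pd hf).continuous (hasCompactSupport_pd hc)
      hg.continuous)
    (integrable_mul_of_hasCompactSupport hf.continuous hc (contDiff_pd hg).continuous)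
    (integrable_mul_of_hasCompactSupport hf.continuous hc hg.continuous)
    (fun x _ => differentiable_of_contDiff hf x) (fun x _ => differentiable_of_contDiff hg x)

theorem integral_mul_div_eq_neg {F : Fin 3 → R3 → ℝ} (hf : ContDiff ℝ ∞ f)
    (hc : HasCompactSupport f) (hF : ∀ j, ContDiff ℝ ∞ (F j)) :
    ∫ x, f x * ∑ j, pd (F j) j x = -∫ x, ∑ j, F j x * pd f j x := by
  have hfc := integral_finsetSum Finset.univ fun j (_ : j ∈ _) =>
    integrable_mul_of_hasCompactSupport (contDiff_pd hf (j := j)).continuous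
      (hasCompactSupport_pd hc) (hF j).continuous
  simp only [mul_comm (F _ _)]
  rw [hfc, integral_mul_sum hf.continuous hc fun j _ => (contDiff_pd (hF j)).continuous,
    ← Finset.sum_neg_distrib]
  exact Finset.sum_congr rfl fun j _ => integral_mul_pd_eq_neg hf hc (hF j) j

end PartialDerivatives

section RadialFunctions

variable {h : ℝ → ℝ}

theorem contDiff_norm_sq_R3 : ContDiff ℝ ∞ fun y : R3 => ‖y‖ ^ 2 := contDiff_id.norm_sq ℝ

theorem pd_coord (i j : Fin 3) (x : R3) :
    pd (fun y : R3 => y i) j x = if i = j then 1 else 0 := by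
  have hproj : HasFDerivAt (fun y : R3 => y i) (EuclideanSpace.proj i : R3 →L[ℝ] ℝ) x :=
    (EuclideanSpace.proj i : R3 →L[ℝ] ℝ).hasFDerivAt
  simp [pd, hproj.fderiv]

theorem pd_radial (hh : Differentiable ℝ h) (j : Fin 3) (x : R3) :
    pd (fun y : R3 => h (‖y‖ ^ 2)) j x = 2 * x j * deriv h (‖x‖ ^ 2) := by
  have hsq : pd (fun y : R3 => ‖y‖ ^ 2) j x = 2 * x j := by
    have hid := pd_norm_sq (w := fun y => y) contDiff_id (j := j) (x := x)
    simpa [pd_coord] using hid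
  have hderiv : HasFDerivAt (fun y : R3 => h (‖y‖ ^ 2)) _ x :=
    (hh (‖x‖ ^ 2)).hasDerivAt.comp_hasFDerivAt x
      (differentiable_of_contDiff contDiff_norm_sq_R3 x).hasFDerivAt
  rw [pd, hderiv.fderiv, smul_apply, smul_eq_mul]
  change _ * pd (fun y : R3 => ‖y‖ ^ 2) j x = _
  rw [hsq, mul_comm]

theorem contDiff_radial (hh : ContDiff ℝ ∞ h) : ContDiff ℝ ∞ fun y : R3 => h (‖y‖ ^ 2) :=
  hh.comp contDiff_norm_sq_R3

theorem contDiff_deriv (hh : ContDiff ℝ ∞ h) : ContDiff ℝ ∞ (deriv h) :=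
  (contDiff_infty_iff_deriv.1 hh).2

theorem pd_pd_radial (hh : ContDiff ℝ ∞ h) (i j : Fin 3) (x : R3) :
    pd (pd (fun y : R3 => h (‖y‖ ^ 2)) i) j x =
      2 * (if i = j then 1 else 0) * deriv h (‖x‖ ^ 2)
        + 4 * x i * x j * deriv (deriv h) (‖x‖ ^ 2) := by
  have hcoord : Differentiable ℝ fun y : R3 => y i :=
    differentiable_of_contDiff (contDiff_coord contDiff_id i)
  have hpd : pd (fun y : R3 => h (‖y‖ ^ 2)) i = fun y => 2 * y i * deriv h (‖y‖ ^ 2) :=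
    funext fun y => pd_radial (hh.differentiable (by simp)) i y
  rw [hpd, pd_fun_mul (f := fun y => 2 * y i) ((hcoord x).const_mul 2)
      (differentiable_of_contDiff (contDiff_radial (contDiff_deriv hh)) x),
    pd_const_mul 2 (hcoord x), pd_coord,
    pd_radial ((contDiff_deriv hh).differentiable (by simp))]
  ring

end RadialFunctions

/-! ### The local energy identity -/

/-- The squared Frobenius norm `|∇w|²` of the gradient of a vector field. -/
def gradSq (w : R3 → R3) (x : R3) : ℝ := ∑ i, ∑ j, pd (fun y => w y i) j x ^ 2

/-- The scalar function `θ` as a vector field, which lets `u`, `v`, `θ` be treated uniformly. -/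
def scalarField (θ : R3 → ℝ) (x : R3) : R3 := EuclideanSpace.single 0 (θ x)

/-- The triple of vector fields `(u, v, θ)`. -/
def fields (u v : R3 → R3) (θ : R3 → ℝ) : Fin 3 → R3 → R3 := ![u, v, scalarField θ]

/-- Smooth solutions of the tropical climate model. -/
structure IsSmoothTCM (u v : R3 → R3) (pr θ : R3 → ℝ) : Prop where
  contDiff_u : ContDiff ℝ ∞ u
  contDiff_v : ContDiff ℝ ∞ v
  contDiff_pr : ContDiff ℝ ∞ pr
  contDiff_θ : ContDiff ℝ ∞ θ
  tcm : TCM u v pr θ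

/-- The energy flux `(|(u, v, θ)|² / 2 + π) u + (u·v + θ) v`, whose divergence is
`u·Δu + v·Δv + θ Δθ`. -/
def energyFlux (u v : R3 → R3) (pr θ : R3 → ℝ) (j : Fin 3) (x : R3) : ℝ :=
  (1 / 2 * (‖u x‖ ^ 2 + ‖v x‖ ^ 2 + θ x ^ 2) + pr x) * u x j
    + ((∑ i, u x i * v x i) + θ x) * v x j

section Fields

variable {u v w : R3 → R3} {θ : R3 → ℝ}

theorem gradSq_nonneg (w : R3 → R3) (x : R3) : 0 ≤ gradSq w x :=
  Finset.sum_nonneg fun _ _ => Finset.sum_nonneg fun _ _ => sq_nonneg _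

theorem continuous_gradSq (hw : ContDiff ℝ ∞ w) : Continuous (gradSq w) :=
  continuous_finsetSum _ fun i _ => continuous_finsetSum _ fun _ _ =>
    (contDiff_pd (contDiff_coord hw i)).continuous.pow 2

theorem norm_scalarField (θ : R3 → ℝ) (x : R3) : ‖scalarField θ x‖ = |θ x| := by
  simp [scalarField]

theorem contDiff_scalarField (hθ : ContDiff ℝ ∞ θ) : ContDiff ℝ ∞ (scalarField θ) := by
  refine contDiff_euclidean.2 fun i => ?_
  by_cases hi : i = 0
  · simpa [scalarField, hi] using hθ
  · simpa [scalarField, hi] using contDiff_const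

theorem sum_scalarField_mul_lap (θ : R3 → ℝ) (x : R3) :
    ∑ i, scalarField θ x i * lap (fun y => scalarField θ y i) x = θ x * lap θ x := by
  simp [scalarField]

theorem contDiff_fields (hu : ContDiff ℝ ∞ u) (hv : ContDiff ℝ ∞ v) (hθ : ContDiff ℝ ∞ θ)
    (k : Fin 3) : ContDiff ℝ ∞ (fields u v θ k) := by
  fin_cases k
  exacts [hu, hv, contDiff_scalarField hθ]

theorem sum_norm_sq_fields (u v : R3 → R3) (θ : R3 → ℝ) (x : R3) :
    ∑ k, ‖fields u v θ k x‖ ^ 2 = ‖u x‖ ^ 2 + ‖v x‖ ^ 2 + θ x ^ 2 := by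
  simp [Fin.sum_univ_three, fields, norm_scalarField]

end Fields

section EnergyOfAField

variable {φ f : R3 → ℝ} {w : R3 → R3}

theorem integral_mul_self_mul_pd_pd (hφ : ContDiff ℝ ∞ φ) (hc : HasCompactSupport φ)
    (hf : ContDiff ℝ ∞ f) (j : Fin 3) :
    ∫ x, φ x * (f x * pd (pd f j) j x) =
      -(∫ x, φ x * pd f j x ^ 2) + 1 / 2 * ∫ x, pd (pd φ j) j x * f x ^ 2 := by
  have dφ := differentiable_of_contDiff hφ
  have df := differentiable_of_contDiff hf
  have hpf := contDiff_pd hf (j := j)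
  have hpφ := contDiff_pd hφ (j := j)
  have hpc := hasCompactSupport_pd hc (j := j)
  have cross := integrable_mul_of_hasCompactSupport hpφ.continuous hpc
    (hf.continuous.fun_mul hpf.continuous)
  have square := integrable_mul_of_hasCompactSupport hφ.continuous hc (hpf.continuous.fun_pow 2)
  have first : ∫ x, φ x * f x * pd (pd f j) j x =
      -(∫ x, φ x * pd f j x ^ 2 + pd φ j x * (f x * pd f j x)) := by
    rw [integral_mul_pd_eq_neg (hφ.mul hf) hc.mul_right hpf]
    congr 2 with x
    rw [pd_fun_mul (dφ x) (df x)]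
    ring
  have second : ∫ x, pd (pd φ j) j x * f x ^ 2 = -(∫ x, 2 * (pd φ j x * (f x * pd f j x))) := by
    rw [← neg_eq_iff_eq_neg, ← integral_mul_pd_eq_neg hpφ hpc (hf.pow 2)]
    congr 1 with x
    rw [pd_fun_sq (df x)]
    ring
  rw [integral_add square cross] at first
  rw [integral_const_mul] at second
  simp only [mul_assoc] at first
  linarith

theorem integral_mul_self_mul_lap (hφ : ContDiff ℝ ∞ φ) (hc : HasCompactSupport φ)
    (hf : ContDiff ℝ ∞ f) :
    ∫ x, φ x * (f x * lap f x) =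
      -(∫ x, φ x * ∑ j, pd f j x ^ 2) + 1 / 2 * ∫ x, lap φ x * f x ^ 2 := by
  have hpf j := contDiff_pd hf (j := j)
  have lap_terms : ∫ x, lap φ x * f x ^ 2 = ∑ j, ∫ x, pd (pd φ j) j x * f x ^ 2 := by
    simp only [lap, Finset.sum_mul]
    exact integral_finsetSum _ fun j _ => integrable_mul_of_hasCompactSupport
      (contDiff_pd (contDiff_pd hφ)).continuous
      (hasCompactSupport_pd (hasCompactSupport_pd hc)) (hf.continuous.pow 2)
  rw [lap_terms, integral_mul_sum hφ.continuous hc fun j _ => (hpf j).continuous.fun_pow 2]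
  have mul_lap x : f x * lap f x = ∑ j, f x * pd (pd f j) j x := by rw [lap, Finset.mul_sum]
  simp only [mul_lap]
  rw [integral_mul_sum hφ.continuous hc fun j _ =>
      hf.continuous.fun_mul (contDiff_pd (hpf j)).continuous, Finset.mul_sum,
    ← Finset.sum_neg_distrib, ← Finset.sum_add_distrib]
  exact Finset.sum_congr rfl fun j _ => integral_mul_self_mul_pd_pd hφ hc hf j

theorem integral_mul_inner_lap (hφ : ContDiff ℝ ∞ φ) (hc : HasCompactSupport φ)
    (hw : ContDiff ℝ ∞ w) :
    ∫ x, φ x * ∑ i, w x i * lap (fun y => w y i) x =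
      -(∫ x, φ x * gradSq w x) + 1 / 2 * ∫ x, lap φ x * ‖w x‖ ^ 2 := by
  have hwi i := contDiff_coord hw i
  simp only [gradSq, norm_sq_eq_sum]
  rw [integral_mul_sum hφ.continuous hc fun i _ => (hwi i).continuous.fun_mul
      (contDiff_lap (hwi i)).continuous,
    integral_mul_sum hφ.continuous hc fun i _ => continuous_finsetSum _ fun j _ =>
      (contDiff_pd (hwi i)).continuous.fun_pow 2,
    integral_mul_sum (contDiff_lap hφ).continuous (hasCompactSupport_lap hc) fun i _ =>
      (hwi i).continuous.fun_pow 2,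
    Finset.mul_sum, ← Finset.sum_neg_distrib, ← Finset.sum_add_distrib]
  exact Finset.sum_congr rfl fun i _ => integral_mul_self_mul_lap hφ hc (hwi i)

end EnergyOfAField

namespace IsSmoothTCM

variable {u v : R3 → R3} {pr θ : R3 → ℝ}

theorem contDiff_field (h : IsSmoothTCM u v pr θ) (k : Fin 3) :
    ContDiff ℝ ∞ (fields u v θ k) :=
  contDiff_fields h.contDiff_u h.contDiff_v h.contDiff_θ k

theorem contDiff_energyFlux (h : IsSmoothTCM u v pr θ) (j : Fin 3) :
    ContDiff ℝ ∞ (energyFlux u v pr θ j) := by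
  have hu := h.contDiff_u
  have hv := h.contDiff_v
  have hpr := h.contDiff_pr
  have hθ := h.contDiff_θ
  have hun := hu.norm_sq ℝ
  have hvn := hv.norm_sq ℝ
  unfold energyFlux
  fun_prop

theorem pd_energyFlux (h : IsSmoothTCM u v pr θ) (j : Fin 3) (x : R3) :
    pd (energyFlux u v pr θ j) j x =
      ((∑ i, u x i * pd (fun y => u y i) j x) + (∑ i, v x i * pd (fun y => v y i) j x)
          + θ x * pd θ j x + pd pr j x) * u x j
        + (1 / 2 * (‖u x‖ ^ 2 + ‖v x‖ ^ 2 + θ x ^ 2) + pr x) * pd (fun y => u y j) j x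
        + ((∑ i, (pd (fun y => u y i) j x * v x i + u x i * pd (fun y => v y i) j x))
          + pd θ j x) * v x j
        + ((∑ i, u x i * v x i) + θ x) * pd (fun y => v y j) j x := by
  have hu i := differentiable_of_contDiff (contDiff_coord h.contDiff_u i)
  have hv i := differentiable_of_contDiff (contDiff_coord h.contDiff_v i)
  have hpr := differentiable_of_contDiff h.contDiff_pr
  have hθ := differentiable_of_contDiff h.contDiff_θ
  have hun := differentiable_of_contDiff (h.contDiff_u.norm_sq ℝ)
  have hvn := differentiable_of_contDiff (h.contDiff_v.norm_sq ℝ)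
  have density : pd (fun y => 1 / 2 * (‖u y‖ ^ 2 + ‖v y‖ ^ 2 + θ y ^ 2)) j x =
      (∑ i, u x i * pd (fun y => u y i) j x) + (∑ i, v x i * pd (fun y => v y i) j x)
        + θ x * pd θ j x := by
    rw [pd_const_mul _ (((hun x).fun_add (hvn x)).fun_add ((hθ x).fun_pow 2)),
      pd_fun_add ((hun x).fun_add (hvn x)) ((hθ x).fun_pow 2), pd_fun_add (hun x) (hvn x),
      pd_norm_sq h.contDiff_u, pd_norm_sq h.contDiff_v, pd_fun_sq (hθ x)]
    ring
  have hE : Differentiable ℝ fun y => 1 / 2 * (‖u y‖ ^ 2 + ‖v y‖ ^ 2 + θ y ^ 2) :=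
    ((hun.fun_add hvn).fun_add (hθ.fun_pow 2)).const_mul _
  have huv : Differentiable ℝ fun y => ∑ i, u y i * v y i := by fun_prop
  unfold energyFlux
  rw [pd_fun_add (((hE x).fun_add (hpr x)).fun_mul (hu j x))
      (((huv x).fun_add (hθ x)).fun_mul (hv j x)),
    pd_fun_mul ((hE x).fun_add (hpr x)) (hu j x), pd_fun_mul ((huv x).fun_add (hθ x)) (hv j x),
    pd_fun_add (hE x) (hpr x), pd_fun_add (huv x) (hθ x), density,
    pd_fun_sum fun i _ => (hu i x).fun_mul (hv i x)]
  simp only [pd_fun_mul (hu _ x) (hv _ x)]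
  ring

theorem div_energyFlux (h : IsSmoothTCM u v pr θ) (x : R3) :
    ∑ j, pd (energyFlux u v pr θ j) j x =
      ∑ k, ∑ i, fields u v θ k x i * lap (fun y => fields u v θ k y i) x := by
  have hv i := differentiable_of_contDiff (contDiff_coord h.contDiff_v i)
  obtain ⟨eq_u, eq_v, eq_θ, div_u⟩ := h.tcm
  replace eq_u i := eq_u i x
  replace eq_v i := eq_v i x
  replace eq_θ := eq_θ x
  replace div_u := div_u x
  rw [Fin.sum_univ_three (fun k => ∑ i, fields u v θ k x i * lap _ x)]
  simp only [fields, Matrix.cons_val, sum_scalarField_mul_lap, h.pd_energyFlux]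
  simp only [pd_fun_mul (hv _ x) (hv _ x)] at eq_u
  simp only [Fin.sum_univ_three] at *
  generalize 1 / 2 * (‖u x‖ ^ 2 + ‖v x‖ ^ 2 + θ x ^ 2) = e
  linear_combination u x 0 * eq_u 0 + u x 1 * eq_u 1 + u x 2 * eq_u 2 + v x 0 * eq_v 0
    + v x 1 * eq_v 1 + v x 2 * eq_v 2 + θ x * eq_θ + (e + pr x) * div_u

theorem energy_identity (h : IsSmoothTCM u v pr θ) {φ : R3 → ℝ} (hφ : ContDiff ℝ ∞ φ)
    (hc : HasCompactSupport φ) :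
    ∫ x, φ x * ∑ k, gradSq (fields u v θ k) x =
      1 / 2 * (∫ x, lap φ x * ∑ k, ‖fields u v θ k x‖ ^ 2)
        + ∫ x, ∑ j, energyFlux u v pr θ j x * pd φ j x := by
  have hW := h.contDiff_field
  have flux := integral_mul_div_eq_neg hφ hc h.contDiff_energyFlux
  simp only [h.div_energyFlux] at flux
  rw [integral_mul_sum hφ.continuous hc fun k _ => continuous_finsetSum _ fun i _ =>
      (contDiff_coord (hW k) i).continuous.fun_mul
        (contDiff_lap (contDiff_coord (hW k) i)).continuous,
    Finset.sum_congr rfl fun k _ => integral_mul_inner_lap hφ hc (hW k),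
    Finset.sum_add_distrib, Finset.sum_neg_distrib, ← Finset.mul_sum] at flux
  rw [integral_mul_sum hφ.continuous hc fun k _ => continuous_gradSq (hW k),
    integral_mul_sum (contDiff_lap hφ).continuous (hasCompactSupport_lap hc)
      fun k _ => (hW k).continuous.norm.fun_pow 2]
  linarith

end IsSmoothTCM

/-! ### Inequalities for `lpS` -/

theorem integral_rpow_mul_rpow_le {Ω : Type*} [MeasurableSpace Ω] {μ : Measure Ω} {f g : Ω → ℝ}
    (hf : Integrable f μ) (hf0 : 0 ≤ f) (hg : Integrable g μ) (hg0 : 0 ≤ g) {a b : ℝ}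
    (ha : 0 ≤ a) (hb : 0 ≤ b) (hab : a + b = 1) :
    ∫ x, f x ^ a * g x ^ b ∂μ ≤ (∫ x, f x ∂μ) ^ a * (∫ x, g x ∂μ) ^ b := by
  have hf' : 0 ≤ ∫ x, f x ∂μ := integral_nonneg hf0
  have hg' : 0 ≤ ∫ x, g x ∂μ := integral_nonneg hg0
  have key := ENNReal.lintegral_mul_norm_pow_le hf.1.enorm hg.1.enorm ha hb hab
  rw [← ofReal_integral_norm_eq_lintegral_enorm hf, ← ofReal_integral_norm_eq_lintegral_enorm hg,
    integral_congr_ae (ae_of_all _ fun x => Real.norm_of_nonneg (hf0 x)),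
    integral_congr_ae (ae_of_all _ fun x => Real.norm_of_nonneg (hg0 x)),
    ENNReal.ofReal_rpow_of_nonneg hf' ha, ENNReal.ofReal_rpow_of_nonneg hg' hb,
    ← ENNReal.ofReal_mul (by positivity)] at key
  rw [integral_eq_lintegral_of_nonneg_ae
    (ae_of_all _ fun x => mul_nonneg (Real.rpow_nonneg (hf0 x) a) (Real.rpow_nonneg (hg0 x) b))
    (((hf.aemeasurable.pow_const a).mul (hg.aemeasurable.pow_const b)).aestronglyMeasurable)]
  refine ENNReal.toReal_le_of_le_ofReal (by positivity) (le_of_eq_of_le ?_ key)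
  refine lintegral_congr fun x => ?_
  rw [ENNReal.ofReal_mul (Real.rpow_nonneg (hf0 x) a), Real.enorm_of_nonneg (hf0 x),
    Real.enorm_of_nonneg (hg0 x), ENNReal.ofReal_rpow_of_nonneg (hf0 x) ha,
    ENNReal.ofReal_rpow_of_nonneg (hg0 x) hb]

section Lp

variable {S T : Set R3} {f g : R3 → ℝ} {p q r s : ℝ}

theorem integrableOn_of_isBounded (hS : Bornology.IsBounded S) (hf : Continuous f) :
    IntegrableOn f S :=
  (hf.continuousOn.integrableOn_compact hS.isCompact_closure).mono_set subset_closure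

theorem setIntegral_mono_of_isBounded (hT : Bornology.IsBounded T) (hST : S ⊆ T)
    (hf : Continuous f) (hf0 : 0 ≤ f) : ∫ x in S, f x ≤ ∫ x in T, f x :=
  setIntegral_mono_set (integrableOn_of_isBounded hT hf) (ae_of_all _ hf0) hST.eventuallyLE

theorem continuous_abs_rpow (hf : Continuous f) (hp : 0 ≤ p) : Continuous fun x => |f x| ^ p :=
  hf.abs.rpow_const fun _ => Or.inr hp

theorem integral_abs_rpow_nonneg : 0 ≤ ∫ x in S, |f x| ^ p :=
  integral_nonneg fun _ => Real.rpow_nonneg (abs_nonneg _) _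

theorem lpS_nonneg : 0 ≤ lpS f p S := Real.rpow_nonneg integral_abs_rpow_nonneg _

theorem lpS_rpow (hp : p ≠ 0) (t : ℝ) : lpS f p S ^ (p * t) = (∫ x in S, |f x| ^ p) ^ t := by
  rw [lpS, ← Real.rpow_mul integral_abs_rpow_nonneg]
  congr 1
  field_simp

theorem lpS_one : lpS f 1 S = ∫ x in S, |f x| := by simp [lpS]

theorem lpS_two_sq : lpS f 2 S ^ 2 = ∫ x in S, f x ^ 2 := by
  rw [← Real.rpow_natCast, show ((2 : ℕ) : ℝ) = 2 * 1 by norm_num, lpS_rpow two_ne_zero,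
    Real.rpow_one]
  simp

theorem lpS_mono (hS : Bornology.IsBounded S) (hf : Continuous f) (hg : Continuous g)
    (hp : 0 < p) (h : ∀ x, |f x| ≤ |g x|) : lpS f p S ≤ lpS g p S := by
  refine Real.rpow_le_rpow integral_abs_rpow_nonneg ?_ (by positivity)
  exact integral_mono (integrableOn_of_isBounded hS (continuous_abs_rpow hf hp.le))
    (integrableOn_of_isBounded hS (continuous_abs_rpow hg hp.le))
    fun x => Real.rpow_le_rpow (abs_nonneg _) (h x) hp.le

theorem lpS_mono_set (hT : Bornology.IsBounded T) (hST : S ⊆ T) (hf : Continuous f)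
    (hp : 0 < p) : lpS f p S ≤ lpS f p T :=
  Real.rpow_le_rpow integral_abs_rpow_nonneg
    (setIntegral_mono_of_isBounded hT hST (continuous_abs_rpow hf hp.le)
      fun _ => Real.rpow_nonneg (abs_nonneg _) _) (by positivity)

theorem lpS_const_mul {c : ℝ} (hc : 0 ≤ c) (hp : p ≠ 0) :
    lpS (fun x => c * f x) p S = c * lpS f p S := by
  simp only [lpS, abs_mul, abs_of_nonneg hc, Real.mul_rpow hc (abs_nonneg _)]
  rw [integral_const_mul, Real.mul_rpow (by positivity) integral_abs_rpow_nonneg,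
    ← Real.rpow_mul hc, mul_one_div_cancel hp, Real.rpow_one]

theorem lpS_sq (p : ℝ) : lpS (fun x => f x ^ 2) (p / 2) S = lpS f p S ^ 2 := by
  have h : ∀ x, |f x ^ 2| ^ (p / 2) = |f x| ^ p := fun x => by
    rw [abs_pow, ← Real.rpow_natCast, ← Real.rpow_mul (abs_nonneg _)]
    congr 1
    push_cast
    ring
  simp only [lpS, h]
  rw [← Real.rpow_natCast, ← Real.rpow_mul integral_abs_rpow_nonneg]
  congr 1
  push_cast
  field_simp

theorem lpS_mul_le (hS : Bornology.IsBounded S) (hf : Continuous f) (hg : Continuous g)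
    (hp : 0 < p) (hq : 0 < q) (hr : 0 < r) (h : 1 / r = 1 / p + 1 / q) :
    lpS (fun x => f x * g x) r S ≤ lpS f p S * lpS g q S := by
  have key := integral_rpow_mul_rpow_le (a := r / p) (b := r / q)
    (integrableOn_of_isBounded hS (continuous_abs_rpow hf hp.le))
    (fun x => Real.rpow_nonneg (abs_nonneg _) _)
    (integrableOn_of_isBounded hS (continuous_abs_rpow hg hq.le))
    (fun x => Real.rpow_nonneg (abs_nonneg _) _) (by positivity) (by positivity)
    (by rw [div_eq_mul_one_div, div_eq_mul_one_div r q, ← mul_add, ← h, mul_one_div_cancel hr.ne'])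
  have e : ∀ x, (|f x| ^ p) ^ (r / p) * (|g x| ^ q) ^ (r / q) = |f x * g x| ^ r := fun x => by
    rw [← Real.rpow_mul (abs_nonneg _), ← Real.rpow_mul (abs_nonneg _), mul_div_cancel₀ r hp.ne',
      mul_div_cancel₀ r hq.ne', abs_mul, Real.mul_rpow (abs_nonneg _) (abs_nonneg _)]
  simp only [e] at key
  refine (Real.rpow_le_rpow integral_abs_rpow_nonneg key (by positivity)).trans_eq ?_
  rw [Real.mul_rpow (Real.rpow_nonneg integral_abs_rpow_nonneg _)
    (Real.rpow_nonneg integral_abs_rpow_nonneg _), ← Real.rpow_mul integral_abs_rpow_nonneg,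
    ← Real.rpow_mul integral_abs_rpow_nonneg, lpS, lpS]
  congr 2 <;> field_simp

theorem integral_abs_mul_le_lpS_mul_lpS (hS : Bornology.IsBounded S) (hf : Continuous f)
    (hg : Continuous g) (hp : 0 < p) (hq : 0 < q) (h : 1 / p + 1 / q = 1) :
    ∫ x in S, |f x * g x| ≤ lpS f p S * lpS g q S := by
  rw [← lpS_one]
  exact lpS_mul_le hS hf hg hp hq one_pos (by rw [h, div_one])

theorem lpS_le_lpS_mul_volume_rpow (hS : Bornology.IsBounded S) (hf : Continuous f)
    (hs : 0 < s) (hsq : s ≤ q) :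
    lpS f s S ≤ lpS f q S * volume.real S ^ (1 / s - 1 / q) := by
  rcases hsq.eq_or_lt with rfl | hlt
  · simp
  have hq : 0 < q := hs.trans hlt
  have hd : 0 < 1 / s - 1 / q := sub_pos.2 (one_div_lt_one_div_of_lt hs hlt)
  have key := lpS_mul_le (r := s) (q := 1 / (1 / s - 1 / q)) hS hf
    (continuous_const (y := (1 : ℝ))) hq (by positivity) hs (by rw [one_div_one_div]; ring)
  simpa [lpS] using key

theorem lpS_interpolation (hS : Bornology.IsBounded S) (hf : Continuous f) (hp : 0 < p)
    (hpq : p < q) (hps : p ≤ s) (hsq : s ≤ q) :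
    lpS f s S ≤ lpS f p S ^ (p * (q - s) / (s * (q - p))) *
      lpS f q S ^ (q * (s - p) / (s * (q - p))) := by
  have hq : 0 < q := hp.trans hpq
  have hs : 0 < s := hp.trans_le hps
  have hd : 0 < q - p := sub_pos.2 hpq
  have ha : 0 ≤ (q - s) / (q - p) := div_nonneg (sub_nonneg.2 hsq) hd.le
  have hb : 0 ≤ (s - p) / (q - p) := div_nonneg (sub_nonneg.2 hps) hd.le
  have key := integral_rpow_mul_rpow_le
    (integrableOn_of_isBounded hS (continuous_abs_rpow hf hp.le))
    (fun x => Real.rpow_nonneg (abs_nonneg _) _)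
    (integrableOn_of_isBounded hS (continuous_abs_rpow hf hq.le))
    (fun x => Real.rpow_nonneg (abs_nonneg _) _) ha hb
    (by rw [← add_div, sub_add_sub_cancel, div_self hd.ne'])
  have e : ∀ x, (|f x| ^ p) ^ ((q - s) / (q - p)) * (|f x| ^ q) ^ ((s - p) / (q - p)) =
      |f x| ^ s := fun x => by
    rw [← Real.rpow_mul (abs_nonneg _), ← Real.rpow_mul (abs_nonneg _),
      ← Real.rpow_add_of_nonneg (abs_nonneg _) (by positivity) (by positivity)]
    congr 1
    field_simp
    ring
  simp only [e] at key
  refine (Real.rpow_le_rpow integral_abs_rpow_nonneg key (by positivity)).trans_eq ?_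
  rw [← lpS_rpow hp.ne', ← lpS_rpow hq.ne', Real.mul_rpow (Real.rpow_nonneg lpS_nonneg _)
    (Real.rpow_nonneg lpS_nonneg _), ← Real.rpow_mul lpS_nonneg, ← Real.rpow_mul lpS_nonneg]
  congr 2 <;> field_simp

end Lp

/-! ### Young's inequality for kernel averages -/

section Young

variable {E : Type*} [NormedAddCommGroup E] [NormedSpace ℝ E] [FiniteDimensional ℝ E]
  [MeasurableSpace E] [BorelSpace E] (μ : Measure E) [μ.IsAddHaarMeasure]

theorem lintegral_comp_sub_smul {G : E → ENNReal} (hG : Measurable G) {t : ℝ} (ht : t ≠ 0) (x : E) :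
    ∫⁻ z, G (x - t • z) ∂μ =
      ENNReal.ofReal |(t ^ Module.finrank ℝ E)⁻¹| * ∫⁻ y, G y ∂μ := by
  have hmap : ∫⁻ z, G (x - t • z) ∂μ = ∫⁻ y, G (x - y) ∂(μ.map (t • ·)) := by
    rw [lintegral_map (by fun_prop) (by fun_prop)]
  rw [hmap, Measure.map_addHaar_smul _ ht, lintegral_smul_measure,
    lintegral_sub_left_eq_self, smul_eq_mul]

theorem lintegral_rpow_mul_rpow_mul_rpow_le {α : Type*} [MeasurableSpace α] (ν : Measure α)
    {f g h : α → ENNReal} (hf : AEMeasurable f ν) (hg : AEMeasurable g ν) (hh : AEMeasurable h ν)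
    {a b c : ℝ} (ha : 0 ≤ a) (hb : 0 ≤ b) (hc : 0 ≤ c) (habc : a + b + c = 1) :
    ∫⁻ y, f y ^ a * g y ^ b * h y ^ c ∂ν ≤
      (∫⁻ y, f y ∂ν) ^ a * (∫⁻ y, g y ∂ν) ^ b * (∫⁻ y, h y ∂ν) ^ c := by
  have key := ENNReal.lintegral_prod_norm_pow_le (μ := ν) Finset.univ (f := ![f, g, h])
    (p := ![a, b, c]) (by simp [Fin.forall_fin_succ, hf, hg, hh])
    (by simpa [Fin.sum_univ_three] using habc) (by simp [Fin.forall_fin_succ, ha, hb, hc])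
  simpa [Fin.prod_univ_three] using key

-- Each of the three products separates after a linear change of variables.
theorem lintegral_pairwise_products_le {F k G : E → ENNReal} (hF : Measurable F)
    (hk : Measurable k) (hG : Measurable G) {t : ℝ} (ht : t ≠ 0) {a b c : ℝ} (ha : 0 ≤ a)
    (hb : 0 ≤ b) (hc : 0 ≤ c) (habc : a + b + c = 1) :
    ∫⁻ x, ∫⁻ z, (F x * G (x - t • z)) ^ a * (F x * k z) ^ b * (k z * G (x - t • z)) ^ c ∂μ ∂μ ≤
      ENNReal.ofReal |(t ^ Module.finrank ℝ E)⁻¹| ^ a * (∫⁻ x, F x ∂μ) ^ (a + b) *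
        (∫⁻ x, k x ∂μ) ^ (b + c) * (∫⁻ x, G x ∂μ) ^ (a + c) := by
  have hFG : Measurable fun y : E × E => F y.1 * G (y.1 - t • y.2) := by fun_prop
  have hFk : Measurable fun y : E × E => F y.1 * k y.2 := by fun_prop
  have hkG : Measurable fun y : E × E => k y.2 * G (y.1 - t • y.2) := by fun_prop
  have int_FG : ∫⁻ y, F y.1 * G (y.1 - t • y.2) ∂(μ.prod μ) =
      ENNReal.ofReal |(t ^ Module.finrank ℝ E)⁻¹| * ((∫⁻ x, F x ∂μ) * ∫⁻ x, G x ∂μ) := by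
    rw [lintegral_prod _ hFG.aemeasurable]
    have inner (x : E) : ∫⁻ z, F x * G (x - t • z) ∂μ =
        F x * (ENNReal.ofReal |(t ^ Module.finrank ℝ E)⁻¹| * ∫⁻ x, G x ∂μ) := by
      rw [lintegral_const_mul _ (by fun_prop), lintegral_comp_sub_smul μ hG ht]
    simp only [inner]
    rw [lintegral_mul_const _ hF]; ring
  have int_Fk : ∫⁻ y, F y.1 * k y.2 ∂(μ.prod μ) = (∫⁻ x, F x ∂μ) * ∫⁻ x, k x ∂μ :=
    lintegral_prod_mul hF.aemeasurable hk.aemeasurable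
  have int_kG : ∫⁻ y, k y.2 * G (y.1 - t • y.2) ∂(μ.prod μ) =
      (∫⁻ x, k x ∂μ) * ∫⁻ x, G x ∂μ := by
    rw [lintegral_prod_symm _ hkG.aemeasurable]
    have inner (z : E) : ∫⁻ x, k z * G (x - t • z) ∂μ = k z * ∫⁻ x, G x ∂μ := by
      rw [lintegral_const_mul _ (by fun_prop), lintegral_sub_right_eq_self]
    simp only [inner]
    rw [lintegral_mul_const _ hk]
  have key := lintegral_rpow_mul_rpow_mul_rpow_le (μ.prod μ) hFG.aemeasurable hFk.aemeasurable
    hkG.aemeasurable ha hb hc habc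
  rw [int_FG, int_Fk, int_kG, lintegral_prod _ (by fun_prop)] at key
  refine key.trans_eq ?_
  simp only [ENNReal.mul_rpow_of_nonneg _ _ ha, ENNReal.mul_rpow_of_nonneg _ _ hb,
    ENNReal.mul_rpow_of_nonneg _ _ hc, ENNReal.rpow_add_of_nonneg _ _ ha hb,
    ENNReal.rpow_add_of_nonneg _ _ hb hc, ENNReal.rpow_add_of_nonneg _ _ ha hc]
  ring

theorem lintegral_trilinear_le {F k G : E → ENNReal} (hF : Measurable F) (hk : Measurable k)
    (hG : Measurable G) {t : ℝ} (ht : t ≠ 0) {p c a : ℝ} (hp : 1 ≤ p) (hc : 1 ≤ c) (ha : 1 ≤ a)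
    (hpca : 1 / p + 1 / c + 1 / a = 2) :
    ∫⁻ x, ∫⁻ z, F x * k z * G (x - t • z) ∂μ ∂μ ≤
      ENNReal.ofReal |(t ^ Module.finrank ℝ E)⁻¹| ^ (1 / p + 1 / a - 1) *
        (∫⁻ x, F x ^ p ∂μ) ^ (1 / p) * (∫⁻ x, k x ^ c ∂μ) ^ (1 / c) *
        (∫⁻ x, G x ^ a ∂μ) ^ (1 / a) := by
  have one_div_le {s : ℝ} (hs : 1 ≤ s) : 0 ≤ 1 - 1 / s := by
    rw [sub_nonneg, div_le_one (by linarith)]; exact hs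
  have e1 : 1 / p + 1 / a - 1 = 1 - 1 / c := by linarith
  have e2 : 1 / p = (1 / p + 1 / a - 1) + (1 - 1 / a) := by ring
  have e3 : 1 / c = (1 - 1 / a) + (1 - 1 / p) := by linarith
  have e4 : 1 / a = (1 / p + 1 / a - 1) + (1 - 1 / p) := by ring
  have h1 : 0 ≤ 1 / p + 1 / a - 1 := e1 ▸ one_div_le hc
  have h2 := one_div_le ha
  have h3 := one_div_le hp
  have root {X : ENNReal} {s x y : ℝ} (hs : 1 ≤ s) (hx : 0 ≤ x) (hy : 0 ≤ y)
      (hxy : 1 / s = x + y) : X = (X ^ s) ^ x * (X ^ s) ^ y := by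
    rw [← ENNReal.rpow_add_of_nonneg _ _ hx hy, ← hxy, one_div,
      ENNReal.rpow_rpow_inv (by linarith)]
  have key := lintegral_pairwise_products_le μ (hF.pow_const p) (hk.pow_const c) (hG.pow_const a)
    ht h1 h2 h3 (by ring)
  rw [← e2, ← e3, ← e4] at key
  refine le_trans (le_of_eq ?_) key
  refine lintegral_congr fun x => lintegral_congr fun z => ?_
  rw [ENNReal.mul_rpow_of_nonneg _ _ h1, ENNReal.mul_rpow_of_nonneg _ _ h2,
    ENNReal.mul_rpow_of_nonneg _ _ h3]
  nth_rewrite 1 [root hp h1 h2 e2 (X := F x), root hc h2 h3 e3 (X := k z),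
    root ha h1 h3 e4 (X := G (x - t • z))]
  ring

end Young

/-- The average `∫ κ(z) h(x - t z) dz` of `h` at scale `t` around `x` with weight `κ`. -/
def kernelAvg (κ h : R3 → ℝ) (t : ℝ) (x : R3) : ℝ := ∫ z, κ z * h (x - t • z)

/-- The pairing of a test function `ψ` with the kernel average of `h` at scale `t`. -/
def pairing (ψ κ h : R3 → ℝ) (t : ℝ) : ℝ := ∫ x, ψ x * kernelAvg κ h t x

theorem lintegral_indicator_enorm_rpow {S : Set R3} (hS : Bornology.IsBounded S)
    (hSm : MeasurableSet S) {f : R3 → ℝ} (hf : Continuous f) {p : ℝ} (hp : 0 < p) :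
    (∫⁻ x, (S.indicator (fun x => ‖f x‖ₑ) x) ^ p) ^ (1 / p) = ENNReal.ofReal (lpS f p S) := by
  have hpow : ∀ x, (S.indicator (fun x => ‖f x‖ₑ) x) ^ p =
      S.indicator (fun x => ENNReal.ofReal (|f x| ^ p)) x := fun x => by
    by_cases hx : x ∈ S
    · simp only [Set.indicator_of_mem hx]
      rw [Real.enorm_eq_ofReal_abs, ENNReal.ofReal_rpow_of_nonneg (abs_nonneg _) hp.le]
    · simp only [Set.indicator_of_notMem hx, ENNReal.zero_rpow_of_pos hp]
  simp only [hpow]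
  rw [lintegral_indicator hSm, ← ofReal_integral_eq_lintegral_ofReal
    (integrableOn_of_isBounded hS (continuous_abs_rpow hf hp.le))
    (ae_of_all _ fun x => by positivity),
    ENNReal.ofReal_rpow_of_nonneg integral_abs_rpow_nonneg (by positivity), lpS]

theorem enorm_pairing_le {ψ κ h : R3 → ℝ} {S : Set R3} {t : ℝ}
    (hκ : Function.support κ ⊆ closedBall 0 1) (ht : 0 ≤ t)
    (hψ : ∀ x ∈ Function.support ψ, closedBall x t ⊆ S) :
    ‖pairing ψ κ h t‖ₑ ≤ ∫⁻ x, ∫⁻ z, S.indicator (fun x => ‖ψ x‖ₑ) x *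
      (closedBall 0 1).indicator (fun x => ‖κ x‖ₑ) z *
        S.indicator (fun x => ‖h x‖ₑ) (x - t • z) := by
  refine (enorm_integral_le_lintegral_enorm _).trans (lintegral_mono fun x => ?_)
  by_cases hx : ψ x = 0
  · simp [hx]
  have hball := hψ x hx
  rw [enorm_mul, kernelAvg]
  calc ‖ψ x‖ₑ * ‖∫ z, κ z * h (x - t • z)‖ₑ
      ≤ ‖ψ x‖ₑ * ∫⁻ z, ‖κ z * h (x - t • z)‖ₑ := by
        gcongr; exact enorm_integral_le_lintegral_enorm _
    _ = ∫⁻ z, ‖ψ x‖ₑ * ‖κ z * h (x - t • z)‖ₑ := by rw [lintegral_const_mul' _ _ enorm_ne_top]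
    _ ≤ _ := lintegral_mono fun z => ?_
  by_cases hz : κ z = 0
  · simp [hz]
  have hz1 : ‖z‖ ≤ 1 := by simpa using hκ hz
  have hmem : x - t • z ∈ S := hball (by
    rw [mem_closedBall, dist_eq_norm, sub_sub_cancel_left, norm_neg, norm_smul,
      Real.norm_of_nonneg ht]
    exact mul_le_of_le_one_right ht hz1)
  rw [Set.indicator_of_mem (hball (mem_closedBall_self ht)), Set.indicator_of_mem (hκ hz),
    Set.indicator_of_mem hmem, enorm_mul, mul_assoc]

theorem abs_pairing_le {ψ κ h : R3 → ℝ} (hψ : Continuous ψ) (hκ : Continuous κ)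
    (hh : Continuous h) (hκ1 : Function.support κ ⊆ closedBall 0 1) {S : Set R3}
    (hS : Bornology.IsBounded S) (hSm : MeasurableSet S) {t : ℝ} (ht : 0 < t)
    (hψS : ∀ x ∈ Function.support ψ, closedBall x t ⊆ S) {p c a : ℝ} (hp : 1 ≤ p) (hc : 1 ≤ c)
    (ha : 1 ≤ a) (hpca : 1 / p + 1 / c + 1 / a = 2) :
    |pairing ψ κ h t| ≤ t ^ (-3 * (1 / p + 1 / a - 1)) *
      (lpS ψ p S * lpS κ c (closedBall 0 1) * lpS h a S) := by
  have hc1 : 1 / c ≤ 1 := (div_le_one (by linarith)).2 hc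
  have key := (enorm_pairing_le (h := h) hκ1 ht.le hψS).trans
    (lintegral_trilinear_le volume (hψ.enorm.measurable.indicator hSm)
      (hκ.enorm.measurable.indicator measurableSet_closedBall)
      (hh.enorm.measurable.indicator hSm) ht.ne' hp hc ha hpca)
  rw [lintegral_indicator_enorm_rpow hS hSm hψ (by linarith),
    lintegral_indicator_enorm_rpow isBounded_closedBall measurableSet_closedBall hκ (by linarith),
    lintegral_indicator_enorm_rpow hS hSm hh (by linarith), finrank_euclideanSpace_fin,
    abs_of_nonneg (by positivity),
    ENNReal.ofReal_rpow_of_nonneg (by positivity) (by linarith),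
    ← ENNReal.ofReal_mul (by positivity),
    ← ENNReal.ofReal_mul (mul_nonneg (by positivity) lpS_nonneg),
    ← ENNReal.ofReal_mul (mul_nonneg (mul_nonneg (by positivity) lpS_nonneg) lpS_nonneg),
    Real.enorm_eq_ofReal_abs, ENNReal.ofReal_le_ofReal_iff (mul_nonneg
      (mul_nonneg (mul_nonneg (by positivity) lpS_nonneg) lpS_nonneg) lpS_nonneg)] at key
  have hscale : ((t ^ 3)⁻¹) ^ (1 / p + 1 / a - 1) = t ^ (-3 * (1 / p + 1 / a - 1)) := by
    rw [Real.rpow_mul ht.le, Real.rpow_neg ht.le]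
    norm_cast
  rw [hscale] at key
  exact key.trans_eq (by ring)

/-! ### Calculus of kernel averages -/

theorem hasCompactSupport_of_support_subset {f : R3 → ℝ}
    (hf : Function.support f ⊆ closedBall 0 1) : HasCompactSupport f :=
  HasCompactSupport.of_support_subset_isCompact (isCompact_closedBall 0 1) hf

theorem support_pd_subset_closedBall {f : R3 → ℝ} (hf : Function.support f ⊆ closedBall 0 1)
    (j : Fin 3) : Function.support (pd f j) ⊆ closedBall 0 1 := by
  intro x hx
  by_contra hx1
  exact hx (pd_eq_zero_of_isOpen isClosed_closedBall.isOpen_compl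
    (fun y hy => by_contra fun hy0 => hy (hf hy0)) hx1)

theorem fderiv_apply_eq_sum (f : R3 → ℝ) (x w : R3) : fderiv ℝ f x w = ∑ k, w k * pd f k x := by
  have hw : w = ∑ k, w k • (EuclideanSpace.single k (1 : ℝ) : R3) := by
    ext i
    fin_cases i <;> simp [Fin.sum_univ_three]
  conv_lhs => rw [hw, map_sum]
  simp [pd]

theorem hasDerivAt_integral_mul_of_hasCompactSupport {E : Type*} [TopologicalSpace E]
    [MeasurableSpace E] [OpensMeasurableSpace E] (μ : Measure E) [IsFiniteMeasureOnCompacts μ]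
    {k : E → ℝ} (hk : Continuous k) (hkc : HasCompactSupport k) {f f' : E → ℝ → ℝ}
    (hf : Continuous fun y : E × ℝ => f y.1 y.2)
    (hf' : Continuous fun y : E × ℝ => f' y.1 y.2)
    (hd : ∀ e t, HasDerivAt (f e) (f' e t) t) (t : ℝ) :
    HasDerivAt (fun t => ∫ e, k e * f e t ∂μ) (∫ e, k e * f' e t ∂μ) t := by
  obtain ⟨C, hC⟩ := (hkc.isCompact.prod (isCompact_Icc (a := t - 1)
    (b := t + 1))).exists_bound_of_continuousOn hf'.continuousOn
  have hft (s : ℝ) : Continuous fun e => f e s := hf.comp (by fun_prop : Continuous fun e => (e, s))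
  have hft' : Continuous fun e => f' e t := hf'.comp (by fun_prop : Continuous fun e => (e, t))
  refine (hasDerivAt_integral_of_dominated_loc_of_deriv_le (bound := fun e => ‖k e‖ * C)
    (F := fun t e => k e * f e t) (F' := fun t e => k e * f' e t)
    (Icc_mem_nhds (by linarith : t - 1 < t) (by linarith : t < t + 1))
    (.of_forall fun s => (hk.mul (hft s)).aestronglyMeasurable)
    ((hk.mul (hft t)).integrable_of_hasCompactSupport hkc.mul_right)
    (hk.mul hft').aestronglyMeasurable (ae_of_all _ fun e s hs => ?_)
    ((hk.norm.mul continuous_const).integrable_of_hasCompactSupport hkc.norm.mul_right)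
    (ae_of_all _ fun e s _ => (hd e s).const_mul _)).2
  rw [norm_mul]
  by_cases he : e ∈ tsupport k
  · exact mul_le_mul_of_nonneg_left (hC (e, s) ⟨he, hs⟩) (norm_nonneg _)
  · simp [image_eq_zero_of_notMem_tsupport he]

section Pairing

variable {ψ κ f g : R3 → ℝ}

theorem hasCompactSupport_mul_fst_snd (hψ : HasCompactSupport ψ) (hκ : HasCompactSupport κ) :
    HasCompactSupport fun y : R3 × R3 => ψ y.1 * κ y.2 := by
  refine HasCompactSupport.intro (hψ.isCompact.prod hκ.isCompact) fun y hy => ?_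
  rw [Set.mem_prod, not_and_or] at hy
  rcases hy with h | h <;> simp [image_eq_zero_of_notMem_tsupport h]

theorem integrable_pairing (hψ : Continuous ψ) (hψc : HasCompactSupport ψ) (hκ : Continuous κ)
    (hκc : HasCompactSupport κ) (hf : Continuous f) (t : ℝ) :
    Integrable fun y : R3 × R3 => (ψ y.1 * κ y.2) * f (y.1 - t • y.2) :=
  Continuous.integrable_of_hasCompactSupport (by fun_prop)
    (hasCompactSupport_mul_fst_snd hψc hκc).mul_right

theorem pairing_eq_integral_prod (hψ : Continuous ψ) (hψc : HasCompactSupport ψ)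
    (hκ : Continuous κ) (hκc : HasCompactSupport κ) (hf : Continuous f) (t : ℝ) :
    pairing ψ κ f t = ∫ y : R3 × R3, (ψ y.1 * κ y.2) * f (y.1 - t • y.2) := by
  rw [Measure.volume_eq_prod, integral_prod _ (integrable_pairing hψ hψc hκ hκc hf t)]
  simp only [pairing, kernelAvg, ← integral_const_mul, mul_assoc]

theorem continuous_pairing (hψ : Continuous ψ) (hψc : HasCompactSupport ψ) (hκ : Continuous κ)
    (hκc : HasCompactSupport κ) (hf : Continuous f) : Continuous (pairing ψ κ f) := by
  simp_rw [funext (pairing_eq_integral_prod hψ hψc hκ hκc hf)]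
  rw [← continuousOn_univ]
  exact continuousOn_integral_of_compact_support (hasCompactSupport_mul_fst_snd hψc hκc).isCompact
    (by fun_prop) fun t y _ hy => by simp [image_eq_zero_of_notMem_tsupport hy]

theorem pairing_sum (hψ : Continuous ψ) (hψc : HasCompactSupport ψ) (hκ : Continuous κ)
    (hκc : HasCompactSupport κ) {ι : Type*} {s : Finset ι} {F : ι → R3 → ℝ}
    (hF : ∀ i ∈ s, Continuous (F i)) (t : ℝ) :
    pairing ψ κ (fun y => ∑ i ∈ s, F i y) t = ∑ i ∈ s, pairing ψ κ (F i) t := by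
  rw [pairing_eq_integral_prod hψ hψc hκ hκc (continuous_finsetSum s hF),
    Finset.sum_congr rfl fun i hi => pairing_eq_integral_prod hψ hψc hκ hκc (hF i hi) t,
    ← integral_finsetSum _ fun i hi => integrable_pairing hψ hψc hκ hκc (hF i hi) t]
  simp only [Finset.mul_sum]

theorem pairing_sub (hψ : Continuous ψ) (hψc : HasCompactSupport ψ) (hκ : Continuous κ)
    (hκc : HasCompactSupport κ) (hf : Continuous f) (hg : Continuous g) (t : ℝ) :
    pairing ψ κ (fun y => f y - g y) t = pairing ψ κ f t - pairing ψ κ g t := by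
  rw [pairing_eq_integral_prod hψ hψc hκ hκc hf, pairing_eq_integral_prod hψ hψc hκ hκc hg,
    pairing_eq_integral_prod hψ hψc hκ hκc (f := fun y => f y - g y) (by fun_prop),
    ← integral_sub (integrable_pairing hψ hψc hκ hκc hf t)
      (integrable_pairing hψ hψc hκ hκc hg t)]
  simp only [mul_sub]

theorem hasDerivAt_comp_sub_smul (hf : Differentiable ℝ f) (x z : R3) (t : ℝ) :
    HasDerivAt (fun t : ℝ => f (x - t • z)) (-∑ k, z k * pd f k (x - t • z)) t := by
  have hline : HasDerivAt (fun t : ℝ => x - t • z) (-z) t := by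
    simpa using ((hasDerivAt_id t).smul_const z).const_sub x
  refine ((hf (x - t • z)).hasFDerivAt.comp_hasDerivAt t hline).congr_deriv ?_
  simp [fderiv_apply_eq_sum]

theorem pd_comp_sub_smul (hf : Differentiable ℝ f) (x : R3) (t : ℝ) (j : Fin 3) (z : R3) :
    pd (fun z => f (x - t • z)) j z = -(t * pd f j (x - t • z)) := by
  have hline : HasFDerivAt (fun z : R3 => x - t • z) (-(t • ContinuousLinearMap.id ℝ R3)) z := by
    simpa using ((hasFDerivAt_id (𝕜 := ℝ) z).const_smul t).const_sub x
  have hcomp := (hf (x - t • z)).hasFDerivAt.comp z hline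
  rw [pd, show (fun z => f (x - t • z)) = f ∘ fun z => x - t • z from rfl, hcomp.fderiv]
  simp [pd]

theorem mul_kernelAvg_pd (hκ : ContDiff ℝ ∞ κ) (hκc : HasCompactSupport κ) (hf : ContDiff ℝ ∞ f)
    (j : Fin 3) (t : ℝ) (x : R3) : t * kernelAvg κ (pd f j) t x = kernelAvg (pd κ j) f t x := by
  have hshift : ContDiff ℝ ∞ fun z : R3 => f (x - t • z) := hf.comp (by fun_prop)
  have hparts := integral_mul_pd_eq_neg hκ hκc hshift j
  simp only [pd_comp_sub_smul (differentiable_of_contDiff hf), mul_neg, integral_neg] at hparts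
  rw [kernelAvg, kernelAvg, ← neg_inj, ← hparts, ← integral_const_mul]
  exact congrArg _ (integral_congr_ae (ae_of_all _ fun z => by ring))

theorem mul_pairing_pd (hκ : ContDiff ℝ ∞ κ) (hκc : HasCompactSupport κ) (hf : ContDiff ℝ ∞ f)
    (j : Fin 3) (t : ℝ) : t * pairing ψ κ (pd f j) t = pairing ψ (pd κ j) f t := by
  simp only [pairing, ← mul_kernelAvg_pd hκ hκc hf, ← integral_const_mul]
  exact integral_congr_ae (ae_of_all _ fun x => by ring)

end Pairing

/-! ### The radial kernel -/

/-- A smooth nonincreasing profile, positive on `(-∞, 1)` and vanishing on `[1, ∞)`. -/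
def kernelProfile (s : ℝ) : ℝ := expNegInvGlue (1 - s)

/-- The radial bump on the unit ball whose gradient is `-z • radialKernel z`. -/
def kernelPotential (z : R3) : ℝ := kernelProfile (‖z‖ ^ 2)

/-- The nonnegative radial weight of the averages applied to the pressure. It is chosen such that
the scale derivative of these averages has a kernel in gradient form. -/
def radialKernel (z : R3) : ℝ := -2 * deriv kernelProfile (‖z‖ ^ 2)

theorem contDiff_kernelProfile : ContDiff ℝ ∞ kernelProfile :=
  expNegInvGlue.contDiff.comp (contDiff_const.sub contDiff_id)

theorem antitone_kernelProfile : Antitone kernelProfile := fun _ _ h =>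
  expNegInvGlue.monotone (sub_le_sub_left h 1)

theorem kernelProfile_of_one_le {s : ℝ} (hs : 1 ≤ s) : kernelProfile s = 0 :=
  expNegInvGlue.zero_of_nonpos (by linarith)

@[fun_prop]
theorem contDiff_kernelPotential : ContDiff ℝ ∞ kernelPotential :=
  contDiff_radial contDiff_kernelProfile

@[fun_prop]
theorem contDiff_radialKernel : ContDiff ℝ ∞ radialKernel :=
  contDiff_const.mul (contDiff_radial (contDiff_deriv contDiff_kernelProfile))

theorem pd_kernelPotential (k : Fin 3) (z : R3) :
    pd kernelPotential k z = -(z k * radialKernel z) := by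
  have := pd_radial (contDiff_kernelProfile.differentiable (by simp)) k z
  rw [radialKernel]
  exact this.trans (by ring)

theorem support_kernelPotential : Function.support kernelPotential ⊆ closedBall 0 1 := by
  intro z hz
  rw [mem_closedBall_zero_iff]
  by_contra! hz1
  exact hz (kernelProfile_of_one_le (by nlinarith))

theorem support_radialKernel : Function.support radialKernel ⊆ closedBall 0 1 := by
  intro z hz
  rw [mem_closedBall_zero_iff]
  by_contra! hz1
  have hzero : kernelProfile =ᶠ[nhds (‖z‖ ^ 2)] fun _ => 0 := by
    filter_upwards [lt_mem_nhds (by nlinarith : 1 < ‖z‖ ^ 2)] with s hs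
    exact kernelProfile_of_one_le hs.le
  exact hz (by simp [radialKernel, hzero.deriv_eq])

theorem hasCompactSupport_radialKernel : HasCompactSupport radialKernel :=
  hasCompactSupport_of_support_subset support_radialKernel

theorem radialKernel_nonneg (z : R3) : 0 ≤ radialKernel z := by
  have := antitone_kernelProfile.deriv_nonpos (x := ‖z‖ ^ 2)
  rw [radialKernel]
  linarith

theorem exists_radialKernel_ne_zero : ∃ z, radialKernel z ≠ 0 := by
  by_contra! hzero
  have hconst : ∀ x, fderiv ℝ kernelPotential x = 0 := fun x => by
    ext w
    simp [fderiv_apply_eq_sum, pd_kernelPotential, hzero]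
  have heq : kernelPotential 0 = kernelPotential (EuclideanSpace.single 0 1) :=
    is_const_of_fderiv_eq_zero (differentiable_of_contDiff contDiff_kernelPotential) hconst _ _
  have hpos : 0 < kernelPotential 0 := expNegInvGlue.pos_of_pos (by simp)
  rw [heq, kernelPotential, kernelProfile_of_one_le (by simp)] at hpos
  exact hpos.false

theorem integral_radialKernel_pos : 0 < ∫ z, radialKernel z := by
  obtain ⟨z, hz⟩ := exists_radialKernel_ne_zero
  exact contDiff_radialKernel.continuous.integral_pos_of_hasCompactSupport_nonneg_nonzero
    hasCompactSupport_radialKernel radialKernel_nonneg hz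

theorem hasDerivAt_pairing_radialKernel {ψ f : R3 → ℝ} (hψ : Continuous ψ)
    (hψc : HasCompactSupport ψ) (hf : ContDiff ℝ ∞ f) (t : ℝ) :
    HasDerivAt (pairing ψ radialKernel f) (∑ k, pairing ψ (pd kernelPotential k) (pd f k) t) t := by
  have hpf (k : Fin 3) : Continuous (pd f k) := (contDiff_pd hf).continuous
  have hpK (k : Fin 3) : Continuous (pd kernelPotential k) :=
    (contDiff_pd contDiff_kernelPotential).continuous
  have hpKc (k : Fin 3) : HasCompactSupport (pd kernelPotential k) :=
    hasCompactSupport_of_support_subset (support_pd_subset_closedBall support_kernelPotential k)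
  have hf0 := hf.continuous
  have hK := contDiff_radialKernel.continuous
  have hderiv := hasDerivAt_integral_mul_of_hasCompactSupport (volume : Measure (R3 × R3))
    (k := fun y => ψ y.1 * radialKernel y.2) (f := fun y t => f (y.1 - t • y.2))
    (by fun_prop) (hasCompactSupport_mul_fst_snd hψc hasCompactSupport_radialKernel)
    (by fun_prop) (by fun_prop)
    (fun y t => hasDerivAt_comp_sub_smul (differentiable_of_contDiff hf) y.1 y.2 t) t
  rw [← funext (pairing_eq_integral_prod hψ hψc hK hasCompactSupport_radialKernel hf0)] at hderiv
  refine hderiv.congr_deriv ?_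
  simp only [pairing_eq_integral_prod hψ hψc (hpK _) (hpKc _) (hpf _)]
  rw [← integral_finsetSum _ fun k _ => integrable_pairing hψ hψc (hpK k) (hpKc k) (hpf k) t]
  refine integral_congr_ae (ae_of_all _ fun y => ?_)
  simp only [← Finset.sum_neg_distrib, Finset.mul_sum, pd_kernelPotential]
  exact Finset.sum_congr rfl fun k _ => by ring

/-! ### An integral bounded by two competing powers -/

theorem abs_integral_le_rpow_add_rpow {k : ℝ → ℝ} (hk : Continuous k) {A B a b l T : ℝ}
    (ha : 0 < a) (hb : 0 < b) (hl : 0 < l) (hT : 0 ≤ T) (hA : 0 ≤ A) (hB : 0 ≤ B)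
    (h_near : ∀ t ∈ Set.Ioc 0 T, |k t| ≤ A * t ^ (a - 1))
    (h_far : ∀ t ∈ Set.Ioc 0 T, |k t| ≤ B * t ^ (-1 - b)) :
    |∫ t in (0 : ℝ)..T, k t| ≤ A * l ^ a / a + B * l ^ (-b) / b := by
  have near {s : ℝ} (hs : 0 ≤ s) (hsT : s ≤ T) : |∫ t in (0 : ℝ)..s, k t| ≤ A * s ^ a / a := by
    have := intervalIntegral.norm_integral_le_of_norm_le (f := k) hs
      (ae_of_all _ fun t ht => h_near t ⟨ht.1, ht.2.trans hsT⟩)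
      ((intervalIntegral.intervalIntegrable_rpow' (by linarith)).const_mul A)
    rwa [intervalIntegral.integral_const_mul, integral_rpow (Or.inl (by linarith)), sub_add_cancel,
      Real.zero_rpow ha.ne', sub_zero, ← mul_div_assoc, Real.norm_eq_abs] at this
  have far (hlT : l ≤ T) : |∫ t in l..T, k t| ≤ B * l ^ (-b) / b := by
    have h0 : (0 : ℝ) ∉ Set.uIcc l T := by
      rw [Set.uIcc_of_le hlT]; exact fun h => hl.not_ge h.1
    have := intervalIntegral.norm_integral_le_of_norm_le (f := k) hlT
      (ae_of_all _ fun t ht => h_far t ⟨hl.trans ht.1, ht.2⟩)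
      ((intervalIntegral.intervalIntegrable_rpow (μ := volume) (Or.inr h0)).const_mul B)
    rw [intervalIntegral.integral_const_mul, integral_rpow (Or.inr ⟨by linarith, h0⟩)] at this
    refine this.trans ?_
    rw [show -1 - b + 1 = -b by ring, div_neg, ← neg_div, neg_sub, mul_div_assoc]
    have := Real.rpow_nonneg hT (-b)
    gcongr
    linarith
  rcases le_total T l with hTl | hlT
  · calc |∫ t in (0 : ℝ)..T, k t| ≤ A * T ^ a / a := near hT le_rfl
      _ ≤ A * l ^ a / a := by gcongr
      _ ≤ _ := le_add_of_nonneg_right (by positivity)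
  · rw [← intervalIntegral.integral_add_adjacent_intervals (hk.intervalIntegrable 0 l)
      (hk.intervalIntegrable l T)]
    exact (abs_add_le _ _).trans (add_le_add (near hl.le hlT) (far hlT))

/-! ### The smoothed pressure -/

/-- The entry `w_j w_k` of the tensor `w ⊗ w`. -/
def stress (w : R3 → R3) (j k : Fin 3) (x : R3) : ℝ := w x j * w x k

/-- The sum over `j, k` of the pairings of `ψ` with the averages of `∂_j (w_j w_k)` against
`∂_k kernelPotential`. It is the contribution of `w ⊗ w` to the scale derivative of the smoothed
pressure. -/
def stressPairing (w : R3 → R3) (ψ : R3 → ℝ) (t : ℝ) : ℝ :=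
  ∑ k, ∑ j, pairing ψ (pd kernelPotential k) (pd (stress w j k) j) t

section Stress

variable {w : R3 → R3} {ψ : R3 → ℝ}

theorem contDiff_stress (hw : ContDiff ℝ ∞ w) (j k : Fin 3) : ContDiff ℝ ∞ (stress w j k) :=
  (contDiff_coord hw j).mul (contDiff_coord hw k)

theorem continuous_pd_stress (hw : ContDiff ℝ ∞ w) (j k l : Fin 3) :
    Continuous (pd (stress w j k) l) :=
  (contDiff_pd (contDiff_stress hw j k)).continuous

theorem pd_stress (hw : ContDiff ℝ ∞ w) (j k l : Fin 3) (x : R3) :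
    pd (stress w j k) l x =
      pd (fun y => w y j) l x * w x k + w x j * pd (fun y => w y k) l x :=
  pd_fun_mul (differentiable_of_contDiff (contDiff_coord hw j) x)
    (differentiable_of_contDiff (contDiff_coord hw k) x)

theorem abs_coord_le (x : R3) (i : Fin 3) : |x i| ≤ ‖x‖ := PiLp.norm_apply_le x i

theorem abs_pd_le_sqrt_gradSq (w : R3 → R3) (i j : Fin 3) (x : R3) :
    |pd (fun y => w y i) j x| ≤ √(gradSq w x) := by
  refine Real.abs_le_sqrt ?_
  calc pd (fun y => w y i) j x ^ 2 ≤ ∑ j, pd (fun y => w y i) j x ^ 2 :=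
        Finset.single_le_sum (f := fun j => pd (fun y => w y i) j x ^ 2)
          (fun _ _ => sq_nonneg _) (Finset.mem_univ j)
    _ ≤ gradSq w x := Finset.single_le_sum (f := fun i => ∑ j, pd (fun y => w y i) j x ^ 2)
          (fun _ _ => Finset.sum_nonneg fun _ _ => sq_nonneg _) (Finset.mem_univ i)

theorem abs_stress_le (w : R3 → R3) (j k : Fin 3) (x : R3) : |stress w j k x| ≤ ‖w x‖ ^ 2 := by
  rw [stress, abs_mul, sq]
  exact mul_le_mul (abs_coord_le _ _) (abs_coord_le _ _) (abs_nonneg _) (norm_nonneg _)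

theorem abs_pd_stress_le (hw : ContDiff ℝ ∞ w) (j k l : Fin 3) (x : R3) :
    |pd (stress w j k) l x| ≤ 2 * (‖w x‖ * √(gradSq w x)) := by
  rw [pd_stress hw]
  refine (abs_add_le _ _).trans ?_
  rw [abs_mul, abs_mul]
  have hj := mul_le_mul (abs_pd_le_sqrt_gradSq w j l x) (abs_coord_le (w x) k) (abs_nonneg _)
    (Real.sqrt_nonneg _)
  have hk := mul_le_mul (abs_coord_le (w x) j) (abs_pd_le_sqrt_gradSq w k l x) (abs_nonneg _)
    (norm_nonneg _)
  linarith

theorem contDiff_pd_kernelPotential (k : Fin 3) : ContDiff ℝ ∞ (pd kernelPotential k) :=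
  contDiff_pd contDiff_kernelPotential

theorem support_pd_kernelPotential (k : Fin 3) :
    Function.support (pd kernelPotential k) ⊆ closedBall 0 1 :=
  support_pd_subset_closedBall support_kernelPotential k

theorem hasCompactSupport_pd_kernelPotential (k : Fin 3) :
    HasCompactSupport (pd kernelPotential k) :=
  hasCompactSupport_of_support_subset (support_pd_kernelPotential k)

theorem continuous_stressPairing (hψ : Continuous ψ) (hψc : HasCompactSupport ψ)
    (hw : ContDiff ℝ ∞ w) : Continuous (stressPairing w ψ) :=
  continuous_finsetSum _ fun k _ => continuous_finsetSum _ fun j _ =>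
    continuous_pairing hψ hψc (contDiff_pd_kernelPotential k).continuous
      (hasCompactSupport_pd_kernelPotential k) (continuous_pd_stress hw j k j)

theorem abs_sum_sum_le_mul {ι κ : Type*} {s : Finset ι} {t : Finset κ} {f c : ι → κ → ℝ} {X : ℝ}
    (h : ∀ i j, |f i j| ≤ c i j * X) :
    |∑ i ∈ s, ∑ j ∈ t, f i j| ≤ (∑ i ∈ s, ∑ j ∈ t, c i j) * X := by
  simp only [Finset.sum_mul]
  exact (Finset.abs_sum_le_sum_abs _ _).trans (Finset.sum_le_sum fun i _ =>
    (Finset.abs_sum_le_sum_abs _ _).trans (Finset.sum_le_sum fun j _ => h i j))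

theorem exists_abs_stressPairing_le_near {p : ℝ} (hp1 : 3 / 2 ≤ p) (hp2 : p ≤ 3) :
    ∃ C, 0 ≤ C ∧ ∀ {S : Set R3} {w : R3 → R3} {ψ : R3 → ℝ} {t : ℝ}, Bornology.IsBounded S →
      MeasurableSet S → ContDiff ℝ ∞ w → Continuous ψ → 0 < t →
      (∀ x ∈ Function.support ψ, closedBall x t ⊆ S) →
      |stressPairing w ψ t| ≤ C * (lpS ψ p S *
        lpS (fun x => ‖w x‖ * √(gradSq w x)) (3 / 2) S) * t ^ (2 - 3 / p - 1) := by
  have hp0 : 0 < p := by linarith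
  have hp_lower : 1 / 3 ≤ 1 / p := one_div_le_one_div_of_le hp0 hp2
  have hp_upper : 1 / p ≤ 2 / 3 := by rw [div_le_div_iff₀ hp0 (by norm_num)]; linarith
  obtain ⟨c, hc⟩ : ∃ c, c = 1 / (2 - 1 / p - 2 / 3) := ⟨_, rfl⟩
  have hc1 : 1 ≤ c := by rw [hc, le_div_iff₀ (by linarith)]; linarith
  refine ⟨∑ k : Fin 3, ∑ _j : Fin 3, 2 * lpS (pd kernelPotential k) c (closedBall 0 1),
    Finset.sum_nonneg fun k _ => Finset.sum_nonneg fun j _ => mul_nonneg two_pos.le lpS_nonneg, ?_⟩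
  intro S w ψ t hS hSm hw hψ ht hψS
  rw [mul_assoc]
  refine abs_sum_sum_le_mul fun k j => ?_
  have hcont : Continuous fun x => ‖w x‖ * √(gradSq w x) :=
    hw.continuous.norm.mul (continuous_gradSq hw).sqrt
  have hstress : lpS (pd (stress w j k) j) (3 / 2) S ≤
      2 * lpS (fun x => ‖w x‖ * √(gradSq w x)) (3 / 2) S := by
    rw [← lpS_const_mul two_pos.le (by norm_num)]
    exact lpS_mono hS (continuous_pd_stress hw j k j) (continuous_const.mul hcont) (by norm_num)
      fun x => (abs_pd_stress_le hw j k j x).trans (le_abs_self _)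
  have key := abs_pairing_le hψ (contDiff_pd_kernelPotential k).continuous
    (continuous_pd_stress hw j k j) (support_pd_kernelPotential k) hS hSm ht hψS
    (p := p) (c := c) (a := 3 / 2) (by linarith) hc1 (by norm_num)
    (by rw [hc, one_div_one_div]; ring)
  rw [show -3 * (1 / p + 1 / (3 / 2) - 1) = 2 - 3 / p - 1 by ring] at key
  refine key.trans (le_of_le_of_eq (mul_le_mul_of_nonneg_left
    (mul_le_mul_of_nonneg_left hstress (mul_nonneg lpS_nonneg lpS_nonneg)) (by positivity)) ?_)
  ring

theorem exists_abs_stressPairing_le_far {p s : ℝ} (hp : 1 < p) (hs : 2 ≤ s)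
    (hps : 1 ≤ 1 / p + 2 / s) :
    ∃ C, 0 ≤ C ∧ ∀ {S : Set R3} {w : R3 → R3} {ψ : R3 → ℝ} {t : ℝ}, Bornology.IsBounded S →
      MeasurableSet S → ContDiff ℝ ∞ w → Continuous ψ → 0 < t →
      (∀ x ∈ Function.support ψ, closedBall x t ⊆ S) →
      |stressPairing w ψ t| ≤ C * (lpS ψ p S * lpS (fun x => ‖w x‖) s S ^ 2) *
        t ^ (-1 - (3 / p + 6 / s - 3)) := by
  have hp_upper : 1 / p < 1 := (div_lt_one (by linarith)).2 hp
  have hs_upper : 2 / s ≤ 1 := (div_le_one (by linarith)).2 hs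
  obtain ⟨c, hc⟩ : ∃ c, c = 1 / (2 - 1 / p - 2 / s) := ⟨_, rfl⟩
  have hc1 : 1 ≤ c := by rw [hc, le_div_iff₀ (by linarith)]; linarith
  refine ⟨∑ k : Fin 3, ∑ j : Fin 3, lpS (pd (pd kernelPotential k) j) c (closedBall 0 1),
    Finset.sum_nonneg fun k _ => Finset.sum_nonneg fun j _ => lpS_nonneg, ?_⟩
  intro S w ψ t hS hSm hw hψ ht hψS
  rw [mul_assoc]
  refine abs_sum_sum_le_mul fun k j => ?_
  have hstress : lpS (stress w j k) (s / 2) S ≤ lpS (fun x => ‖w x‖) s S ^ 2 := by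
    rw [← lpS_sq]
    exact lpS_mono hS (contDiff_stress hw j k).continuous (hw.continuous.norm.pow 2)
      (by linarith) fun x => (abs_stress_le w j k x).trans (le_abs_self _)
  have key := abs_pairing_le hψ (contDiff_pd (j := j) (contDiff_pd_kernelPotential k)).continuous
    (contDiff_stress hw j k).continuous
    (support_pd_subset_closedBall (support_pd_kernelPotential k) j) hS hSm ht hψS
    (p := p) (c := c) (a := s / 2) hp.le hc1 (by linarith)
    (by rw [hc, one_div_one_div, one_div_div]; ring)
  rw [← mul_pairing_pd (contDiff_pd_kernelPotential k) (hasCompactSupport_pd_kernelPotential k)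
    (contDiff_stress hw j k), abs_mul, abs_of_pos ht, mul_comm t, ← le_div_iff₀ ht, one_div_div]
    at key
  refine key.trans ?_
  rw [show -1 - (3 / p + 6 / s - 3) = -3 * (1 / p + 2 / s - 1) - 1 by ring,
    Real.rpow_sub_one ht.ne']
  have := mul_le_mul_of_nonneg_left hstress (mul_nonneg (mul_nonneg lpS_nonneg lpS_nonneg)
    (by positivity : 0 ≤ t ^ (-3 * (1 / p + 2 / s - 1)) / t) :
    0 ≤ lpS ψ p S * lpS (pd (pd kernelPotential k) j) c (closedBall 0 1) *
      (t ^ (-3 * (1 / p + 2 / s - 1)) / t))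
  calc _ = _ := by ring
    _ ≤ _ := this
    _ = _ := by ring

end Stress

section Pressure

variable {u v : R3 → R3} {pr θ : R3 → ℝ}

namespace IsSmoothTCM

theorem pd_pressure (h : IsSmoothTCM u v pr θ) (k : Fin 3) :
    pd pr k = fun x => (lap (fun y => u y k) x - ∑ j, pd (stress u j k) j x)
      - ∑ j, pd (stress v j k) j x := by
  obtain ⟨eq_u, -, -, div_u⟩ := h.tcm
  ext x
  have transport : ∑ j, pd (stress u j k) j x = ∑ j, u x j * pd (fun y => u y k) j x := by
    simp only [pd_stress h.contDiff_u, Finset.sum_add_distrib, ← Finset.sum_mul, div_u x, zero_mul,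
      zero_add]
  have momentum := eq_u k x
  rw [← transport, show ∑ j, pd (fun y => v y j * v y k) j x = ∑ j, pd (stress v j k) j x from rfl]
    at momentum
  linarith

end IsSmoothTCM

theorem sum_pd_lap_eq_zero (hu : ContDiff ℝ ∞ u)
    (hdiv : ∀ x, ∑ j, pd (fun y => u y j) j x = 0) (x : R3) :
    ∑ k, pd (lap fun y => u y k) k x = 0 := by
  have hpd k j := contDiff_pd (j := j) (contDiff_coord hu k)
  have hpd2 k j i := differentiable_of_contDiff (contDiff_pd (j := i) (hpd k j))
  have swap (k j : Fin 3) : pd (pd (pd (fun y => u y k) j) j) k =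
      pd (pd (pd (fun y => u y k) k) j) j := by
    ext x
    rw [pd_comm (hpd k j) j k, funext (pd_comm (contDiff_coord hu k) j k)]
  have hlap (k : Fin 3) : pd (lap fun y => u y k) k x =
      ∑ j, pd (pd (pd (fun y => u y k) k) j) j x := by
    unfold lap
    rw [pd_fun_sum fun j _ => hpd2 k j j x]
    exact Finset.sum_congr rfl fun j _ => congrFun (swap k j) x
  have hzero (j : Fin 3) : ∑ k, pd (pd (pd (fun y => u y k) k) j) j x = 0 := by
    rw [← pd_fun_sum fun k _ => hpd2 k k j x]
    refine pd_eq_zero_of_isOpen isOpen_univ (c := 0) (fun y _ => ?_) (Set.mem_univ x)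
    rw [← pd_fun_sum fun k _ => differentiable_of_contDiff (hpd k k) y]
    exact pd_eq_zero_of_isOpen isOpen_univ (fun z _ => hdiv z) (Set.mem_univ y)
  simp only [hlap]
  rw [Finset.sum_comm]
  simp only [hzero, Finset.sum_const_zero]

theorem sum_pairing_lap_eq_zero {ψ : R3 → ℝ} (hψ : Continuous ψ) (hψc : HasCompactSupport ψ)
    (hu : ContDiff ℝ ∞ u) (hdiv : ∀ x, ∑ j, pd (fun y => u y j) j x = 0) (t : ℝ) :
    ∑ k, pairing ψ (pd kernelPotential k) (lap fun y => u y k) t = 0 := by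
  have hlap k := contDiff_lap (contDiff_coord hu k)
  have hΦc := hasCompactSupport_of_support_subset support_kernelPotential
  simp only [← mul_pairing_pd contDiff_kernelPotential hΦc (hlap _), ← Finset.mul_sum]
  rw [← pairing_sum (F := fun k => pd (lap fun y => u y k) k) hψ hψc
    contDiff_kernelPotential.continuous hΦc fun k _ => (contDiff_pd (hlap k)).continuous]
  simp [sum_pd_lap_eq_zero hu hdiv, pairing, kernelAvg]

theorem IsSmoothTCM.hasDerivAt_pairing_pressure (h : IsSmoothTCM u v pr θ) {ψ : R3 → ℝ}
    (hψ : Continuous ψ) (hψc : HasCompactSupport ψ) (t : ℝ) :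
    HasDerivAt (pairing ψ radialKernel pr) (-(stressPairing u ψ t + stressPairing v ψ t)) t := by
  refine (hasDerivAt_pairing_radialKernel hψ hψc h.contDiff_pr t).congr_deriv ?_
  have hstress {w : R3 → R3} (hw : ContDiff ℝ ∞ w) (k : Fin 3) :
      Continuous fun x => ∑ j, pd (stress w j k) j x :=
    continuous_finsetSum _ fun j _ => continuous_pd_stress hw j k j
  have hterm (k : Fin 3) : pairing ψ (pd kernelPotential k) (pd pr k) t =
      pairing ψ (pd kernelPotential k) (lap fun y => u y k) t
        - (∑ j, pairing ψ (pd kernelPotential k) (pd (stress u j k) j) t)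
        - ∑ j, pairing ψ (pd kernelPotential k) (pd (stress v j k) j) t := by
    have hΦ := (contDiff_pd_kernelPotential k).continuous
    have hΦc := hasCompactSupport_pd_kernelPotential k
    have hlap := (contDiff_lap (contDiff_coord h.contDiff_u k)).continuous
    rw [h.pd_pressure, pairing_sub hψ hψc hΦ hΦc (hlap.fun_sub (hstress h.contDiff_u k))
      (hstress h.contDiff_v k), pairing_sub hψ hψc hΦ hΦc hlap (hstress h.contDiff_u k),
      pairing_sum hψ hψc hΦ hΦc fun j _ => continuous_pd_stress h.contDiff_u j k j,
      pairing_sum hψ hψc hΦ hΦc fun j _ => continuous_pd_stress h.contDiff_v j k j]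
  simp only [hterm, Finset.sum_sub_distrib, stressPairing,
    sum_pairing_lap_eq_zero hψ hψc h.contDiff_u h.tcm.2.2.2]
  ring

end Pressure

/-! ### Oscillation of kernel averages -/

section KernelAvg

variable {κ f g h : R3 → ℝ}

theorem integrable_mul_comp_sub_smul (hκ : Continuous κ) (hκc : HasCompactSupport κ)
    (hf : Continuous f) (t : ℝ) (x : R3) : Integrable fun z => κ z * f (x - t • z) :=
  integrable_mul_of_hasCompactSupport hκ hκc (hf.comp (by fun_prop))

theorem kernelAvg_sum (hκ : Continuous κ) (hκc : HasCompactSupport κ) {ι : Type*} {s : Finset ι}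
    {F : ι → R3 → ℝ} (hF : ∀ i ∈ s, Continuous (F i)) (t : ℝ) (x : R3) :
    kernelAvg κ (fun y => ∑ i ∈ s, F i y) t x = ∑ i ∈ s, kernelAvg κ (F i) t x :=
  integral_mul_sum hκ hκc fun i hi => (hF i hi).comp (by fun_prop)

theorem kernelAvg_sub (hκ : Continuous κ) (hκc : HasCompactSupport κ) (hf : Continuous f)
    (hg : Continuous g) (t : ℝ) (x : R3) :
    kernelAvg κ (fun y => f y - g y) t x = kernelAvg κ f t x - kernelAvg κ g t x := by
  simp only [kernelAvg, mul_sub]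
  exact integral_sub (integrable_mul_comp_sub_smul hκ hκc hf t x)
    (integrable_mul_comp_sub_smul hκ hκc hg t x)

theorem sq_mul_kernelAvg_lap (hκ : ContDiff ℝ ∞ κ) (hκc : HasCompactSupport κ)
    (hf : ContDiff ℝ ∞ f) (t : ℝ) (x : R3) :
    t ^ 2 * kernelAvg κ (lap f) t x = kernelAvg (lap κ) f t x := by
  have hterm (j : Fin 3) : t ^ 2 * kernelAvg κ (pd (pd f j) j) t x =
      kernelAvg (pd (pd κ j) j) f t x := by
    rw [sq, mul_assoc, mul_kernelAvg_pd hκ hκc (contDiff_pd hf),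
      mul_kernelAvg_pd (contDiff_pd hκ) (hasCompactSupport_pd hκc) hf]
  unfold lap
  rw [kernelAvg_sum hκ.continuous hκc fun j _ => (contDiff_pd (contDiff_pd hf)).continuous,
    Finset.mul_sum, Finset.sum_congr rfl fun j _ => hterm j]
  simp only [kernelAvg, Finset.sum_mul]
  exact (integral_finsetSum _ fun j _ => integrable_mul_comp_sub_smul
    (contDiff_pd (contDiff_pd hκ)).continuous
    (hasCompactSupport_pd (hasCompactSupport_pd hκc)) hf.continuous t x).symm

theorem abs_kernelAvg_le {C : ℝ} (hC : ∀ z, |κ z| ≤ C)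
    (hκ1 : Function.support κ ⊆ closedBall 0 1) (hh : Continuous h) {S : Set R3}
    (hS : Bornology.IsBounded S) (hSm : MeasurableSet S) {t : ℝ} (ht : 0 < t) {x : R3}
    (hx : closedBall x t ⊆ S) : |kernelAvg κ h t x| ≤ C * (t⁻¹ ^ 3 * lpS h 1 S) := by
  have hC0 : 0 ≤ C := (abs_nonneg _).trans (hC 0)
  have hint : Integrable (S.indicator fun y => |h y|) :=
    (integrableOn_of_isBounded hS hh.abs).integrable_indicator hSm
  have hbound (z : R3) :
      ‖κ z * h (x - t • z)‖ ≤ C * S.indicator (fun y => |h y|) (x - t • z) := by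
    have hind : 0 ≤ S.indicator (fun y => |h y|) (x - t • z) :=
      Set.indicator_nonneg (fun _ _ => abs_nonneg _) _
    by_cases hz : κ z = 0
    · simpa [hz] using mul_nonneg hC0 hind
    · have hz1 : ‖z‖ ≤ 1 := mem_closedBall_zero_iff.1 (hκ1 hz)
      have hzS : x - t • z ∈ S := hx <| by
        rw [mem_closedBall, dist_eq_norm, sub_sub_cancel_left, norm_neg, norm_smul,
          Real.norm_of_nonneg ht.le]
        exact mul_le_of_le_one_right ht.le hz1
      rw [Set.indicator_of_mem hzS, norm_mul]
      exact mul_le_mul_of_nonneg_right (hC z) (abs_nonneg _)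
  have hscale : ∫ z, S.indicator (fun y => |h y|) (x - t • z) = t⁻¹ ^ 3 * lpS h 1 S := by
    rw [Measure.integral_comp_smul volume (fun z => S.indicator (fun y => |h y|) (x - z)) t,
      integral_sub_left_eq_self (fun z => S.indicator (fun y => |h y|) z) volume x,
      integral_indicator hSm, lpS_one]
    simp [abs_of_pos ht]
  rw [← hscale, ← integral_const_mul]
  exact norm_integral_le_of_norm_le (((hint.comp_sub_left x).comp_smul ht.ne').const_mul C)
    (ae_of_all _ hbound)

theorem exists_abs_kernelAvg_le (hκ : Continuous κ) (hκ1 : Function.support κ ⊆ closedBall 0 1) :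
    ∃ C, 0 ≤ C ∧ ∀ {h : R3 → ℝ} {S : Set R3} {t : ℝ} {x : R3}, Continuous h →
      Bornology.IsBounded S → MeasurableSet S → 0 < t → closedBall x t ⊆ S →
      |kernelAvg κ h t x| ≤ C * (t⁻¹ ^ 3 * lpS h 1 S) := by
  obtain ⟨C, hC⟩ := (hasCompactSupport_of_support_subset hκ1).exists_bound_of_continuous hκ
  exact ⟨C, (norm_nonneg _).trans (hC 0), fun hh hS hSm ht hx =>
    abs_kernelAvg_le hC hκ1 hh hS hSm ht hx⟩

theorem hasDerivAt_kernelAvg_comp_sub_smul (hκ : Continuous κ) (hκc : HasCompactSupport κ)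
    (hf : ContDiff ℝ ∞ f) (t : ℝ) (x w : R3) (s : ℝ) :
    HasDerivAt (fun s : ℝ => kernelAvg κ f t (x - s • w))
      (-∑ k, w k * kernelAvg κ (pd f k) t (x - s • w)) s := by
  have hpf (k : Fin 3) : Continuous (pd f k) := (contDiff_pd hf).continuous
  have hfc := hf.continuous
  have hderiv := hasDerivAt_integral_mul_of_hasCompactSupport (volume : Measure R3) hκ hκc
    (f := fun z s => f ((x - t • z) - s • w))
    (f' := fun z s => -∑ k, w k * pd f k ((x - t • z) - s • w)) (by fun_prop) (by fun_prop)
    (fun z s => hasDerivAt_comp_sub_smul (differentiable_of_contDiff hf) _ w s) s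
  simp only [sub_right_comm x _ (_ • w)] at hderiv
  refine hderiv.congr_deriv ?_
  simp only [kernelAvg, ← integral_const_mul]
  rw [← integral_finsetSum _ fun k _ =>
    (integrable_mul_comp_sub_smul hκ hκc (hpf k) t _).const_mul _, ← integral_neg]
  simp only [mul_neg, Finset.mul_sum, mul_left_comm]

theorem abs_kernelAvg_sub_kernelAvg_le (hκ : Continuous κ) (hκc : HasCompactSupport κ)
    (hf : ContDiff ℝ ∞ f) {t G : ℝ} {x y : R3}
    (hG : ∀ z ∈ segment ℝ x y, ∀ k, |kernelAvg κ (pd f k) t z| ≤ G) :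
    |kernelAvg κ f t y - kernelAvg κ f t x| ≤ 3 * ‖x - y‖ * G := by
  have hderiv (s : ℝ) := hasDerivAt_kernelAvg_comp_sub_smul hκ hκc hf t x (x - y) s
  have hbound : ∀ s ∈ Set.Ico (0 : ℝ) 1,
      ‖-∑ k, (x - y) k * kernelAvg κ (pd f k) t (x - s • (x - y))‖ ≤ 3 * ‖x - y‖ * G := by
    intro s hs
    have hmem : x - s • (x - y) ∈ segment ℝ x y :=
      ⟨1 - s, s, by linarith [hs.2], hs.1, by ring, by module⟩
    have hterm (k : Fin 3) : |(x - y) k * kernelAvg κ (pd f k) t (x - s • (x - y))| ≤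
        ‖x - y‖ * G := by
      rw [abs_mul]
      exact mul_le_mul (abs_coord_le _ k) (hG _ hmem k) (abs_nonneg _) (norm_nonneg _)
    rw [norm_neg]
    refine (Finset.abs_sum_le_sum_abs _ _).trans ((Finset.sum_le_sum fun k _ => hterm k).trans ?_)
    simp [mul_assoc]
  simpa using norm_image_sub_le_of_norm_deriv_le_segment_01'
    (fun s _ => (hderiv s).hasDerivWithinAt) hbound

theorem integrable_mul_kernelAvg {ψ : R3 → ℝ} (hψ : Continuous ψ) (hψc : HasCompactSupport ψ)
    (hκ : Continuous κ) (hκc : HasCompactSupport κ) (hf : Continuous f) (t : ℝ) :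
    Integrable fun x => ψ x * kernelAvg κ f t x := by
  have hprod := integrable_pairing hψ hψc hκ hκc hf t
  rw [Measure.volume_eq_prod] at hprod
  simpa only [kernelAvg, ← integral_const_mul, mul_assoc] using hprod.integral_prod_left

theorem abs_pairing_le_of_integral_eq_zero {ψ : R3 → ℝ} (hψ : Continuous ψ)
    (hψc : HasCompactSupport ψ) (hψ0 : ∫ x, ψ x = 0) (hκ : Continuous κ)
    (hκc : HasCompactSupport κ) (hf : Continuous f) {S : Set R3}
    (hψS : Function.support ψ ⊆ S) {t a B : ℝ}
    (hB : ∀ x ∈ Function.support ψ, |kernelAvg κ f t x - a| ≤ B) :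
    |pairing ψ κ f t| ≤ B * lpS ψ 1 S := by
  have hshift : pairing ψ κ f t = ∫ x, ψ x * (kernelAvg κ f t x - a) := by
    simp only [mul_sub]
    rw [integral_sub (integrable_mul_kernelAvg hψ hψc hκ hκc hf t)
      ((hψ.integrable_of_hasCompactSupport hψc).mul_const a), integral_mul_const, hψ0, zero_mul,
      sub_zero, pairing]
  have hbound (x : R3) : ‖ψ x * (kernelAvg κ f t x - a)‖ ≤ B * |ψ x| := by
    by_cases hx : ψ x = 0
    · simp [hx]
    · rw [norm_mul, mul_comm]
      exact mul_le_mul_of_nonneg_right (hB x hx) (abs_nonneg _)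
  rw [hshift, lpS_one, setIntegral_eq_integral_of_forall_compl_eq_zero fun x hx => by
    rw [abs_eq_zero]; exact Function.notMem_support.1 fun h => hx (hψS h), ← integral_const_mul]
  exact norm_integral_le_of_norm_le ((hψ.integrable_of_hasCompactSupport hψc).abs.const_mul B)
    (ae_of_all _ hbound)

end KernelAvg

section Annulus

variable {E : Type*} [NormedAddCommGroup E] [InnerProductSpace ℝ E]

theorem sq_le_two_mul_norm_sq_of_mem_segment {x y z : E} {m : ℝ} (hm : 0 ≤ m) (hx : m ≤ ‖x‖)
    (hy : m ≤ ‖y‖) (hxy : 0 ≤ inner ℝ x y) (hz : z ∈ segment ℝ x y) : m ^ 2 ≤ 2 * ‖z‖ ^ 2 := by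
  obtain ⟨a, b, ha, hb, hab, rfl⟩ := hz
  rw [norm_add_sq_real, norm_smul, norm_smul, inner_smul_left, inner_smul_right,
    Real.norm_of_nonneg ha, Real.norm_of_nonneg hb]
  have hax : (a * m) ^ 2 ≤ (a * ‖x‖) ^ 2 := by gcongr
  have hby : (b * m) ^ 2 ≤ (b * ‖y‖) ^ 2 := by gcongr
  have hcross : 0 ≤ a * (b * inner ℝ x y) := by positivity
  simp only [conj_trivial]
  obtain rfl : b = 1 - a := by linarith
  nlinarith [mul_nonneg (sq_nonneg m) (sq_nonneg (2 * a - 1))]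

end Annulus

-- Any two points of the annulus are joined through `-e`, `f`, `e` with nonobtuse angles.
theorem exists_abs_sub_le_of_inner_nonneg {F : R3 → ℝ} {m σ δ : ℝ} (hm : 0 ≤ m) (hmσ : m ≤ σ)
    (hF : ∀ x ∈ closedBall 0 σ \ ball 0 m, ∀ y ∈ closedBall 0 σ \ ball 0 m,
      0 ≤ inner ℝ x y → |F y - F x| ≤ δ) :
    ∃ e, ∀ x ∈ closedBall 0 σ \ ball 0 m, |F x - F e| ≤ 3 * δ := by
  let e (i : Fin 3) : R3 := EuclideanSpace.single i m
  have he (i : Fin 3) : e i ∈ closedBall 0 σ \ ball 0 m := by simp [e, abs_of_nonneg hm, hmσ]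
  have he_neg (i : Fin 3) : -e i ∈ closedBall 0 σ \ ball 0 m := by simp [e, abs_of_nonneg hm, hmσ]
  have horth : inner ℝ (e 0) (e 1) = 0 := by simp [e, EuclideanSpace.inner_single_left]
  have hδ : 0 ≤ δ := (abs_nonneg _).trans (hF _ (he 0) _ (he 0) real_inner_self_nonneg)
  refine ⟨e 0, fun x hx => ?_⟩
  rcases le_total 0 (inner ℝ x (e 0)) with hi | hi
  · rw [abs_sub_comm]
    linarith [hF x hx _ (he 0) hi]
  · have h1 := hF x hx _ (he_neg 0) (by rw [inner_neg_right]; linarith)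
    have h2 := hF _ (he_neg 0) _ (he 1) (by rw [inner_neg_left, horth, neg_zero])
    have h3 := hF _ (he 1) _ (he 0) (by rw [real_inner_comm, horth])
    rw [abs_le] at *
    constructor <;> linarith

/-! ### The pressure estimate -/

/-- The half-open spherical shell `R ≤ ‖x‖ < τ`. -/
def shell (R τ : ℝ) : Set R3 := ball 0 τ \ ball 0 R

theorem isBounded_shell (R τ : ℝ) : Bornology.IsBounded (shell R τ) :=
  isBounded_ball.subset Set.sdiff_subset

theorem measurableSet_shell (R τ : ℝ) : MeasurableSet (shell R τ) :=
  measurableSet_ball.diff measurableSet_ball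

theorem closedBall_subset_shell {R τ t : ℝ} {x : R3} (hR : R + t ≤ ‖x‖) (hτ : ‖x‖ + t < τ) :
    closedBall x t ⊆ shell R τ := by
  intro y hy
  have hxy : ‖x - y‖ ≤ t := by rw [← dist_eq_norm, dist_comm]; exact hy
  have hlow := norm_sub_norm_le x y
  have hup := norm_sub_norm_le y x
  rw [norm_sub_rev] at hup
  simp only [shell, Set.mem_sdiff, mem_ball_zero_iff, not_lt]
  constructor <;> linarith

theorem lpS_stress_one_le {w : R3 → R3} (hw : ContDiff ℝ ∞ w) {S : Set R3}
    (hS : Bornology.IsBounded S) (j k : Fin 3) :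
    lpS (stress w j k) 1 S ≤ lpS (fun x => ‖w x‖) 2 S ^ 2 := by
  rw [← lpS_sq 2, div_self two_ne_zero]
  exact lpS_mono hS (contDiff_stress hw j k).continuous (hw.continuous.norm.pow 2) one_pos
    fun x => (abs_stress_le w j k x).trans (le_abs_self _)

theorem lpS_coord_le {w : R3 → R3} (hw : Continuous w) {S : Set R3} (hS : Bornology.IsBounded S)
    {p : ℝ} (hp : 0 < p) (k : Fin 3) : lpS (fun x => w x k) p S ≤ lpS (fun x => ‖w x‖) p S :=
  lpS_mono hS (by fun_prop) hw.norm hp fun x => (abs_coord_le _ k).trans (le_abs_self _)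

theorem exists_abs_kernelAvg_pd_stress_le :
    ∃ C, 0 ≤ C ∧ ∀ {S : Set R3} {w : R3 → R3} {t : ℝ} {x : R3}, Bornology.IsBounded S →
      MeasurableSet S → ContDiff ℝ ∞ w → 0 < t → closedBall x t ⊆ S → ∀ k,
      |kernelAvg radialKernel (fun y => ∑ j, pd (stress w j k) j y) t x| ≤
        C * (t⁻¹ ^ 4 * lpS (fun y => ‖w y‖) 2 S ^ 2) := by
  have hκc := hasCompactSupport_radialKernel
  choose C hC0 hC using fun j : Fin 3 => exists_abs_kernelAvg_le
    (contDiff_pd (j := j) contDiff_radialKernel).continuous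
    (support_pd_subset_closedBall support_radialKernel j)
  refine ⟨∑ j, C j, Finset.sum_nonneg fun j _ => hC0 j, fun {S w t x} hS hSm hw ht hx k => ?_⟩
  rw [kernelAvg_sum contDiff_radialKernel.continuous hκc fun j _ => continuous_pd_stress hw j k j,
    Finset.sum_mul]
  refine (Finset.abs_sum_le_sum_abs _ _).trans (Finset.sum_le_sum fun j _ => ?_)
  have key := hC j (contDiff_stress hw j k).continuous hS hSm ht hx
  rw [← mul_kernelAvg_pd contDiff_radialKernel hκc (contDiff_stress hw j k), abs_mul,
    abs_of_pos ht, mul_comm, ← le_div_iff₀ ht] at key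
  calc _ ≤ C j * (t⁻¹ ^ 3 * lpS (stress w j k) 1 S) / t := key
    _ = C j * (t⁻¹ ^ 4 * lpS (stress w j k) 1 S) := by rw [div_eq_mul_inv]; ring
    _ ≤ _ := by gcongr; exacts [hC0 j, lpS_stress_one_le hw hS j k]

theorem exists_abs_kernelAvg_lap_le :
    ∃ C, 0 ≤ C ∧ ∀ {S : Set R3} {w : R3 → R3} {t : ℝ} {x : R3}, Bornology.IsBounded S →
      MeasurableSet S → ContDiff ℝ ∞ w → 0 < t → closedBall x t ⊆ S → ∀ k,
      |kernelAvg radialKernel (lap fun y => w y k) t x| ≤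
        C * (t⁻¹ ^ 5 * lpS (fun y => ‖w y‖) 1 S) := by
  have hsupp : Function.support (lap radialKernel) ⊆ closedBall 0 1 := by
    intro z hz
    obtain ⟨j, -, hj⟩ := Finset.exists_ne_zero_of_sum_ne_zero hz
    exact support_pd_subset_closedBall (support_pd_subset_closedBall support_radialKernel j) j hj
  obtain ⟨C, hC0, hC⟩ := exists_abs_kernelAvg_le
    (contDiff_lap contDiff_radialKernel).continuous hsupp
  refine ⟨C, hC0, fun {S w t x} hS hSm hw ht hx k => ?_⟩
  have hwk := contDiff_coord hw k
  have key := hC hwk.continuous hS hSm ht hx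
  rw [← sq_mul_kernelAvg_lap contDiff_radialKernel hasCompactSupport_radialKernel hwk, abs_mul,
    abs_of_pos (sq_pos_of_pos ht), mul_comm, ← le_div_iff₀ (by positivity)] at key
  calc _ ≤ C * (t⁻¹ ^ 3 * lpS (fun y => w y k) 1 S) / t ^ 2 := key
    _ = C * (t⁻¹ ^ 5 * lpS (fun y => w y k) 1 S) := by rw [div_eq_mul_inv, ← inv_pow]; ring
    _ ≤ _ := by gcongr; exact lpS_coord_le hw.continuous hS one_pos k

/-- The bound, up to a constant, for the gradient of the smoothed pressure at scale `t`. -/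
def pressureGradBound (u v : R3 → R3) (S : Set R3) (t : ℝ) : ℝ :=
  t⁻¹ ^ 5 * lpS (fun x => ‖u x‖) 1 S +
    t⁻¹ ^ 4 * (lpS (fun x => ‖u x‖) 2 S ^ 2 + lpS (fun x => ‖v x‖) 2 S ^ 2)

/-- The bound, up to a constant, for the contribution of `w ⊗ w` to the pressure pairing, with the
scales split at `l`. -/
def stressBound (w : R3 → R3) (p s : ℝ) (S : Set R3) (l : ℝ) : ℝ :=
  lpS (fun x => ‖w x‖ * √(gradSq w x)) (3 / 2) S * l ^ (2 - 3 / p) +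
    lpS (fun x => ‖w x‖) s S ^ 2 * l ^ (-(3 / p + 6 / s - 3))

theorem pressureGradBound_nonneg {u v : R3 → R3} {S : Set R3} {t : ℝ} (ht : 0 < t) :
    0 ≤ pressureGradBound u v S t := by
  have := lpS_nonneg (f := fun x => ‖u x‖) (p := 1) (S := S)
  unfold pressureGradBound
  positivity

theorem stressBound_nonneg {w : R3 → R3} {p s : ℝ} {S : Set R3} {l : ℝ} (hl : 0 < l) :
    0 ≤ stressBound w p s S l := by
  have := lpS_nonneg (f := fun x => ‖w x‖ * √(gradSq w x)) (p := 3 / 2) (S := S)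
  unfold stressBound
  positivity

theorem exists_abs_kernelAvg_pd_pressure_le :
    ∃ C, 0 ≤ C ∧ ∀ {S : Set R3} {u v : R3 → R3} {pr θ : R3 → ℝ} {t : ℝ} {x : R3},
      IsSmoothTCM u v pr θ → Bornology.IsBounded S → MeasurableSet S → 0 < t →
      closedBall x t ⊆ S → ∀ k,
      |kernelAvg radialKernel (pd pr k) t x| ≤ C * pressureGradBound u v S t := by
  obtain ⟨C₁, hC₁, bound_lap⟩ := exists_abs_kernelAvg_lap_le
  obtain ⟨C₂, hC₂, bound_stress⟩ := exists_abs_kernelAvg_pd_stress_le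
  refine ⟨C₁ + C₂, by positivity, fun {S u v pr θ t x} h hS hSm ht hx k => ?_⟩
  have hκ := contDiff_radialKernel.continuous
  have hκc := hasCompactSupport_radialKernel
  have hlap := (contDiff_lap (contDiff_coord h.contDiff_u k)).continuous
  have hstress {w : R3 → R3} (hw : ContDiff ℝ ∞ w) :
      Continuous fun x => ∑ j, pd (stress w j k) j x :=
    continuous_finsetSum _ fun j _ => continuous_pd_stress hw j k j
  rw [h.pd_pressure, kernelAvg_sub hκ hκc (hlap.fun_sub (hstress h.contDiff_u))
    (hstress h.contDiff_v), kernelAvg_sub hκ hκc hlap (hstress h.contDiff_u)]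
  refine (abs_sub _ _).trans ((add_le_add_left (abs_sub _ _) _).trans ?_)
  have hu := bound_lap hS hSm h.contDiff_u ht hx k
  have huu := bound_stress hS hSm h.contDiff_u ht hx k
  have hvv := bound_stress hS hSm h.contDiff_v ht hx k
  have hlp := lpS_nonneg (f := fun x => ‖u x‖) (p := 1) (S := S)
  have cross₁ : 0 ≤ C₂ * (t⁻¹ ^ 5 * lpS (fun x => ‖u x‖) 1 S) := by positivity
  have cross₂ : 0 ≤ C₁ * (t⁻¹ ^ 4 *
    (lpS (fun x => ‖u x‖) 2 S ^ 2 + lpS (fun x => ‖v x‖) 2 S ^ 2)) := by positivity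
  unfold pressureGradBound
  linarith

theorem exists_abs_pairing_pressure_top_le :
    ∃ C, 0 ≤ C ∧ ∀ {u v : R3 → R3} {pr θ ψ : R3 → ℝ} {R σ τ t : ℝ}, IsSmoothTCM u v pr θ →
      0 < t → t ≤ R / 20 → 3 / 2 * R ≤ σ → σ + t < τ → Continuous ψ →
      Function.support ψ ⊆ closedBall 0 σ \ ball 0 (3 / 2 * R) → ∫ x, ψ x = 0 →
      |pairing ψ radialKernel pr t| ≤
        C * (σ * pressureGradBound u v (shell R τ) t * lpS ψ 1 (shell R τ)) := by
  obtain ⟨C, hC0, hC⟩ := exists_abs_kernelAvg_pd_pressure_le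
  refine ⟨18 * C, by positivity, fun {u v pr θ ψ R σ τ t} h ht htR hσ hστ hψ hψs hψ0 => ?_⟩
  have hR : 0 < R := by linarith
  set G := pressureGradBound u v (shell R τ) t
  have hκ := contDiff_radialKernel.continuous
  have hκc := hasCompactSupport_radialKernel
  have hψc : HasCompactSupport ψ := HasCompactSupport.of_support_subset_isCompact
    (isCompact_closedBall 0 σ) (hψs.trans Set.sdiff_subset)
  have close : ∀ x ∈ closedBall (0 : R3) σ \ ball 0 (3 / 2 * R),
      ∀ y ∈ closedBall (0 : R3) σ \ ball 0 (3 / 2 * R), 0 ≤ inner ℝ x y →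
      |kernelAvg radialKernel pr t y - kernelAvg radialKernel pr t x| ≤
        3 * (2 * σ) * (C * G) := by
    intro x ⟨hxσ, hxR⟩ y ⟨hyσ, hyR⟩ hxy
    have hseg := (convex_closedBall (0 : R3) σ).segment_subset hxσ hyσ
    simp only [mem_ball_zero_iff, not_lt, mem_closedBall_zero_iff] at hxσ hyσ hxR hyR
    have hgrad : ∀ z ∈ segment ℝ x y, ∀ k, |kernelAvg radialKernel (pd pr k) t z| ≤ C * G := by
      intro z hz k
      have hzR := sq_le_two_mul_norm_sq_of_mem_segment (by positivity) hxR hyR hxy hz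
      have hzσ := mem_closedBall_zero_iff.1 (hseg hz)
      refine hC h (isBounded_shell R τ) (measurableSet_shell R τ) ht
        (closedBall_subset_shell ?_ (by linarith)) k
      refine abs_le_of_sq_le_sq' ?_ (norm_nonneg z) |>.2
      nlinarith
    refine (abs_kernelAvg_sub_kernelAvg_le hκ hκc h.contDiff_pr hgrad).trans ?_
    have hCG : 0 ≤ C * G := mul_nonneg hC0 (pressureGradBound_nonneg ht)
    gcongr
    linarith [norm_sub_le x y]
  obtain ⟨e, he⟩ := exists_abs_sub_le_of_inner_nonneg (by positivity) hσ close
  refine (abs_pairing_le_of_integral_eq_zero hψ hψc hψ0 hκ hκc h.contDiff_pr.continuous ?_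
    fun x hx => he x (hψs hx)).trans_eq (by ring)
  intro x hx
  have := hψs hx
  simp only [shell, Set.mem_sdiff, mem_ball_zero_iff, mem_closedBall_zero_iff, not_lt] at this ⊢
  constructor <;> linarith

theorem exists_abs_integral_stressPairing_le {p s : ℝ} (hp1 : 3 / 2 < p) (hp2 : p < 3)
    (hs : 2 ≤ s) (hps : 1 < 1 / p + 2 / s) :
    ∃ C, 0 ≤ C ∧ ∀ {S : Set R3} {w : R3 → R3} {ψ : R3 → ℝ} {T l : ℝ}, Bornology.IsBounded S →
      MeasurableSet S → ContDiff ℝ ∞ w → Continuous ψ → HasCompactSupport ψ → 0 ≤ T → 0 < l →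
      (∀ x ∈ Function.support ψ, closedBall x T ⊆ S) →
      |∫ t in (0 : ℝ)..T, stressPairing w ψ t| ≤ C * (lpS ψ p S * stressBound w p s S l) := by
  obtain ⟨C₁, hC₁, near⟩ := exists_abs_stressPairing_le_near hp1.le hp2.le
  obtain ⟨C₂, hC₂, far⟩ := exists_abs_stressPairing_le_far (by linarith) hs hps.le
  have ha : 0 < 2 - 3 / p := by
    rw [sub_pos, div_lt_iff₀ (by linarith)]
    linarith
  have hb : 0 < 3 / p + 6 / s - 3 := by linarith [show 3 / p + 6 / s = 3 * (1 / p + 2 / s) by ring]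
  refine ⟨C₁ / (2 - 3 / p) + C₂ / (3 / p + 6 / s - 3), by positivity,
    fun {S w ψ T l} hS hSm hw hψ hψc hT hl hψS => ?_⟩
  have hψt {t : ℝ} (ht : t ∈ Set.Ioc 0 T) : ∀ x ∈ Function.support ψ, closedBall x t ⊆ S :=
    fun x hx => (closedBall_subset_closedBall ht.2).trans (hψS x hx)
  have hN₀ := lpS_nonneg (f := ψ) (p := p) (S := S)
  have hN₁ := lpS_nonneg (f := fun x => ‖w x‖ * √(gradSq w x)) (p := 3 / 2) (S := S)
  refine (abs_integral_le_rpow_add_rpow (continuous_stressPairing hψ hψc hw) ha hb hl hT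
    (by positivity) (by positivity) (fun t ht => near hS hSm hw hψ ht.1 (hψt ht))
    (fun t ht => far hS hSm hw hψ ht.1 (hψt ht))).trans ?_
  have cross₁ : 0 ≤ C₁ / (2 - 3 / p) * (lpS ψ p S *
    (lpS (fun x => ‖w x‖) s S ^ 2 * l ^ (-(3 / p + 6 / s - 3)))) := by positivity
  have cross₂ : 0 ≤ C₂ / (3 / p + 6 / s - 3) * (lpS ψ p S *
    (lpS (fun x => ‖w x‖ * √(gradSq w x)) (3 / 2) S * l ^ (2 - 3 / p))) := by positivity
  unfold stressBound
  rw [div_mul_eq_mul_div] at *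
  linear_combination cross₁ + cross₂

theorem pairing_radialKernel_zero (ψ f : R3 → ℝ) :
    pairing ψ radialKernel f 0 = (∫ z, radialKernel z) * ∫ x, ψ x * f x := by
  simp only [pairing, kernelAvg, zero_smul, sub_zero, integral_mul_const, ← integral_const_mul,
    mul_left_comm]

theorem IsSmoothTCM.pairing_pressure_zero_eq {u v : R3 → R3} {pr θ ψ : R3 → ℝ}
    (h : IsSmoothTCM u v pr θ) (hψ : Continuous ψ) (hψc : HasCompactSupport ψ) (T : ℝ) :
    pairing ψ radialKernel pr 0 = pairing ψ radialKernel pr T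
      + (∫ t in (0 : ℝ)..T, stressPairing u ψ t) + ∫ t in (0 : ℝ)..T, stressPairing v ψ t := by
  have hu := continuous_stressPairing hψ hψc h.contDiff_u
  have hv := continuous_stressPairing hψ hψc h.contDiff_v
  have ftc := intervalIntegral.integral_eq_sub_of_hasDerivAt (a := 0) (b := T)
    (fun t _ => h.hasDerivAt_pairing_pressure hψ hψc t)
    ((hu.add hv).neg.intervalIntegrable _ _)
  rw [intervalIntegral.integral_neg, intervalIntegral.integral_add (hu.intervalIntegrable _ _)
    (hv.intervalIntegrable _ _)] at ftc
  linarith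

theorem exists_abs_integral_mul_pressure_le {p s : ℝ} (hp1 : 3 / 2 < p) (hp2 : p < 3)
    (hs : 2 ≤ s) (hps : 1 < 1 / p + 2 / s) :
    ∃ C, 0 ≤ C ∧ ∀ {u v : R3 → R3} {pr θ ψ : R3 → ℝ} {R σ τ T l₁ l₂ : ℝ},
      IsSmoothTCM u v pr θ → 0 < T → T ≤ R / 20 → 3 / 2 * R ≤ σ → σ + T < τ → Continuous ψ →
      Function.support ψ ⊆ closedBall 0 σ \ ball 0 (3 / 2 * R) → ∫ x, ψ x = 0 →
      0 < l₁ → 0 < l₂ →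
      |∫ x, ψ x * pr x| ≤
        C * (σ * pressureGradBound u v (shell R τ) T * lpS ψ 1 (shell R τ) +
          lpS ψ p (shell R τ) *
            (stressBound u p s (shell R τ) l₁ + stressBound v p s (shell R τ) l₂)) := by
  obtain ⟨C₁, hC₁, top⟩ := exists_abs_pairing_pressure_top_le
  obtain ⟨C₂, hC₂, stress⟩ := exists_abs_integral_stressPairing_le hp1 hp2 hs hps
  have hmass := integral_radialKernel_pos
  refine ⟨(C₁ + C₂) / ∫ z, radialKernel z, by positivity,
    fun {u v pr θ ψ R σ τ T l₁ l₂} h hT hTR hσ hστ hψ hψs hψ0 hl₁ hl₂ => ?_⟩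
  set S := shell R τ
  have hψc : HasCompactSupport ψ := HasCompactSupport.of_support_subset_isCompact
    (isCompact_closedBall 0 σ) (hψs.trans Set.sdiff_subset)
  have hψS : ∀ x ∈ Function.support ψ, closedBall x T ⊆ S := by
    intro x hx
    have := hψs hx
    simp only [Set.mem_sdiff, mem_ball_zero_iff, mem_closedBall_zero_iff, not_lt] at this
    exact closedBall_subset_shell (by linarith) (by linarith)
  have bound_top := top h hT hTR hσ hστ hψ hψs hψ0
  have bound_u := stress (isBounded_shell R τ) (measurableSet_shell R τ) h.contDiff_u hψ hψc hT.le
    hl₁ hψS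
  have bound_v := stress (isBounded_shell R τ) (measurableSet_shell R τ) h.contDiff_v hψ hψc hT.le
    hl₂ hψS
  rw [div_mul_eq_mul_div, le_div_iff₀ hmass, mul_comm |_|, ← abs_of_pos hmass, ← abs_mul,
    ← pairing_radialKernel_zero, h.pairing_pressure_zero_eq hψ hψc T]
  refine (abs_add_three _ _ _).trans ((add_le_add_three bound_top bound_u bound_v).trans ?_)
  have hσ0 : 0 ≤ σ := by linarith
  have hG := pressureGradBound_nonneg (u := u) (v := v) (S := S) hT
  have hN₁ := lpS_nonneg (f := ψ) (p := 1) (S := S)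
  have hNp := lpS_nonneg (f := ψ) (p := p) (S := S)
  have hBu := stressBound_nonneg (w := u) (p := p) (s := s) (S := S) hl₁
  have hBv := stressBound_nonneg (w := v) (p := p) (s := s) (S := S) hl₂
  have cross₁ : 0 ≤ C₂ * (σ * pressureGradBound u v S T * lpS ψ 1 S) := by positivity
  have cross₂ : 0 ≤ C₁ * (lpS ψ p S * (stressBound u p s S l₁ + stressBound v p s S l₂)) := by
    positivity
  linear_combination cross₁ + cross₂

/-! ### Cutoff functions -/

/-- `η` is a smooth cutoff equal to `1` on the ball of radius `ρ` and to `0` outside the ball of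
radius `σ`, with derivatives up to order two bounded, relative to the width `σ - ρ`, by `c`. -/
structure IsCutoff (η : R3 → ℝ) (ρ σ c : ℝ) : Prop where
  lt : ρ < σ
  contDiff : ContDiff ℝ ∞ η
  nonneg : ∀ x, 0 ≤ η x
  le_one : ∀ x, η x ≤ 1
  eq_one : ∀ x, ‖x‖ ≤ ρ → η x = 1
  eq_zero : ∀ x, σ ≤ ‖x‖ → η x = 0
  abs_pd_le : ∀ j x, |pd η j x| ≤ c / (σ - ρ)
  abs_pd_pd_le : ∀ i j x, |pd (pd η i) j x| ≤ c / (σ - ρ) ^ 2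

theorem exists_abs_deriv_smoothTransition_le : ∃ c, 0 ≤ c ∧ ∀ s,
    |deriv Real.smoothTransition s| ≤ c ∧ |deriv (deriv Real.smoothTransition) s| ≤ c := by
  have hsmooth : ContDiff ℝ ∞ Real.smoothTransition := Real.smoothTransition.contDiff
  have hsupp : HasCompactSupport (deriv Real.smoothTransition) := by
    refine HasCompactSupport.intro (isCompact_Icc (a := 0) (b := 1)) fun s hs => ?_
    rcases not_and_or.1 hs with h | h
    · refine (EventuallyEq.deriv_eq (f := fun _ => 0) ?_).trans (deriv_const s 0)
      filter_upwards [gt_mem_nhds (not_le.1 h)] with t ht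
      exact Real.smoothTransition.zero_of_nonpos ht.le
    · refine (EventuallyEq.deriv_eq (f := fun _ => 1) ?_).trans (deriv_const s 1)
      filter_upwards [lt_mem_nhds (not_le.1 h)] with t ht
      exact Real.smoothTransition.one_of_one_le ht.le
  obtain ⟨c₁, h₁⟩ := (contDiff_deriv hsmooth).continuous.bounded_above_of_compact_support hsupp
  obtain ⟨c₂, h₂⟩ := (contDiff_deriv (contDiff_deriv hsmooth)).continuous
    |>.bounded_above_of_compact_support hsupp.deriv
  exact ⟨max c₁ c₂, (norm_nonneg _).trans ((h₁ 0).trans (le_max_left _ _)),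
    fun s => ⟨(h₁ s).trans (le_max_left _ _), (h₂ s).trans (le_max_right _ _)⟩⟩

theorem deriv_comp_const_sub_div {f : ℝ → ℝ} (hf : Differentiable ℝ f) (a L : ℝ) :
    deriv (fun t => f ((a - t) / L)) = fun t => -L⁻¹ * deriv f ((a - t) / L) := by
  ext t
  have hinner : HasDerivAt (fun t => (a - t) / L) (-1 / L) t :=
    ((hasDerivAt_id t).const_sub a).div_const L
  refine ((hf _).hasDerivAt.comp t hinner).deriv.trans ?_
  ring

theorem exists_abs_deriv_cutoffProfile_le : ∃ c, 0 ≤ c ∧ ∀ a L t : ℝ, 0 < L →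
    |deriv (fun t => Real.smoothTransition ((a - t) / L)) t| ≤ c / L ∧
      |deriv (deriv fun t => Real.smoothTransition ((a - t) / L)) t| ≤ c / L ^ 2 := by
  obtain ⟨c, hc0, hc⟩ := exists_abs_deriv_smoothTransition_le
  refine ⟨c, hc0, fun a L t hL => ?_⟩
  have hsmooth : ContDiff ℝ ∞ Real.smoothTransition := Real.smoothTransition.contDiff
  rw [deriv_comp_const_sub_div (hsmooth.differentiable (by simp)), deriv_const_mul_field',
    deriv_comp_const_sub_div ((contDiff_deriv hsmooth).differentiable (by simp))]
  constructor
  · rw [abs_mul, abs_neg, abs_inv, abs_of_pos hL, inv_mul_eq_div]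
    gcongr
    exact (hc _).1
  · rw [abs_mul, abs_mul, abs_neg, abs_inv, abs_of_pos hL, ← mul_assoc, ← mul_inv, ← sq,
      inv_mul_eq_div]
    gcongr
    exact (hc _).2

/-- The radial cutoff between the balls of radii `ρ` and `σ`, written in terms of `‖x‖ ^ 2` to be
smooth at the origin. -/
def radialCutoff (ρ σ : ℝ) (x : R3) : ℝ :=
  Real.smoothTransition ((σ ^ 2 - ‖x‖ ^ 2) / (σ ^ 2 - ρ ^ 2))

section RadialCutoff

variable {ρ σ : ℝ}

theorem contDiff_cutoffProfile (a L : ℝ) :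
    ContDiff ℝ ∞ fun t => Real.smoothTransition ((a - t) / L) :=
  Real.smoothTransition.contDiff.comp ((contDiff_const.sub contDiff_id).div_const _)

theorem radialCutoff_eq_zero (hρ : 0 ≤ ρ) (hρσ : ρ < σ) {x : R3} (hx : σ ≤ ‖x‖) :
    radialCutoff ρ σ x = 0 :=
  Real.smoothTransition.zero_of_nonpos (div_nonpos_of_nonpos_of_nonneg (by nlinarith)
    (by nlinarith))

theorem radialCutoff_eq_one (hρ : 0 ≤ ρ) (hρσ : ρ < σ) {x : R3} (hx : ‖x‖ ≤ ρ) :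
    radialCutoff ρ σ x = 1 :=
  Real.smoothTransition.one_of_one_le
    ((one_le_div (by nlinarith)).2 (by nlinarith [norm_nonneg x]))

theorem exists_abs_pd_radialCutoff_le : ∃ c, 0 ≤ c ∧ ∀ ρ σ, 0 ≤ ρ → ρ < σ → ∀ x : R3, ‖x‖ ≤ σ →
    (∀ j, |pd (radialCutoff ρ σ) j x| ≤ c / (σ - ρ)) ∧
      ∀ i j, |pd (pd (radialCutoff ρ σ) i) j x| ≤ c / (σ - ρ) ^ 2 := by
  obtain ⟨c, hc0, hc⟩ := exists_abs_deriv_cutoffProfile_le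
  refine ⟨6 * c, by positivity, fun ρ σ hρ hρσ x hx => ?_⟩
  have hσ : 0 < σ := by linarith
  have hD : 0 < σ - ρ := sub_pos.2 hρσ
  set L := σ ^ 2 - ρ ^ 2
  have hLσ : σ * (σ - ρ) ≤ L := by nlinarith
  have hLD : (σ - ρ) ^ 2 ≤ L := by nlinarith
  have hL0 : 0 < L := lt_of_lt_of_le (by positivity) hLD
  have hprofile := contDiff_cutoffProfile (σ ^ 2) L
  obtain ⟨hd, hdd⟩ := hc (σ ^ 2) L (‖x‖ ^ 2) hL0
  have hcoord : ∀ j, |x j| ≤ σ := fun j => (abs_coord_le x j).trans hx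
  refine ⟨fun j => ?_, fun i j => ?_⟩
  · calc |pd (radialCutoff ρ σ) j x|
        = 2 * |x j| * |deriv (fun t => Real.smoothTransition ((σ ^ 2 - t) / L)) (‖x‖ ^ 2)| := by
          rw [← abs_two, ← abs_mul, ← abs_mul,
            ← pd_radial (hprofile.differentiable (by simp))]; rfl
      _ ≤ 2 * σ * (c / (σ * (σ - ρ))) := by gcongr; exacts [hcoord j, hd.trans (by gcongr)]
      _ = 2 * c / (σ - ρ) := by field_simp
      _ ≤ 6 * c / (σ - ρ) := by gcongr; norm_num
  · have hδ : |if i = j then (1 : ℝ) else 0| ≤ 1 := by split_ifs <;> simp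
    have hpd := pd_pd_radial hprofile i j x
    calc |pd (pd (radialCutoff ρ σ) i) j x|
        ≤ 2 * |if i = j then (1 : ℝ) else 0| *
              |deriv (fun t => Real.smoothTransition ((σ ^ 2 - t) / L)) (‖x‖ ^ 2)| +
            4 * |x i| * |x j| *
              |deriv (deriv fun t => Real.smoothTransition ((σ ^ 2 - t) / L)) (‖x‖ ^ 2)| := by
          refine (congrArg abs hpd).le.trans ((abs_add_le _ _).trans_eq ?_)
          simp only [abs_mul, abs_two, abs_of_pos (four_pos (α := ℝ))]
      _ ≤ 2 * 1 * (c / (σ - ρ) ^ 2) + 4 * σ * σ * (c / (σ * (σ - ρ)) ^ 2) := by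
          gcongr
          exacts [hd.trans (by gcongr), hcoord i, hcoord j, hdd.trans (by gcongr)]
      _ = 6 * c / (σ - ρ) ^ 2 := by field_simp; ring

theorem exists_isCutoff_radialCutoff : ∃ c, 0 ≤ c ∧ ∀ ρ σ, 0 ≤ ρ → ρ < σ →
    IsCutoff (radialCutoff ρ σ) ρ σ c := by
  obtain ⟨c, hc0, hc⟩ := exists_abs_pd_radialCutoff_le
  refine ⟨c, hc0, fun ρ σ hρ hρσ => ?_⟩
  have hopen : IsOpen {x : R3 | σ < ‖x‖} := isOpen_lt continuous_const continuous_norm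
  have pd_zero : ∀ j, ∀ x ∈ {x : R3 | σ < ‖x‖}, pd (radialCutoff ρ σ) j x = 0 := fun j x hx =>
    pd_eq_zero_of_isOpen hopen (fun y hy => radialCutoff_eq_zero hρ hρσ (le_of_lt hy)) hx
  refine ⟨hρσ, contDiff_radial (contDiff_cutoffProfile _ _),
    fun x => Real.smoothTransition.nonneg _, fun x => Real.smoothTransition.le_one _,
    fun x => radialCutoff_eq_one hρ hρσ, fun x => radialCutoff_eq_zero hρ hρσ,
    fun j x => ?_, fun i j x => ?_⟩
  · rcases le_or_gt ‖x‖ σ with hx | hx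
    · exact (hc ρ σ hρ hρσ x hx).1 j
    · rw [pd_zero j x hx, abs_zero]; positivity
  · rcases le_or_gt ‖x‖ σ with hx | hx
    · exact (hc ρ σ hρ hρσ x hx).2 i j
    · rw [pd_eq_zero_of_isOpen hopen (pd_zero i) hx, abs_zero]; positivity

end RadialCutoff

namespace IsCutoff

variable {η : R3 → ℝ} {ρ σ c : ℝ}

theorem width_pos (h : IsCutoff η ρ σ c) : 0 < σ - ρ := sub_pos.2 h.lt

theorem const_nonneg (h : IsCutoff η ρ σ c) : 0 ≤ c := by
  have hdiv := (abs_nonneg _).trans (h.abs_pd_le 0 0)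
  rwa [le_div_iff₀ h.width_pos, zero_mul] at hdiv

theorem hasCompactSupport (h : IsCutoff η ρ σ c) : HasCompactSupport η :=
  HasCompactSupport.intro (isCompact_closedBall 0 σ) fun x hx =>
    h.eq_zero x (by simpa using (not_le.1 (mt mem_closedBall_zero_iff.2 hx)).le)

theorem pd_eq_zero (h : IsCutoff η ρ σ c) (j : Fin 3) {x : R3} (hx : ‖x‖ < ρ ∨ σ < ‖x‖) :
    pd η j x = 0 := by
  rcases hx with hx | hx
  · exact pd_eq_zero_of_isOpen (isOpen_lt continuous_norm continuous_const)
      (fun y hy => h.eq_one y (le_of_lt hy)) hx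
  · exact pd_eq_zero_of_isOpen (isOpen_lt continuous_const continuous_norm)
      (fun y hy => h.eq_zero y (le_of_lt hy)) hx

theorem lap_eq_zero (h : IsCutoff η ρ σ c) {x : R3} (hx : ‖x‖ < ρ ∨ σ < ‖x‖) : lap η x = 0 := by
  have hopen : IsOpen {x : R3 | ‖x‖ < ρ ∨ σ < ‖x‖} :=
    (isOpen_lt continuous_norm continuous_const).union
      (isOpen_lt continuous_const continuous_norm)
  exact Finset.sum_eq_zero fun j _ => pd_eq_zero_of_isOpen hopen (fun y hy => h.pd_eq_zero j hy) hx

theorem abs_lap_le (h : IsCutoff η ρ σ c) (x : R3) : |lap η x| ≤ 3 * (c / (σ - ρ) ^ 2) := by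
  refine (Finset.abs_sum_le_sum_abs _ _).trans
    ((Finset.sum_le_card_nsmul _ _ _ fun j _ => h.abs_pd_pd_le j j x).trans_eq ?_)
  simp

theorem sq (h : IsCutoff η ρ σ c) :
    IsCutoff (fun x => η x ^ 2) ρ σ (2 * c ^ 2 + 2 * c) := by
  have hc := h.const_nonneg
  have hD := h.width_pos
  have habs : ∀ x, |η x| ≤ 1 := fun x => (abs_of_nonneg (h.nonneg x)).trans_le (h.le_one x)
  have hdiff := differentiable_of_contDiff h.contDiff
  have hpd : ∀ j, pd (fun x => η x ^ 2) j = fun x => 2 * (η x * pd η j x) := fun j => by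
    ext x; rw [pd_fun_sq (hdiff x), mul_assoc]
  refine ⟨h.lt, h.contDiff.pow 2, fun x => sq_nonneg _,
    fun x => pow_le_one₀ (h.nonneg x) (h.le_one x), fun x hx => by rw [h.eq_one x hx, one_pow],
    fun x hx => by rw [h.eq_zero x hx, zero_pow two_ne_zero], fun j x => ?_, fun i j x => ?_⟩
  · calc |pd (fun x => η x ^ 2) j x| = 2 * (|η x| * |pd η j x|) := by
          rw [hpd, abs_mul, abs_mul, abs_two]
      _ ≤ 2 * (1 * (c / (σ - ρ))) := by gcongr; exacts [habs x, h.abs_pd_le j x]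
      _ ≤ (2 * c ^ 2 + 2 * c) / (σ - ρ) := by
          rw [one_mul, ← mul_div_assoc]; gcongr; nlinarith [sq_nonneg c]
  · have hpdd := differentiable_of_contDiff (contDiff_pd h.contDiff (j := i))
    calc |pd (pd (fun x => η x ^ 2) i) j x|
        = |2 * (pd η j x * pd η i x + η x * pd (pd η i) j x)| := by
          rw [hpd, pd_const_mul 2 ((hdiff x).fun_mul (hpdd x)), pd_fun_mul (hdiff x) (hpdd x)]
      _ ≤ 2 * (|pd η j x| * |pd η i x| + |η x| * |pd (pd η i) j x|) := by
          rw [abs_mul, abs_two, ← abs_mul, ← abs_mul]; gcongr; exact abs_add_le _ _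
      _ ≤ 2 * (c / (σ - ρ) * (c / (σ - ρ)) + 1 * (c / (σ - ρ) ^ 2)) := by
          gcongr
          exacts [h.abs_pd_le j x, h.abs_pd_le i x, habs x, h.abs_pd_pd_le i j x]
      _ = (2 * c ^ 2 + 2 * c) / (σ - ρ) ^ 2 := by field_simp

end IsCutoff

/-! ### Sobolev's inequality with a cutoff -/

section Sobolev

variable {w : R3 → R3} {η : R3 → ℝ}

theorem fderiv_apply_coord (hw : ContDiff ℝ ∞ w) (x h : R3) (i : Fin 3) :
    fderiv ℝ w x h i = ∑ k, h k * pd (fun y => w y i) k x := by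
  have hcoord : fderiv ℝ (fun y => w y i) x = (EuclideanSpace.proj i).comp (fderiv ℝ w x) :=
    ((EuclideanSpace.proj i : R3 →L[ℝ] ℝ).hasFDerivAt.comp x
      (hw.differentiable (by simp) x).hasFDerivAt).fderiv
  have hbasis : h = ∑ k, h k • EuclideanSpace.single k (1 : ℝ) := by
    simpa using ((EuclideanSpace.basisFun (Fin 3) ℝ).sum_repr h).symm
  conv_lhs => rw [hbasis]
  simp [pd, hcoord]

theorem norm_fderiv_sq_le_gradSq (hw : ContDiff ℝ ∞ w) (x : R3) :
    ‖fderiv ℝ w x‖ ^ 2 ≤ gradSq w x := by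
  rw [← Real.le_sqrt (norm_nonneg _) (gradSq_nonneg w x)]
  refine ContinuousLinearMap.opNorm_le_bound _ (Real.sqrt_nonneg _) fun h => ?_
  refine le_of_sq_le_sq ?_ (by positivity)
  rw [mul_pow, Real.sq_sqrt (gradSq_nonneg w x), norm_sq_eq_sum, gradSq, Finset.sum_mul]
  refine Finset.sum_le_sum fun i _ => ?_
  rw [fderiv_apply_coord hw, norm_sq_eq_sum, mul_comm]
  exact Finset.sum_mul_sq_le_sq_mul_sq _ _ _

theorem hasCompactSupport_gradSq (hc : HasCompactSupport w) : HasCompactSupport (gradSq w) := by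
  refine HasCompactSupport.of_support_subset_isCompact hc fun x hx => ?_
  obtain ⟨i, -, hi⟩ := Finset.exists_ne_zero_of_sum_ne_zero hx
  obtain ⟨j, -, hj⟩ := Finset.exists_ne_zero_of_sum_ne_zero hi
  have hcoord : tsupport (fun y => w y i) ⊆ tsupport w :=
    closure_mono fun y hy hw => hy (by simp [hw])
  refine hcoord (tsupport_fderiv_subset ℝ (subset_tsupport _ fun h0 => hj ?_))
  simp [pd, h0]

theorem exists_lpS_six_sq_le_integral_gradSq : ∃ C, 0 ≤ C ∧ ∀ {w : R3 → R3}, ContDiff ℝ ∞ w →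
    HasCompactSupport w → lpS (fun x => ‖w x‖) 6 Set.univ ^ 2 ≤ C * ∫ x, gradSq w x := by
  set K := eLpNormLESNormFDerivOfEqInnerConst (volume : Measure R3) 2
  refine ⟨K ^ 2, by positivity, fun {w} hw hc => ?_⟩
  have hderiv : Continuous (fderiv ℝ w) := hw.continuous_fderiv (by simp)
  have norm_six : eLpNorm w 6 volume = ENNReal.ofReal (lpS (fun x => ‖w x‖) 6 Set.univ) := by
    rw [(hw.continuous.memLp_of_hasCompactSupport hc).eLpNorm_eq_integral_rpow_norm
      (by norm_num) (by norm_num)]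
    simp [lpS]
  have norm_two : eLpNorm (fderiv ℝ w) 2 volume =
      ENNReal.ofReal √(∫ x, ‖fderiv ℝ w x‖ ^ 2) := by
    rw [(hderiv.memLp_of_hasCompactSupport (hc.fderiv ℝ)).eLpNorm_eq_integral_rpow_norm
      (by norm_num) (by norm_num), Real.sqrt_eq_rpow]
    simp
  have sobolev : lpS (fun x => ‖w x‖) 6 Set.univ ≤ K * √(∫ x, ‖fderiv ℝ w x‖ ^ 2) := by
    rw [← ENNReal.ofReal_le_ofReal_iff (by positivity), ENNReal.ofReal_mul K.coe_nonneg, ← norm_six,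
      ← norm_two]
    exact (eLpNorm_le_eLpNorm_fderiv_of_eq_inner (volume : Measure R3) (p := 2) (p' := 6)
      (hw.of_le (by simp)) hc (by norm_num) (by simp) (by simp; norm_num)).trans_eq (by simp [K])
  calc lpS (fun x => ‖w x‖) 6 Set.univ ^ 2 ≤ (K * √(∫ x, ‖fderiv ℝ w x‖ ^ 2)) ^ 2 :=
        pow_le_pow_left₀ lpS_nonneg sobolev 2
    _ = K ^ 2 * ∫ x, ‖fderiv ℝ w x‖ ^ 2 := by
        rw [mul_pow, Real.sq_sqrt (integral_nonneg fun _ => sq_nonneg _)]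
    _ ≤ K ^ 2 * ∫ x, gradSq w x := by
        refine mul_le_mul_of_nonneg_left (integral_mono_of_nonneg (ae_of_all _ fun _ => sq_nonneg _)
          ?_ (ae_of_all _ (norm_fderiv_sq_le_gradSq hw))) (by positivity)
        exact (continuous_gradSq hw).integrable_of_hasCompactSupport (hasCompactSupport_gradSq hc)

theorem gradSq_smul_le (hη : ContDiff ℝ ∞ η) (hw : ContDiff ℝ ∞ w) (x : R3) :
    gradSq (fun y => η y • w y) x ≤
      2 * (η x ^ 2 * gradSq w x) + 2 * ((∑ j, pd η j x ^ 2) * ‖w x‖ ^ 2) := by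
  have leibniz i j : pd (fun y => (η y • w y) i) j x =
      pd η j x * w x i + η x * pd (fun y => w y i) j x :=
    pd_fun_mul (differentiable_of_contDiff hη x)
      (differentiable_of_contDiff (contDiff_coord hw i) x)
  calc gradSq (fun y => η y • w y) x
      ≤ ∑ i, ∑ j, (2 * (η x ^ 2 * pd (fun y => w y i) j x ^ 2) +
          2 * (pd η j x ^ 2 * w x i ^ 2)) := by
        refine Finset.sum_le_sum fun i _ => Finset.sum_le_sum fun j _ => ?_
        rw [leibniz, ← mul_pow, ← mul_pow, ← mul_add, add_comm (_ ^ 2)]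
        exact add_sq_le
    _ = _ := by
        simp only [norm_sq_eq_sum, gradSq, Finset.sum_add_distrib, ← Finset.mul_sum,
          ← Finset.sum_mul]

theorem integral_le_setIntegral_of_eq_zero {S : Set R3} {f g : R3 → ℝ}
    (hS : Bornology.IsBounded S) (hf : Continuous f) (hg : Continuous g)
    (hf0 : ∀ x ∉ S, f x = 0) (h : ∀ x, f x ≤ g x) : ∫ x, f x ≤ ∫ x in S, g x := by
  rw [← setIntegral_eq_integral_of_forall_compl_eq_zero hf0]
  exact integral_mono (integrableOn_of_isBounded hS hf) (integrableOn_of_isBounded hS hg) h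

theorem norm_lt_or_lt_norm_of_notMem {S : Set R3} {ρ σ : ℝ} (hS : closedBall 0 σ \ ball 0 ρ ⊆ S)
    {x : R3} (hx : x ∉ S) : ‖x‖ < ρ ∨ σ < ‖x‖ := by
  simpa [or_comm, imp_iff_not_or] using mt (@hS x) hx

theorem IsCutoff.sum_pd_sq_le {ρ σ c : ℝ} (hη : IsCutoff η ρ σ c) (x : R3) :
    ∑ j, pd η j x ^ 2 ≤ 3 * (c / (σ - ρ)) ^ 2 := by
  refine (Finset.sum_le_card_nsmul _ _ _ fun j _ => ?_).trans_eq (nsmul_eq_mul _ _)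
  exact sq_le_sq' (neg_le_of_abs_le (hη.abs_pd_le j x)) (le_of_abs_le (hη.abs_pd_le j x))

theorem IsCutoff.integral_gradSq_smul_le {ρ σ c : ℝ} {S : Set R3} (hη : IsCutoff η ρ σ c)
    (hw : ContDiff ℝ ∞ w) (hS : Bornology.IsBounded S) (hσS : closedBall 0 σ \ ball 0 ρ ⊆ S) :
    ∫ x, gradSq (fun y => η y • w y) x ≤ 2 * (∫ x, η x ^ 2 * gradSq w x) +
      6 * ((c / (σ - ρ)) ^ 2 * lpS (fun x => ‖w x‖) 2 S ^ 2) := by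
  have hgrad_int : Integrable fun x => 2 * (η x ^ 2 * gradSq w x) :=
    (integrable_mul_of_hasCompactSupport (hη.contDiff.continuous.pow 2) hη.sq.hasCompactSupport
      (continuous_gradSq hw)).const_mul 2
  have hcut : Continuous fun x => 2 * ((∑ j, pd η j x ^ 2) * ‖w x‖ ^ 2) :=
    continuous_const.mul ((continuous_finsetSum _ fun j _ =>
      (contDiff_pd hη.contDiff).continuous.pow 2).mul (hw.continuous.norm.pow 2))
  have hcut0 : ∀ x ∉ S, 2 * ((∑ j, pd η j x ^ 2) * ‖w x‖ ^ 2) = 0 := fun x hx => by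
    simp [hη.pd_eq_zero _ (norm_lt_or_lt_norm_of_notMem hσS hx)]
  have hcut_int : Integrable fun x => 2 * ((∑ j, pd η j x ^ 2) * ‖w x‖ ^ 2) :=
    (integrableOn_of_isBounded hS hcut).integrable_of_forall_notMem_eq_zero hcut0
  calc ∫ x, gradSq (fun y => η y • w y) x
      ≤ ∫ x, 2 * (η x ^ 2 * gradSq w x) + 2 * ((∑ j, pd η j x ^ 2) * ‖w x‖ ^ 2) :=
        integral_mono_of_nonneg (ae_of_all _ (gradSq_nonneg _)) (hgrad_int.add hcut_int)
          (ae_of_all _ (gradSq_smul_le hη.contDiff hw))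
    _ = 2 * (∫ x, η x ^ 2 * gradSq w x) +
          ∫ x, 2 * ((∑ j, pd η j x ^ 2) * ‖w x‖ ^ 2) := by
        rw [integral_add hgrad_int hcut_int, integral_const_mul]
    _ ≤ 2 * (∫ x, η x ^ 2 * gradSq w x) +
          ∫ x in S, 6 * (c / (σ - ρ)) ^ 2 * ‖w x‖ ^ 2 := by
        refine add_le_add_right (integral_le_setIntegral_of_eq_zero hS hcut
          (continuous_const.fun_mul (hw.continuous.norm.fun_pow 2)) hcut0 fun x => ?_) _
        nlinarith [mul_le_mul_of_nonneg_right (hη.sum_pd_sq_le x) (sq_nonneg ‖w x‖)]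
    _ = _ := by rw [integral_const_mul, lpS_two_sq, mul_assoc]

theorem exists_lpS_six_sq_le_of_isCutoff : ∃ C, 0 ≤ C ∧ ∀ {w : R3 → R3} {η : R3 → ℝ}
    {ρ σ c : ℝ} {S : Set R3}, IsCutoff η ρ σ c → ContDiff ℝ ∞ w → Bornology.IsBounded S →
    closedBall 0 σ \ ball 0 ρ ⊆ S →
    lpS (fun x => ‖w x‖) 6 (ball 0 ρ) ^ 2 ≤
      C * ((∫ x, η x ^ 2 * gradSq w x) +
        (c / (σ - ρ)) ^ 2 * lpS (fun x => ‖w x‖) 2 S ^ 2) := by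
  obtain ⟨C, hC0, hC⟩ := exists_lpS_six_sq_le_integral_gradSq
  refine ⟨6 * C, by positivity, fun {w η ρ σ c S} hη hw hS hσS => ?_⟩
  have hηw : ContDiff ℝ ∞ fun x => η x • w x := hη.contDiff.smul hw
  have hηwc : HasCompactSupport fun x => η x • w x := hη.hasCompactSupport.smul_right
  have hgrad0 : 0 ≤ ∫ x, η x ^ 2 * gradSq w x :=
    integral_nonneg fun x => mul_nonneg (sq_nonneg _) (gradSq_nonneg w x)
  have localize : lpS (fun x => ‖w x‖) 6 (ball 0 ρ) ≤
      lpS (fun x => ‖η x • w x‖) 6 Set.univ := by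
    refine Real.rpow_le_rpow integral_abs_rpow_nonneg ?_ (by norm_num)
    rw [setIntegral_congr_fun measurableSet_ball (g := fun x => |‖η x • w x‖| ^ (6 : ℝ))
      fun x hx => by simp [hη.eq_one x (mem_ball_zero_iff.1 hx).le], Measure.restrict_univ]
    refine setIntegral_le_integral ?_ (ae_of_all _ fun x => Real.rpow_nonneg (abs_nonneg _) _)
    exact (continuous_abs_rpow hηw.continuous.norm (by norm_num)).integrable_of_hasCompactSupport
      (hηwc.norm.comp_left (g := fun t : ℝ => |t| ^ (6 : ℝ)) (by norm_num))
  calc lpS (fun x => ‖w x‖) 6 (ball 0 ρ) ^ 2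
      ≤ lpS (fun x => ‖η x • w x‖) 6 Set.univ ^ 2 := pow_le_pow_left₀ lpS_nonneg localize 2
    _ ≤ C * ∫ x, gradSq (fun y => η y • w y) x := hC hηw hηwc
    _ ≤ C * (2 * (∫ x, η x ^ 2 * gradSq w x) +
          6 * ((c / (σ - ρ)) ^ 2 * lpS (fun x => ‖w x‖) 2 S ^ 2)) :=
        mul_le_mul_of_nonneg_left (hη.integral_gradSq_smul_le hw hS hσS) hC0
    _ ≤ 6 * C * ((∫ x, η x ^ 2 * gradSq w x) +
          (c / (σ - ρ)) ^ 2 * lpS (fun x => ‖w x‖) 2 S ^ 2) := by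
        linarith [mul_nonneg hC0 hgrad0]

end Sobolev

/-! ### The local energy inequality -/

section LocalEnergy

variable {u v : R3 → R3} {pr θ φ : R3 → ℝ} {ρ σ c : ℝ} {S : Set R3}

/-- The pointwise bound for the pressure-free part of the energy flux: the cubic convective term
and the quadratic coupling of `v` and `θ`. -/
def fluxDensity (u v : R3 → R3) (θ : R3 → ℝ) (x : R3) : ℝ :=
  (∑ k, ‖fields u v θ k x‖ ^ 2) * ‖u x‖ + |θ x| * ‖v x‖

theorem fluxDensity_nonneg (u v : R3 → R3) (θ : R3 → ℝ) (x : R3) : 0 ≤ fluxDensity u v θ x := by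
  unfold fluxDensity
  positivity

theorem continuous_fluxDensity (h : IsSmoothTCM u v pr θ) : Continuous (fluxDensity u v θ) := by
  have hW := fun k => (h.contDiff_field k).continuous
  have hu := h.contDiff_u.continuous
  have hv := h.contDiff_v.continuous
  have hθ := h.contDiff_θ.continuous
  unfold fluxDensity
  fun_prop

theorem abs_sum_coord_mul_le (x : R3) {g : Fin 3 → ℝ} {a : ℝ} (hg : ∀ j, |g j| ≤ a) :
    |∑ j, x j * g j| ≤ 3 * a * ‖x‖ := by
  refine (Finset.abs_sum_le_sum_abs _ _).trans ((Finset.sum_le_card_nsmul _ _ (‖x‖ * a)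
    fun j _ => ?_).trans_eq (by simp; ring))
  rw [abs_mul]
  exact mul_le_mul (abs_coord_le x j) (hg j) (abs_nonneg _) (norm_nonneg _)

theorem abs_sum_energyFlux_zero_mul_le (u v : R3 → R3) (θ : R3 → ℝ) (x : R3) {g : Fin 3 → ℝ}
    {a : ℝ} (hg : ∀ j, |g j| ≤ a) :
    |∑ j, energyFlux u v 0 θ j x * g j| ≤ 6 * a * fluxDensity u v θ x := by
  have ha : 0 ≤ a := (abs_nonneg _).trans (hg 0)
  have hsq := sum_norm_sq_fields u v θ x
  have hinner : |∑ i, u x i * v x i| ≤ ‖u x‖ * ‖v x‖ := by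
    simpa [PiLp.inner_apply, mul_comm] using abs_real_inner_le_norm (u x) (v x)
  calc |∑ j, energyFlux u v 0 θ j x * g j|
      = |1 / 2 * (∑ k, ‖fields u v θ k x‖ ^ 2) * (∑ j, u x j * g j)
          + ((∑ i, u x i * v x i) + θ x) * ∑ j, v x j * g j| := by
        congr 1
        simp only [energyFlux, hsq, Pi.zero_apply, add_zero, add_mul, Finset.sum_add_distrib,
          Finset.mul_sum, mul_assoc]
    _ ≤ 1 / 2 * (∑ k, ‖fields u v θ k x‖ ^ 2) * (3 * a * ‖u x‖)
          + (‖u x‖ * ‖v x‖ + |θ x|) * (3 * a * ‖v x‖) := by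
        refine (abs_add_le _ _).trans (add_le_add ?_ ?_)
        · rw [abs_mul, abs_of_nonneg (by positivity)]
          exact mul_le_mul_of_nonneg_left (abs_sum_coord_mul_le _ hg) (by positivity)
        · rw [abs_mul]
          exact mul_le_mul ((abs_add_le _ _).trans (add_le_add_left hinner _))
            (abs_sum_coord_mul_le _ hg) (abs_nonneg _) (by positivity)
    _ ≤ 6 * a * fluxDensity u v θ x := by
        have hv : ‖v x‖ ^ 2 ≤ ∑ k, ‖fields u v θ k x‖ ^ 2 := by
          rw [hsq]; linarith [sq_nonneg ‖u x‖, sq_nonneg (θ x)]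
        have huv := mul_le_mul_of_nonneg_left hv (mul_nonneg ha (norm_nonneg (u x)))
        have hcube : 0 ≤ a * ‖u x‖ * ∑ k, ‖fields u v θ k x‖ ^ 2 := by positivity
        have hcross : 0 ≤ a * (|θ x| * ‖v x‖) := by positivity
        unfold fluxDensity
        linarith

theorem energyFlux_eq_add (u v : R3 → R3) (pr θ : R3 → ℝ) (j : Fin 3) (x : R3) :
    energyFlux u v pr θ j x = energyFlux u v 0 θ j x + u x j * pr x := by
  simp only [energyFlux, Pi.zero_apply]
  ring

theorem continuous_energyFlux_zero (h : IsSmoothTCM u v pr θ) (j : Fin 3) :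
    Continuous (energyFlux u v 0 θ j) := by
  have hu := h.contDiff_u.continuous
  have hv := h.contDiff_v.continuous
  have hθ := h.contDiff_θ.continuous
  unfold energyFlux
  simp only [Pi.zero_apply]
  fun_prop

theorem IsSmoothTCM.integral_energyFlux_mul_pd_eq (h : IsSmoothTCM u v pr θ)
    (hφ : ContDiff ℝ ∞ φ) (hφc : HasCompactSupport φ) :
    ∫ x, ∑ j, energyFlux u v pr θ j x * pd φ j x =
      (∫ x, ∑ j, energyFlux u v 0 θ j x * pd φ j x) + ∫ x, (∑ j, u x j * pd φ j x) * pr x := by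
  have hu := h.contDiff_u.continuous
  have hint {F : Fin 3 → R3 → ℝ} (hF : ∀ j, Continuous (F j)) :
      Integrable fun x => ∑ j, F j x * pd φ j x := by
    refine integrable_finsetSum _ fun j _ => ?_
    simpa only [mul_comm] using integrable_mul_of_hasCompactSupport (contDiff_pd hφ).continuous
      (hasCompactSupport_pd hφc) (hF j)
  have hpr : ∀ j, Continuous fun x => u x j * pr x := fun j => by
    have := h.contDiff_pr.continuous
    fun_prop
  rw [← integral_add (hint (continuous_energyFlux_zero h))
    (by simpa only [Finset.sum_mul, mul_right_comm] using hint hpr)]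
  refine integral_congr_ae (ae_of_all _ fun x => ?_)
  simp only [energyFlux_eq_add u v pr, add_mul, Finset.sum_add_distrib, Finset.sum_mul,
    mul_right_comm]

theorem IsSmoothTCM.energy_inequality (h : IsSmoothTCM u v pr θ) (hφ : IsCutoff φ ρ σ c)
    (hS : Bornology.IsBounded S) (hσS : closedBall 0 σ \ ball 0 ρ ⊆ S) :
    ∫ x, φ x * ∑ k, gradSq (fields u v θ k) x ≤
      3 / 2 * (c / (σ - ρ) ^ 2) * (∑ k, lpS (fun x => ‖fields u v θ k x‖) 2 S ^ 2) +
        6 * (c / (σ - ρ)) * (∫ x in S, fluxDensity u v θ x) +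
        |∫ x, (∑ j, u x j * pd φ j x) * pr x| := by
  have hW := fun k => (h.contDiff_field k).continuous
  have hsq : Continuous fun x => ∑ k, ‖fields u v θ k x‖ ^ 2 := by fun_prop
  have hflux0 := continuous_energyFlux_zero h
  have hpd := fun j => (contDiff_pd (j := j) hφ.contDiff).continuous
  have diffusion : ∫ x, lap φ x * ∑ k, ‖fields u v θ k x‖ ^ 2 ≤
      3 * (c / (σ - ρ) ^ 2) * ∑ k, lpS (fun x => ‖fields u v θ k x‖) 2 S ^ 2 := by
    simp only [lpS_two_sq]
    rw [← integral_finsetSum _ fun k _ => integrableOn_of_isBounded hS ((hW k).norm.fun_pow 2),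
      ← integral_const_mul]
    refine integral_le_setIntegral_of_eq_zero hS ((contDiff_lap hφ.contDiff).continuous.mul hsq)
      (continuous_const.mul hsq) (fun x hx => ?_) fun x => ?_
    · simp [hφ.lap_eq_zero (norm_lt_or_lt_norm_of_notMem hσS hx)]
    · exact mul_le_mul_of_nonneg_right ((le_abs_self _).trans (hφ.abs_lap_le x))
        (by positivity)
  have convection : ∫ x, ∑ j, energyFlux u v 0 θ j x * pd φ j x ≤
      6 * (c / (σ - ρ)) * ∫ x in S, fluxDensity u v θ x := by
    rw [← integral_const_mul]
    refine integral_le_setIntegral_of_eq_zero hS (by fun_prop)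
      (continuous_const.mul (continuous_fluxDensity h)) (fun x hx => ?_) fun x =>
        (le_abs_self _).trans (abs_sum_energyFlux_zero_mul_le u v θ x fun j => hφ.abs_pd_le j x)
    simp [hφ.pd_eq_zero _ (norm_lt_or_lt_norm_of_notMem hσS hx)]
  rw [h.energy_identity hφ.contDiff hφ.hasCompactSupport,
    h.integral_energyFlux_mul_pd_eq hφ.contDiff hφ.hasCompactSupport]
  linarith [le_abs_self (∫ x, (∑ j, u x j * pd φ j x) * pr x)]

end LocalEnergy

/-- The energy of the fields `W` on `S`: their Dirichlet integrals together with the squared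
`L⁶` norms, which Sobolev's inequality controls by them. -/
def localEnergy (W : Fin 3 → R3 → R3) (S : Set R3) : ℝ :=
  ∑ k, ((∫ x in S, gradSq (W k) x) + lpS (fun x => ‖W k x‖) 6 S ^ 2)

section LocalEnergyBasic

variable {W : Fin 3 → R3 → R3} {S T : Set R3}

theorem integral_gradSq_nonneg (w : R3 → R3) (S : Set R3) : 0 ≤ ∫ x in S, gradSq w x :=
  integral_nonneg (gradSq_nonneg w)

theorem localEnergy_term_nonneg (W : Fin 3 → R3 → R3) (S : Set R3) (k : Fin 3) :
    0 ≤ (∫ x in S, gradSq (W k) x) + lpS (fun x => ‖W k x‖) 6 S ^ 2 :=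
  add_nonneg (integral_gradSq_nonneg _ _) (sq_nonneg _)

theorem localEnergy_nonneg (W : Fin 3 → R3 → R3) (S : Set R3) : 0 ≤ localEnergy W S :=
  Finset.sum_nonneg fun k _ => localEnergy_term_nonneg W S k

theorem localEnergy_mono (hW : ∀ k, ContDiff ℝ ∞ (W k)) (hT : Bornology.IsBounded T)
    (hST : S ⊆ T) : localEnergy W S ≤ localEnergy W T :=
  Finset.sum_le_sum fun k _ => add_le_add
    (setIntegral_mono_of_isBounded hT hST (continuous_gradSq (hW k)) (gradSq_nonneg _))
    (pow_le_pow_left₀ lpS_nonneg (lpS_mono_set hT hST (hW k).continuous.norm (by norm_num)) 2)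

theorem integral_gradSq_le_localEnergy (W : Fin 3 → R3 → R3) (S : Set R3) (k : Fin 3) :
    ∫ x in S, gradSq (W k) x ≤ localEnergy W S :=
  (le_add_of_nonneg_right (sq_nonneg _)).trans
    (Finset.single_le_sum (fun i _ => localEnergy_term_nonneg W S i) (Finset.mem_univ k))

theorem lpS_six_sq_le_localEnergy (W : Fin 3 → R3 → R3) (S : Set R3) (k : Fin 3) :
    lpS (fun x => ‖W k x‖) 6 S ^ 2 ≤ localEnergy W S :=
  (le_add_of_nonneg_left (integral_gradSq_nonneg _ _)).trans
    (Finset.single_le_sum (fun i _ => localEnergy_term_nonneg W S i) (Finset.mem_univ k))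

theorem lpS_norm_mul_sqrt_gradSq_le_localEnergy (hW : ∀ k, ContDiff ℝ ∞ (W k))
    (hS : Bornology.IsBounded S) (k : Fin 3) :
    lpS (fun x => ‖W k x‖ * √(gradSq (W k) x)) (3 / 2) S ≤ localEnergy W S := by
  have hgrad : lpS (fun x => √(gradSq (W k) x)) 2 S ^ 2 ≤ localEnergy W S := by
    rw [lpS_two_sq]
    simpa only [Real.sq_sqrt (gradSq_nonneg _ _)] using integral_gradSq_le_localEnergy W S k
  calc lpS (fun x => ‖W k x‖ * √(gradSq (W k) x)) (3 / 2) S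
      ≤ lpS (fun x => ‖W k x‖) 6 S * lpS (fun x => √(gradSq (W k) x)) 2 S :=
        lpS_mul_le hS (hW k).continuous.norm (continuous_gradSq (hW k)).sqrt (by norm_num)
          (by norm_num) (by norm_num) (by norm_num)
    _ ≤ localEnergy W S := by
        nlinarith [lpS_six_sq_le_localEnergy W S k,
          sq_nonneg (lpS (fun x => ‖W k x‖) 6 S - lpS (fun x => √(gradSq (W k) x)) 2 S)]

end LocalEnergyBasic

section Caccioppoli

variable {u v : R3 → R3} {pr θ φ : R3 → ℝ} {R ρ σ τ c : ℝ}

theorem pressureGradBound_le {S : Set R3} {t : ℝ} (ht : 0 < t) (htR : t ≤ R) :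
    pressureGradBound u v S t ≤ (R / t) ^ 5 * pressureGradBound u v S R := by
  have hR : 0 < R := ht.trans_le htR
  have hone : 1 ≤ R / t := (one_le_div ht).2 htR
  have ht_inv : t⁻¹ = R / t * R⁻¹ := by field_simp
  have hquart : (R / t) ^ 4 ≤ (R / t) ^ 5 := pow_le_pow_right₀ hone (by norm_num)
  unfold pressureGradBound
  rw [ht_inv, mul_pow, mul_pow, mul_assoc, mul_assoc, mul_add _ (R⁻¹ ^ 5 * _)]
  gcongr

/-- The bound for the work done by the pressure against a divergence-free field `u` across the
set `S`, at the scale `R`. -/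
def pressureWork (u v : R3 → R3) (p s R : ℝ) (S : Set R3) (l₁ l₂ : ℝ) : ℝ :=
  pressureGradBound u v S R * lpS (fun x => ‖u x‖) 1 S +
    R⁻¹ * (lpS (fun x => ‖u x‖) p S * (stressBound u p s S l₁ + stressBound v p s S l₂))

/-- The right-hand side of the Caccioppoli-type inequality at the scale `R`: diffusion,
convection and pressure. -/
def caccioppoliBound (u v : R3 → R3) (θ : R3 → ℝ) (p s R : ℝ) (S : Set R3) (l₁ l₂ : ℝ) : ℝ :=
  R⁻¹ ^ 2 * (∑ k, lpS (fun x => ‖fields u v θ k x‖) 2 S ^ 2) +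
    R⁻¹ * (∫ x in S, fluxDensity u v θ x) + pressureWork u v p s R S l₁ l₂

theorem pressureWork_nonneg {p s l₁ l₂ : ℝ} {S : Set R3} (hR : 0 < R) (hl₁ : 0 < l₁)
    (hl₂ : 0 < l₂) : 0 ≤ pressureWork u v p s R S l₁ l₂ :=
  add_nonneg (mul_nonneg (pressureGradBound_nonneg hR) lpS_nonneg)
    (mul_nonneg (inv_nonneg.2 hR.le) (mul_nonneg lpS_nonneg
      (add_nonneg (stressBound_nonneg hl₁) (stressBound_nonneg hl₂))))

theorem IsSmoothTCM.integral_sum_mul_pd_eq_zero (h : IsSmoothTCM u v pr θ)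
    (hφ : ContDiff ℝ ∞ φ) (hφc : HasCompactSupport φ) : ∫ x, ∑ j, u x j * pd φ j x = 0 := by
  have hdiv := integral_mul_div_eq_neg hφ hφc fun j => contDiff_coord h.contDiff_u j
  simp only [h.tcm.2.2.2, mul_zero, integral_zero] at hdiv
  linarith

theorem closedBall_diff_ball_subset_shell (hR : R ≤ ρ) (hρτ : ρ < τ) :
    closedBall 0 ((ρ + τ) / 2) \ ball (0 : R3) ρ ⊆ shell R τ :=
  Set.sdiff_subset_sdiff (closedBall_subset_ball (by linarith)) (ball_subset_ball hR)

theorem support_sum_mul_pd_subset (u : R3 → R3) (hφ : IsCutoff φ ρ σ c) :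
    Function.support (fun x => ∑ j, u x j * pd φ j x) ⊆ closedBall 0 σ \ ball 0 ρ :=
  Function.support_subset_iff'.2 fun x hx => by
    simp [hφ.pd_eq_zero _ (norm_lt_or_lt_norm_of_notMem subset_rfl hx)]

theorem continuous_sum_mul_pd (hu : Continuous u) (hφ : ContDiff ℝ ∞ φ) :
    Continuous fun x => ∑ j, u x j * pd φ j x := by
  have := fun j => (contDiff_pd (j := j) hφ).continuous
  fun_prop

theorem lpS_sum_mul_pd_le (hu : Continuous u) (hφ : IsCutoff φ ρ σ c) {S : Set R3}
    (hS : Bornology.IsBounded S) {q : ℝ} (hq : 0 < q) :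
    lpS (fun x => ∑ j, u x j * pd φ j x) q S ≤
      3 * (c / (σ - ρ)) * lpS (fun x => ‖u x‖) q S := by
  have hcoef : 0 ≤ 3 * (c / (σ - ρ)) :=
    mul_nonneg zero_le_three (div_nonneg hφ.const_nonneg hφ.width_pos.le)
  rw [← lpS_const_mul hcoef hq.ne']
  exact lpS_mono hS (continuous_sum_mul_pd hu hφ.contDiff) (by fun_prop) hq fun x =>
    (abs_sum_coord_mul_le _ fun j => hφ.abs_pd_le j x).trans (le_abs_self _)

theorem pressureWork_scale_le {p s l₁ l₂ : ℝ} {S : Set R3} (hR : 0 < R) (hρτ : ρ < τ)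
    (hτR : τ - ρ ≤ R) (hl₁ : 0 < l₁) (hl₂ : 0 < l₂) :
    (τ - ρ)⁻¹ * (R * pressureGradBound u v S ((τ - ρ) / 4) * lpS (fun x => ‖u x‖) 1 S +
        lpS (fun x => ‖u x‖) p S * (stressBound u p s S l₁ + stressBound v p s S l₂)) ≤
      4 ^ 5 * (R / (τ - ρ)) ^ 6 * pressureWork u v p s R S l₁ l₂ := by
  have hD : 0 < τ - ρ := sub_pos.2 hρτ
  have hinv : (τ - ρ)⁻¹ = R / (τ - ρ) * R⁻¹ := by field_simp
  have hK1 : 1 ≤ R / (τ - ρ) := (one_le_div hD).2 hτR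
  have hgrad : pressureGradBound u v S ((τ - ρ) / 4) ≤
      (4 * (R / (τ - ρ))) ^ 5 * pressureGradBound u v S R := by
    refine (pressureGradBound_le (R := R) (by positivity) (by linarith)).trans_eq ?_
    rw [div_div_eq_mul_div, mul_comm R, mul_div_assoc]
  rw [hinv]
  set K := R / (τ - ρ)
  have hU₁ : 0 ≤ lpS (fun x => ‖u x‖) 1 S := lpS_nonneg
  have hwork : 0 ≤ lpS (fun x => ‖u x‖) p S * (stressBound u p s S l₁ + stressBound v p s S l₂) :=
    mul_nonneg lpS_nonneg (add_nonneg (stressBound_nonneg hl₁) (stressBound_nonneg hl₂))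
  unfold pressureWork
  set B := lpS (fun x => ‖u x‖) p S * (stressBound u p s S l₁ + stressBound v p s S l₂)
  calc K * R⁻¹ * (R * pressureGradBound u v S ((τ - ρ) / 4) * lpS (fun x => ‖u x‖) 1 S + B)
      ≤ K * R⁻¹ * (R * ((4 * K) ^ 5 * pressureGradBound u v S R) * lpS (fun x => ‖u x‖) 1 S + B) :=
        by gcongr
    _ = 4 ^ 5 * K ^ 6 * (pressureGradBound u v S R * lpS (fun x => ‖u x‖) 1 S) +
          1 * K * (R⁻¹ * B) := by
        field_simp
    _ ≤ 4 ^ 5 * K ^ 6 * (pressureGradBound u v S R * lpS (fun x => ‖u x‖) 1 S) +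
          4 ^ 5 * K ^ 6 * (R⁻¹ * B) := by
        have hK6 : K ≤ K ^ 6 := le_self_pow₀ hK1 (by norm_num)
        gcongr
        norm_num
    _ = _ := by rw [← mul_add]

theorem exists_abs_integral_sum_mul_pd_mul_pressure_le {p s : ℝ} (hp1 : 3 / 2 < p) (hp2 : p < 3)
    (hs : 2 ≤ s) (hps : 1 < 1 / p + 2 / s) :
    ∃ C, 0 ≤ C ∧ ∀ {u v : R3 → R3} {pr θ φ : R3 → ℝ} {R ρ τ c l₁ l₂ : ℝ},
      IsSmoothTCM u v pr θ → 0 < R → 9 / 5 * R ≤ ρ → τ ≤ 2 * R →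
      IsCutoff φ ρ ((ρ + τ) / 2) c → 0 < l₁ → 0 < l₂ →
      |∫ x, (∑ j, u x j * pd φ j x) * pr x| ≤
        C * c * (R / (τ - ρ)) ^ 6 * pressureWork u v p s R (shell R τ) l₁ l₂ := by
  obtain ⟨C, hC0, hC⟩ := exists_abs_integral_mul_pressure_le hp1 hp2 hs hps
  refine ⟨12 * 4 ^ 5 * C, by positivity,
    fun {u v pr θ φ R ρ τ c l₁ l₂} h hR hρ hτ hφ hl₁ hl₂ => ?_⟩
  have hρτ : ρ < τ := by linarith [hφ.lt]
  have hD : 0 < τ - ρ := sub_pos.2 hρτ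
  have hc := hφ.const_nonneg
  have hu := h.contDiff_u.continuous
  have hcoef : 3 * (c / ((ρ + τ) / 2 - ρ)) = 6 * c * (τ - ρ)⁻¹ := by
    rw [show (ρ + τ) / 2 - ρ = (τ - ρ) / 2 by ring]
    field_simp
    ring
  have hψ₁ := lpS_sum_mul_pd_le hu hφ (isBounded_shell R τ) one_pos
  have hψp := lpS_sum_mul_pd_le hu hφ (isBounded_shell R τ) (q := p) (by linarith)
  rw [hcoef] at hψ₁ hψp
  have main := hC (R := R) (τ := τ) (σ := (ρ + τ) / 2) (T := (τ - ρ) / 4) h (by positivity)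
    (by linarith) (by linarith) (by linarith) (continuous_sum_mul_pd hu hφ.contDiff)
    ((support_sum_mul_pd_subset u hφ).trans
      (Set.sdiff_subset_sdiff_right (ball_subset_ball (by linarith : 3 / 2 * R ≤ ρ))))
    (h.integral_sum_mul_pd_eq_zero hφ.contDiff hφ.hasCompactSupport) hl₁ hl₂
  have hscale := pressureWork_scale_le (u := u) (v := v) (p := p) (s := s) (S := shell R τ) hR hρτ
    (by linarith) hl₁ hl₂
  have hP : 0 ≤ pressureGradBound u v (shell R τ) ((τ - ρ) / 4) :=
    pressureGradBound_nonneg (by positivity)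
  have hUp : 0 ≤ lpS (fun x => ‖u x‖) p (shell R τ) := lpS_nonneg
  have hB : 0 ≤ stressBound u p s (shell R τ) l₁ + stressBound v p s (shell R τ) l₂ :=
    add_nonneg (stressBound_nonneg hl₁) (stressBound_nonneg hl₂)
  set P := pressureGradBound u v (shell R τ) ((τ - ρ) / 4)
  set U₁ := lpS (fun x => ‖u x‖) 1 (shell R τ)
  set Up := lpS (fun x => ‖u x‖) p (shell R τ)
  set B := stressBound u p s (shell R τ) l₁ + stressBound v p s (shell R τ) l₂
  calc |∫ x, (∑ j, u x j * pd φ j x) * pr x|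
      ≤ C * (2 * R * P * (6 * c * (τ - ρ)⁻¹ * U₁) + 6 * c * (τ - ρ)⁻¹ * Up * (2 * B)) := by
        refine main.trans (mul_le_mul_of_nonneg_left (add_le_add ?_ ?_) hC0)
        · exact mul_le_mul (by gcongr; linarith) hψ₁ lpS_nonneg (by positivity)
        · exact mul_le_mul hψp (by linarith) hB (lpS_nonneg.trans hψp)
    _ = 12 * C * c * ((τ - ρ)⁻¹ * (R * P * U₁ + Up * B)) := by ring
    _ ≤ 12 * C * c * (4 ^ 5 * (R / (τ - ρ)) ^ 6 * pressureWork u v p s R (shell R τ) l₁ l₂) :=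
        mul_le_mul_of_nonneg_left hscale (by positivity)
    _ = _ := by ring

theorem exists_integral_gradSq_le_of_isCutoff {p s : ℝ} (hp1 : 3 / 2 < p) (hp2 : p < 3)
    (hs : 2 ≤ s) (hps : 1 < 1 / p + 2 / s) :
    ∃ C, 0 ≤ C ∧ ∀ {u v : R3 → R3} {pr θ φ : R3 → ℝ} {R ρ τ c l₁ l₂ : ℝ},
      IsSmoothTCM u v pr θ → 0 < R → 9 / 5 * R ≤ ρ → τ ≤ 2 * R →
      IsCutoff φ ρ ((ρ + τ) / 2) c → 0 < l₁ → 0 < l₂ →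
      ∫ x, φ x * ∑ k, gradSq (fields u v θ k) x ≤
        C * c * (R / (τ - ρ)) ^ 6 * caccioppoliBound u v θ p s R (shell R τ) l₁ l₂ := by
  obtain ⟨C, hC0, hC⟩ := exists_abs_integral_sum_mul_pd_mul_pressure_le hp1 hp2 hs hps
  refine ⟨12 + C, by positivity, fun {u v pr θ φ R ρ τ c l₁ l₂} h hR hρ hτ hφ hl₁ hl₂ => ?_⟩
  have hρτ : ρ < τ := by linarith [hφ.lt]
  have hD : 0 < τ - ρ := sub_pos.2 hρτ
  have hc := hφ.const_nonneg
  have hK1 : 1 ≤ R / (τ - ρ) := (one_le_div hD).2 (by linarith)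
  have hwidth : (ρ + τ) / 2 - ρ = (τ - ρ) / 2 := by ring
  have hcoef : c / ((ρ + τ) / 2 - ρ) = 2 * c * (R / (τ - ρ)) * R⁻¹ := by
    rw [hwidth]
    field_simp
  have hcoef2 : c / ((ρ + τ) / 2 - ρ) ^ 2 = 4 * c * (R / (τ - ρ)) ^ 2 * R⁻¹ ^ 2 := by
    rw [hwidth]
    field_simp
    norm_num
  have henergy := h.energy_inequality hφ (isBounded_shell R τ)
    (closedBall_diff_ball_subset_shell (by linarith) hρτ)
  rw [hcoef, hcoef2] at henergy
  have hpressure := hC h hR hρ hτ hφ hl₁ hl₂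
  set K := R / (τ - ρ)
  set A := ∑ k, lpS (fun x => ‖fields u v θ k x‖) 2 (shell R τ) ^ 2
  set F := ∫ x in shell R τ, fluxDensity u v θ x
  set P := pressureWork u v p s R (shell R τ) l₁ l₂
  have hF : 0 ≤ R⁻¹ * F :=
    mul_nonneg (inv_nonneg.2 hR.le) (integral_nonneg (fluxDensity_nonneg u v θ))
  have hP : 0 ≤ P := pressureWork_nonneg hR hl₁ hl₂
  have hK2 : K ^ 2 ≤ K ^ 6 := pow_le_pow_right₀ hK1 (by norm_num)
  have hK6 : K ≤ K ^ 6 := le_self_pow₀ hK1 (by norm_num)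
  calc ∫ x, φ x * ∑ k, gradSq (fields u v θ k) x
      ≤ 6 * c * K ^ 2 * (R⁻¹ ^ 2 * A) + 12 * c * K * (R⁻¹ * F) + C * c * K ^ 6 * P := by
        linarith
    _ ≤ (12 + C) * c * K ^ 6 * (R⁻¹ ^ 2 * A) + (12 + C) * c * K ^ 6 * (R⁻¹ * F) +
          (12 + C) * c * K ^ 6 * P := by
        gcongr <;> linarith
    _ = _ := by rw [← mul_add, ← mul_add]; rfl

theorem caccioppoliBound_nonneg {p s l₁ l₂ : ℝ} {S : Set R3} (hR : 0 < R) (hl₁ : 0 < l₁)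
    (hl₂ : 0 < l₂) : 0 ≤ caccioppoliBound u v θ p s R S l₁ l₂ :=
  add_nonneg (add_nonneg (by positivity) (mul_nonneg (inv_nonneg.2 hR.le)
    (integral_nonneg (fluxDensity_nonneg u v θ)))) (pressureWork_nonneg hR hl₁ hl₂)

theorem sum_lpS_two_sq_le_caccioppoliBound {p s l₁ l₂ : ℝ} {S : Set R3} (hR : 0 < R)
    (hl₁ : 0 < l₁) (hl₂ : 0 < l₂) :
    R⁻¹ ^ 2 * (∑ k, lpS (fun x => ‖fields u v θ k x‖) 2 S ^ 2) ≤
      caccioppoliBound u v θ p s R S l₁ l₂ := by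
  unfold caccioppoliBound
  rw [add_assoc]
  exact le_add_of_nonneg_right (add_nonneg (mul_nonneg (inv_nonneg.2 hR.le)
    (integral_nonneg (fluxDensity_nonneg u v θ))) (pressureWork_nonneg hR hl₁ hl₂))

theorem exists_localEnergy_le_of_isCutoff : ∃ C, 0 ≤ C ∧ ∀ {W : Fin 3 → R3 → R3} {η : R3 → ℝ}
    {ρ σ c : ℝ} {S : Set R3}, IsCutoff η ρ σ c → (∀ k, ContDiff ℝ ∞ (W k)) →
    Bornology.IsBounded S → closedBall 0 σ \ ball 0 ρ ⊆ S →
    localEnergy W (ball 0 ρ) ≤ C * ((∫ x, η x ^ 2 * ∑ k, gradSq (W k) x) +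
      (c / (σ - ρ)) ^ 2 * ∑ k, lpS (fun x => ‖W k x‖) 2 S ^ 2) := by
  obtain ⟨C, hC0, hC⟩ := exists_lpS_six_sq_le_of_isCutoff
  refine ⟨1 + C, by positivity, fun {W η ρ σ c S} hη hW hS hσS => ?_⟩
  have hint (k : Fin 3) : Integrable fun x => η x ^ 2 * gradSq (W k) x :=
    integrable_mul_of_hasCompactSupport (hη.contDiff.continuous.pow 2) hη.sq.hasCompactSupport
      (continuous_gradSq (hW k))
  have hsum : ∫ x, η x ^ 2 * ∑ k, gradSq (W k) x = ∑ k, ∫ x, η x ^ 2 * gradSq (W k) x := by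
    rw [← integral_finsetSum _ fun k _ => hint k]
    simp only [Finset.mul_sum]
  have hgrad (k : Fin 3) : ∫ x in ball 0 ρ, gradSq (W k) x ≤ ∫ x, η x ^ 2 * gradSq (W k) x := by
    rw [setIntegral_congr_fun measurableSet_ball (g := fun x => η x ^ 2 * gradSq (W k) x)
      fun x hx => by simp [hη.eq_one x (mem_ball_zero_iff.1 hx).le]]
    exact setIntegral_le_integral (hint k)
      (ae_of_all _ fun x => mul_nonneg (sq_nonneg _) (gradSq_nonneg _ x))
  rw [hsum, Finset.mul_sum, ← Finset.sum_add_distrib, Finset.mul_sum]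
  refine Finset.sum_le_sum fun k _ => ?_
  have hcut : 0 ≤ (c / (σ - ρ)) ^ 2 * lpS (fun x => ‖W k x‖) 2 S ^ 2 := by positivity
  linarith [hgrad k, hC hη (hW k) hS hσS]

theorem exists_localEnergy_ball_le_caccioppoliBound {p s : ℝ} (hp1 : 3 / 2 < p) (hp2 : p < 3)
    (hs : 2 ≤ s) (hps : 1 < 1 / p + 2 / s) :
    ∃ C, 0 ≤ C ∧ ∀ {u v : R3 → R3} {pr θ : R3 → ℝ} {R ρ τ l₁ l₂ : ℝ},
      IsSmoothTCM u v pr θ → 0 < R → 9 / 5 * R ≤ ρ → ρ < τ → τ ≤ 2 * R → 0 < l₁ → 0 < l₂ →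
      localEnergy (fields u v θ) (ball 0 ρ) ≤
        C * ((R / (τ - ρ)) ^ 6 * caccioppoliBound u v θ p s R (shell R τ) l₁ l₂) := by
  obtain ⟨c, hc, hcut⟩ := exists_isCutoff_radialCutoff
  obtain ⟨C₁, hC₁0, hC₁⟩ := exists_localEnergy_le_of_isCutoff
  obtain ⟨C₂, hC₂0, hC₂⟩ := exists_integral_gradSq_le_of_isCutoff hp1 hp2 hs hps
  refine ⟨C₁ * (C₂ * (2 * c ^ 2 + 2 * c) + 4 * c ^ 2), by positivity,
    fun {u v pr θ R ρ τ l₁ l₂} h hR hρ hρτ hτ hl₁ hl₂ => ?_⟩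
  have hη := hcut ρ ((ρ + τ) / 2) (by linarith) (by linarith)
  have hD : 0 < τ - ρ := sub_pos.2 hρτ
  have hK1 : 1 ≤ R / (τ - ρ) := (one_le_div hD).2 (by linarith)
  have hcoef : (c / ((ρ + τ) / 2 - ρ)) ^ 2 = 4 * c ^ 2 * (R / (τ - ρ)) ^ 2 * R⁻¹ ^ 2 := by
    rw [show (ρ + τ) / 2 - ρ = (τ - ρ) / 2 by ring]
    field_simp
    norm_num
  have hlocal := hC₁ hη h.contDiff_field (isBounded_shell R τ)
    (closedBall_diff_ball_subset_shell (by linarith) hρτ)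
  have henergy := hC₂ h hR hρ hτ hη.sq hl₁ hl₂
  have hlow := sum_lpS_two_sq_le_caccioppoliBound (u := u) (v := v) (θ := θ) (p := p) (s := s)
    (S := shell R τ) hR hl₁ hl₂
  have hB := caccioppoliBound_nonneg (u := u) (v := v) (θ := θ) (p := p) (s := s)
    (S := shell R τ) hR hl₁ hl₂
  rw [hcoef, mul_assoc _ (R⁻¹ ^ 2)] at hlocal
  set K := R / (τ - ρ)
  set B := caccioppoliBound u v θ p s R (shell R τ) l₁ l₂
  calc localEnergy (fields u v θ) (ball 0 ρ)
      ≤ C₁ * (C₂ * (2 * c ^ 2 + 2 * c) * K ^ 6 * B + 4 * c ^ 2 * K ^ 2 * B) :=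
        hlocal.trans (by gcongr)
    _ ≤ C₁ * (C₂ * (2 * c ^ 2 + 2 * c) * K ^ 6 * B + 4 * c ^ 2 * K ^ 6 * B) := by
        have hK6 : K ^ 2 ≤ K ^ 6 := pow_le_pow_right₀ hK1 (by norm_num)
        gcongr
    _ = _ := by ring

end Caccioppoli

/-! ### Interpolation and growth exponents -/

/-- The power `λ` with which a growth bound for `‖w‖_{L^q}` enters the estimate
`‖w‖_{L^{2p'}} ≤ ‖w‖_{L^q}^λ ‖w‖_{L⁶}^{1-λ}`. -/
def interpExponent (p q : ℝ) : ℝ := (2 * p - 3) * q / (p * (6 - q))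

/-- Integrability exponent `q` and growth rate `β` of a field such that, when the velocity grows
at the rate `α` in `L^p`, the fluxes across the shells are sublinear in the energy, uniformly in
the radius. -/
structure IsAdmissible (p α q β : ℝ) : Prop where
  pos : 0 < q
  lt_two_mul_conj : q < 2 * (p / (p - 1))
  rate_le_one : α + 2 * interpExponent p q * β ≤ 1
  rate_le : β ≤ 3 / q - 1 / 2

section Exponents

variable {p q s α β : ℝ}

theorem two_mul_conj_lt_six (hp1 : 3 / 2 < p) : 2 * (p / (p - 1)) < 6 := by
  rw [← mul_div_assoc, div_lt_iff₀ (by linarith)]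
  linarith

theorem interpExponent_pos (hp1 : 3 / 2 < p) (hq : 0 < q) (hq6 : q < 6) :
    0 < interpExponent p q :=
  div_pos (mul_pos (by linarith) hq) (mul_pos (by linarith) (by linarith))

theorem interpExponent_lt_one (hp1 : 3 / 2 < p) (hq : q < 2 * (p / (p - 1))) :
    interpExponent p q < 1 := by
  have hq6 := hq.trans (two_mul_conj_lt_six hp1)
  rw [← mul_div_assoc, lt_div_iff₀ (by linarith)] at hq
  rw [interpExponent, div_lt_one (mul_pos (by linarith) (by linarith))]
  linarith

theorem interpExponent_eq_interpolation_weight (hp1 : 3 / 2 < p) :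
    q * (6 - 2 * (p / (p - 1))) / (2 * (p / (p - 1)) * (6 - q)) = interpExponent p q := by
  have hp : p ≠ 0 := by linarith
  have hp' : p - 1 ≠ 0 := by linarith
  rcases eq_or_ne q 6 with rfl | hq
  · simp [interpExponent]
  have hq' : 6 - q ≠ 0 := sub_ne_zero.2 hq.symm
  rw [interpExponent]
  field_simp
  ring

theorem one_lt_one_div_add_two_div (hp1 : 3 / 2 < p) (hs : 0 < s) (h : s < 2 * (p / (p - 1))) :
    1 < 1 / p + 2 / s := by
  have hp : 0 < p := by linarith
  rw [← mul_div_assoc, lt_div_iff₀ (by linarith)] at h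
  rw [div_add_div _ _ hp.ne' hs.ne', one_lt_div (mul_pos hp hs)]
  linarith

theorem isAdmissible_self (hp1 : 3 / 2 < p) (hp2 : p < 3) (hα : α ≤ 2 / p - 1 / 3) :
    IsAdmissible p α p α where
  pos := by linarith
  lt_two_mul_conj := by
    rw [← mul_div_assoc, lt_div_iff₀ (by linarith)]
    nlinarith
  rate_le_one := by
    have hp6 : 0 < 6 - p := by linarith
    calc α + 2 * interpExponent p p * α = 3 * p / (6 - p) * α := by
          rw [interpExponent]
          field_simp
          ring
      _ ≤ 3 * p / (6 - p) * (2 / p - 1 / 3) := by gcongr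
      _ = 1 := by field_simp; ring
  rate_le := by
    have : 1 / 3 ≤ 1 / p := one_div_le_one_div_of_le (by linarith) hp2.le
    linear_combination hα + this

theorem IsAdmissible.lt_six (h : IsAdmissible p α q β) (hp1 : 3 / 2 < p) : q < 6 :=
  h.lt_two_mul_conj.trans (two_mul_conj_lt_six hp1)

theorem IsAdmissible.interpExponent_pos (h : IsAdmissible p α q β) (hp1 : 3 / 2 < p) :
    0 < interpExponent p q :=
  _root_.interpExponent_pos hp1 h.pos (h.lt_six hp1)

theorem IsAdmissible.two_mul_interpExponent_mul_le (h : IsAdmissible p α q β) (hp1 : 3 / 2 < p) :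
    2 * interpExponent p q * β ≤ 2 - 3 / p := by
  have hq := h.pos
  have hq6 : 0 < 6 - q := by linarith [h.lt_six hp1]
  have hweight := h.interpExponent_pos hp1
  calc 2 * interpExponent p q * β ≤ 2 * interpExponent p q * (3 / q - 1 / 2) := by
        gcongr
        exact h.rate_le
    _ = 2 - 3 / p := by
        rw [interpExponent]
        field_simp
        ring

end Exponents

section Interpolation

variable {w : R3 → R3} {S : Set R3} {p q s M H : ℝ}

/-- The interpolated bound for `‖w‖²_{L^{2p'}}` when `‖w‖_{L^q} ≤ M` and `‖w‖²_{L⁶} ≤ H`. -/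
def interpBound (p q M H : ℝ) : ℝ := M ^ (2 * interpExponent p q) * H ^ (1 - interpExponent p q)

theorem interpBound_nonneg (hM : 0 ≤ M) (hH : 0 ≤ H) : 0 ≤ interpBound p q M H := by
  unfold interpBound
  positivity

theorem lpS_norm_sq_le_of_interpolation (hw : Continuous w) (hS : Bornology.IsBounded S)
    (hq : 0 < q) (hq6 : q < 6) (hqs : q ≤ s) (hs6 : s ≤ 6)
    (hM : lpS (fun x => ‖w x‖) q S ≤ M) (hH : lpS (fun x => ‖w x‖) 6 S ^ 2 ≤ H) :
    lpS (fun x => ‖w x‖) s S ^ 2 ≤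
      M ^ (2 * (q * (6 - s) / (s * (6 - q)))) * H ^ (1 - q * (6 - s) / (s * (6 - q))) := by
  have hs : 0 < s := hq.trans_le hqs
  have hd : 0 < 6 - q := sub_pos.2 hq6
  have hM0 : 0 ≤ M := lpS_nonneg.trans hM
  have hsum : 6 * (s - q) / (s * (6 - q)) = 1 - q * (6 - s) / (s * (6 - q)) := by
    field_simp
    ring
  have hsq : ∀ {a : ℝ} (t : ℝ), 0 ≤ a → (a ^ t) ^ 2 = (a ^ 2) ^ t := fun t ha => by
    rw [← Real.rpow_mul_natCast ha, mul_comm, Real.rpow_natCast_mul ha]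
  calc lpS (fun x => ‖w x‖) s S ^ 2
      ≤ (lpS (fun x => ‖w x‖) q S ^ (q * (6 - s) / (s * (6 - q))) *
          lpS (fun x => ‖w x‖) 6 S ^ (6 * (s - q) / (s * (6 - q)))) ^ 2 :=
        pow_le_pow_left₀ lpS_nonneg (lpS_interpolation hS hw.norm hq hq6 hqs hs6) 2
    _ = (lpS (fun x => ‖w x‖) q S ^ 2) ^ (q * (6 - s) / (s * (6 - q))) *
          (lpS (fun x => ‖w x‖) 6 S ^ 2) ^ (6 * (s - q) / (s * (6 - q))) := by
        rw [mul_pow, hsq _ lpS_nonneg, hsq _ lpS_nonneg]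
    _ ≤ (M ^ 2) ^ (q * (6 - s) / (s * (6 - q))) * H ^ (6 * (s - q) / (s * (6 - q))) := by
        have := lpS_nonneg (f := fun x => ‖w x‖) (p := q) (S := S)
        gcongr
    _ = _ := by rw [hsum, ← Real.rpow_natCast_mul hM0, Nat.cast_ofNat]

theorem lpS_two_mul_conj_sq_le_interpBound (hw : Continuous w) (hS : Bornology.IsBounded S)
    (hp1 : 3 / 2 < p) (hq : 0 < q) (hqp : q < 2 * (p / (p - 1)))
    (hM : lpS (fun x => ‖w x‖) q S ≤ M) (hH : lpS (fun x => ‖w x‖) 6 S ^ 2 ≤ H) :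
    lpS (fun x => ‖w x‖) (2 * (p / (p - 1))) S ^ 2 ≤ interpBound p q M H := by
  have h6 := two_mul_conj_lt_six hp1
  have key := lpS_norm_sq_le_of_interpolation hw hS hq (hqp.trans h6) hqp.le h6.le hM hH
  rwa [interpExponent_eq_interpolation_weight hp1] at key

-- The scale `l` balances the two contributions to `stressBound`.
theorem exists_stressBound_le_interpBound (hw : Continuous w) (hS : Bornology.IsBounded S)
    (hp : 0 < p) (hq : 0 < q) (hq6 : q < 6) (hqs : q ≤ s) (hs6 : s ≤ 6) (hM0 : 0 < M)
    (hH0 : 0 < H) (hM : lpS (fun x => ‖w x‖) q S ≤ M) (hH : lpS (fun x => ‖w x‖) 6 S ^ 2 ≤ H)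
    (hgrad : lpS (fun x => ‖w x‖ * √(gradSq w x)) (3 / 2) S ≤ H) :
    ∃ l, 0 < l ∧ stressBound w p s S l ≤ 2 * interpBound p q M H := by
  have hs : 0 < s := hq.trans_le hqs
  have hd : 0 < 6 - q := sub_pos.2 hq6
  have hpow : ∀ t : ℝ, ((M ^ 2 / H) ^ (q / (6 - q))) ^ t =
      M ^ (2 * (q / (6 - q) * t)) * H ^ (-(q / (6 - q) * t)) := fun t => by
    rw [← Real.rpow_mul (by positivity), Real.div_rpow (by positivity) hH0.le,
      ← Real.rpow_natCast_mul hM0.le, Real.rpow_neg hH0.le, div_eq_mul_inv, Nat.cast_ofNat]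
  have hnear : H * ((M ^ 2 / H) ^ (q / (6 - q))) ^ (2 - 3 / p) = interpBound p q M H := by
    have he : q / (6 - q) * (2 - 3 / p) = interpExponent p q := by
      rw [interpExponent]
      field_simp
    rw [hpow, he, interpBound, sub_eq_add_neg, Real.rpow_add hH0, Real.rpow_one]
    ring
  have hfar : M ^ (2 * (q * (6 - s) / (s * (6 - q)))) * H ^ (1 - q * (6 - s) / (s * (6 - q))) *
      ((M ^ 2 / H) ^ (q / (6 - q))) ^ (-(3 / p + 6 / s - 3)) = interpBound p q M H := by
    rw [hpow, mul_mul_mul_comm, ← Real.rpow_add hM0, ← Real.rpow_add hH0, interpBound,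
      interpExponent]
    congr 2 <;> field_simp <;> ring
  refine ⟨(M ^ 2 / H) ^ (q / (6 - q)), by positivity, ?_⟩
  rw [two_mul, stressBound]
  refine add_le_add (le_of_le_of_eq ?_ hnear) (le_of_le_of_eq ?_ hfar)
  · gcongr
  · gcongr
    exact lpS_norm_sq_le_of_interpolation hw hS hq hq6 hqs hs6 hM hH

theorem IsAdmissible.rpow_mul_interpBound_le {α β A R t : ℝ} (h : IsAdmissible p α q β)
    (hp1 : 3 / 2 < p) (hA : 1 ≤ A) (hR : 1 ≤ R) (hH : 0 ≤ H)
    (ht : t + 2 * interpExponent p q * β ≤ 0) :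
    R ^ t * interpBound p q (A * R ^ β) H ≤ A ^ 2 * H ^ (1 - interpExponent p q) := by
  have hR0 : 0 < R := zero_lt_one.trans_le hR
  have hA0 : 0 < A := zero_lt_one.trans_le hA
  have hA2 : A ^ (2 * interpExponent p q) ≤ A ^ 2 := by
    rw [← Real.rpow_natCast]
    exact Real.rpow_le_rpow_of_exponent_le hA
      (by push_cast; linarith [interpExponent_lt_one hp1 h.lt_two_mul_conj])
  calc R ^ t * interpBound p q (A * R ^ β) H
      = A ^ (2 * interpExponent p q) * R ^ (t + 2 * interpExponent p q * β) *
          H ^ (1 - interpExponent p q) := by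
        rw [interpBound, Real.mul_rpow hA0.le (by positivity), ← Real.rpow_mul hR0.le,
          Real.rpow_add hR0, mul_comm β]
        ring
    _ ≤ A ^ 2 * 1 * H ^ (1 - interpExponent p q) := by
        gcongr
        exact Real.rpow_le_one_of_one_le_of_nonpos hR ht
    _ = _ := by rw [mul_one]

end Interpolation

section ShellVolume

variable {f : R3 → ℝ} {q s R τ : ℝ}

/-- A constant `V ≥ 1` with `|shell R τ| ≤ V R³` whenever `τ ≤ 2R`. -/
def shellConst : ℝ := 8 * volume.real (ball (0 : R3) 1) + 1

theorem one_le_shellConst : 1 ≤ shellConst :=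
  le_add_of_nonneg_left (mul_nonneg (by norm_num) measureReal_nonneg)

theorem shell_subset_annulus (hτ : τ ≤ 2 * R) : shell R τ ⊆ annulus R :=
  Set.sdiff_subset_sdiff_left (ball_subset_ball hτ)

theorem volume_real_shell_le (hR : 0 < R) (hτ : τ ≤ 2 * R) :
    volume.real (shell R τ) ≤ shellConst * R ^ 3 := by
  calc volume.real (shell R τ) ≤ volume.real (ball (0 : R3) (2 * R)) :=
        measureReal_mono (Set.sdiff_subset.trans (ball_subset_ball hτ)) measure_ball_lt_top.ne
    _ = 8 * volume.real (ball (0 : R3) 1) * R ^ 3 := by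
        rw [Measure.real, Measure.addHaar_ball _ _ (by positivity), ENNReal.toReal_mul,
          ENNReal.toReal_ofReal (by positivity), finrank_euclideanSpace_fin, Measure.real]
        ring
    _ ≤ shellConst * R ^ 3 := by
        gcongr
        exact le_add_of_nonneg_right zero_le_one

theorem lpS_shell_le (hf : Continuous f) (hs : 1 ≤ s) (hsq : s ≤ q) (hR : 0 < R)
    (hτ : τ ≤ 2 * R) :
    lpS f s (shell R τ) ≤ shellConst * R ^ (3 / s - 3 / q) * lpS f q (shell R τ) := by
  have hs0 : 0 < s := zero_lt_one.trans_le hs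
  have hV := one_le_shellConst
  have ht : 0 ≤ 1 / s - 1 / q := sub_nonneg.2 (one_div_le_one_div_of_le hs0 hsq)
  have ht1 : 1 / s - 1 / q ≤ 1 :=
    (sub_le_self _ (one_div_nonneg.2 (hs0.le.trans hsq))).trans ((div_le_one hs0).2 hs)
  have hvol : volume.real (shell R τ) ^ (1 / s - 1 / q) ≤ shellConst * R ^ (3 / s - 3 / q) := by
    calc volume.real (shell R τ) ^ (1 / s - 1 / q)
        ≤ (shellConst * R ^ 3) ^ (1 / s - 1 / q) :=
          Real.rpow_le_rpow measureReal_nonneg (volume_real_shell_le hR hτ) ht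
      _ = shellConst ^ (1 / s - 1 / q) * R ^ (3 / s - 3 / q) := by
          rw [Real.mul_rpow (by positivity) (by positivity), ← Real.rpow_natCast_mul hR.le]
          congr 2
          push_cast
          ring
      _ ≤ shellConst * R ^ (3 / s - 3 / q) := by
          gcongr
          exact Real.rpow_le_self_of_one_le hV ht1
  calc lpS f s (shell R τ)
      ≤ lpS f q (shell R τ) * volume.real (shell R τ) ^ (1 / s - 1 / q) :=
        lpS_le_lpS_mul_volume_rpow (isBounded_shell R τ) hf hs0 hsq
    _ ≤ lpS f q (shell R τ) * (shellConst * R ^ (3 / s - 3 / q)) :=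
        mul_le_mul_of_nonneg_left hvol lpS_nonneg
    _ = _ := mul_comm _ _

end ShellVolume

section GrowthOfFluxes

variable {u w : R3 → R3} {p q s r α β γ A R τ H : ℝ}

theorem IsAdmissible.lpS_two_sq_le (h : IsAdmissible p α q β) (hp1 : 3 / 2 < p) (hR : 0 < R)
    (hτ : τ ≤ 2 * R) (hw : Continuous w)
    (hq : lpS (fun x => ‖w x‖) q (shell R τ) ≤ A * R ^ β)
    (hH : lpS (fun x => ‖w x‖) 6 (shell R τ) ^ 2 ≤ H) :
    lpS (fun x => ‖w x‖) 2 (shell R τ) ^ 2 ≤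
      shellConst ^ 2 * (R ^ (3 / p) * interpBound p q (A * R ^ β) H) := by
  have hp' : 0 < p - 1 := by linarith
  have hV := one_le_shellConst
  have hexp : 3 / 2 - 3 / (2 * (p / (p - 1))) = 3 / p / 2 := by
    field_simp
    ring
  have hconj : 2 ≤ 2 * (p / (p - 1)) := by
    have : 1 ≤ p / (p - 1) := (one_le_div hp').2 (by linarith)
    linarith
  have hlow := lpS_shell_le hw.norm one_le_two hconj hR hτ
  rw [hexp] at hlow
  calc lpS (fun x => ‖w x‖) 2 (shell R τ) ^ 2
      ≤ (shellConst * R ^ (3 / p / 2) *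
          lpS (fun x => ‖w x‖) (2 * (p / (p - 1))) (shell R τ)) ^ 2 :=
        pow_le_pow_left₀ lpS_nonneg hlow 2
    _ = shellConst ^ 2 * (R ^ (3 / p) *
          lpS (fun x => ‖w x‖) (2 * (p / (p - 1))) (shell R τ) ^ 2) := by
        rw [mul_pow, mul_pow, ← Real.rpow_mul_natCast hR.le, Nat.cast_ofNat,
          div_mul_cancel₀ _ two_ne_zero, mul_assoc]
    _ ≤ _ := by
        gcongr
        exact lpS_two_mul_conj_sq_le_interpBound hw (isBounded_shell R τ) hp1 h.pos
          h.lt_two_mul_conj hq hH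

theorem IsAdmissible.diffusion_le (h : IsAdmissible p α q β) (hp1 : 3 / 2 < p) (hA : 1 ≤ A)
    (hR : 1 ≤ R) (hτ : τ ≤ 2 * R) (hw : Continuous w)
    (hq : lpS (fun x => ‖w x‖) q (shell R τ) ≤ A * R ^ β)
    (hH : lpS (fun x => ‖w x‖) 6 (shell R τ) ^ 2 ≤ H) :
    R⁻¹ ^ 2 * lpS (fun x => ‖w x‖) 2 (shell R τ) ^ 2 ≤
      shellConst ^ 2 * A ^ 2 * H ^ (1 - interpExponent p q) := by
  have hR0 : 0 < R := zero_lt_one.trans_le hR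
  have hrate := h.two_mul_interpExponent_mul_le hp1
  calc R⁻¹ ^ 2 * lpS (fun x => ‖w x‖) 2 (shell R τ) ^ 2
      ≤ R⁻¹ ^ 2 * (shellConst ^ 2 * (R ^ (3 / p) * interpBound p q (A * R ^ β) H)) := by
        gcongr
        exact h.lpS_two_sq_le hp1 hR0 hτ hw hq hH
    _ = shellConst ^ 2 * (R ^ (3 / p - 2) * interpBound p q (A * R ^ β) H) := by
        rw [Real.rpow_sub hR0, Real.rpow_two]
        field_simp
    _ ≤ shellConst ^ 2 * (A ^ 2 * H ^ (1 - interpExponent p q)) :=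
        mul_le_mul_of_nonneg_left (h.rpow_mul_interpBound_le (t := 3 / p - 2) hp1 hA hR
          ((sq_nonneg _).trans hH) (by linarith)) (by positivity)
    _ = _ := by ring

theorem IsAdmissible.inv_mul_interpBound_le (h : IsAdmissible p α q β) (hp1 : 3 / 2 < p)
    (hA : 1 ≤ A) (hR : 1 ≤ R) (hH : 0 ≤ H) :
    R⁻¹ * (A * R ^ α * interpBound p q (A * R ^ β) H) ≤
      A ^ 3 * H ^ (1 - interpExponent p q) := by
  have hR0 : 0 < R := zero_lt_one.trans_le hR
  calc R⁻¹ * (A * R ^ α * interpBound p q (A * R ^ β) H)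
      = A * (R ^ (α - 1) * interpBound p q (A * R ^ β) H) := by
        rw [Real.rpow_sub_one hR0.ne']
        ring
    _ ≤ A * (A ^ 2 * H ^ (1 - interpExponent p q)) :=
        mul_le_mul_of_nonneg_left (h.rpow_mul_interpBound_le (t := α - 1) hp1 hA hR hH
          (by linarith [h.rate_le_one])) (zero_le_one.trans hA)
    _ = _ := by ring

theorem IsAdmissible.convection_le (h : IsAdmissible p α q β) (hp1 : 3 / 2 < p) (hA : 1 ≤ A)
    (hR : 1 ≤ R) (hu : Continuous u) (hw : Continuous w)
    (hup : lpS (fun x => ‖u x‖) p (shell R τ) ≤ A * R ^ α)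
    (hq : lpS (fun x => ‖w x‖) q (shell R τ) ≤ A * R ^ β)
    (hH : lpS (fun x => ‖w x‖) 6 (shell R τ) ^ 2 ≤ H) :
    R⁻¹ * ∫ x in shell R τ, ‖w x‖ ^ 2 * ‖u x‖ ≤ A ^ 3 * H ^ (1 - interpExponent p q) := by
  have hp : 0 < p := by linarith
  have hp' : 0 < p - 1 := by linarith
  have hHolder := integral_abs_mul_le_lpS_mul_lpS (p := p / (p - 1)) (q := p)
    (isBounded_shell R τ) (hw.norm.fun_pow 2) hu.norm (by positivity) hp (by field_simp; ring)
  have hsq := lpS_sq (f := fun x => ‖w x‖) (S := shell R τ) (2 * (p / (p - 1)))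
  rw [mul_div_cancel_left₀ _ two_ne_zero] at hsq
  rw [hsq] at hHolder
  have hinterp := lpS_two_mul_conj_sq_le_interpBound hw (isBounded_shell R τ) hp1 h.pos
    h.lt_two_mul_conj hq hH
  refine le_trans ?_ (h.inv_mul_interpBound_le hp1 hA hR ((sq_nonneg _).trans hH))
  gcongr
  calc ∫ x in shell R τ, ‖w x‖ ^ 2 * ‖u x‖ = ∫ x in shell R τ, |‖w x‖ ^ 2 * ‖u x‖| := by
        simp only [abs_mul, abs_pow, abs_norm]
    _ ≤ interpBound p q (A * R ^ β) H * (A * R ^ α) :=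
        hHolder.trans (mul_le_mul hinterp hup lpS_nonneg ((sq_nonneg _).trans hinterp))
    _ = _ := mul_comm _ _

theorem IsAdmissible.far_pressure_le (h : IsAdmissible p α q β) (hp1 : 3 / 2 < p) (hA : 1 ≤ A)
    (hR : 1 ≤ R) (hτ : τ ≤ 2 * R) (hu : Continuous u) (hw : Continuous w)
    (hup : lpS (fun x => ‖u x‖) p (shell R τ) ≤ A * R ^ α)
    (hq : lpS (fun x => ‖w x‖) q (shell R τ) ≤ A * R ^ β)
    (hH : lpS (fun x => ‖w x‖) 6 (shell R τ) ^ 2 ≤ H) :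
    R⁻¹ ^ 4 * lpS (fun x => ‖w x‖) 2 (shell R τ) ^ 2 * lpS (fun x => ‖u x‖) 1 (shell R τ) ≤
      shellConst ^ 3 * A ^ 3 * H ^ (1 - interpExponent p q) := by
  have hR0 : 0 < R := zero_lt_one.trans_le hR
  have hV := one_le_shellConst
  have hN : 0 ≤ interpBound p q (A * R ^ β) H :=
    interpBound_nonneg (by positivity) ((sq_nonneg _).trans hH)
  calc R⁻¹ ^ 4 * lpS (fun x => ‖w x‖) 2 (shell R τ) ^ 2 * lpS (fun x => ‖u x‖) 1 (shell R τ)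
      ≤ R⁻¹ ^ 4 * (shellConst ^ 2 * (R ^ (3 / p) * interpBound p q (A * R ^ β) H)) *
          (shellConst * R ^ (3 / 1 - 3 / p) * (A * R ^ α)) := by
        gcongr
        · exact lpS_nonneg
        · exact h.lpS_two_sq_le hp1 hR0 hτ hw hq hH
        · exact (lpS_shell_le (q := p) hu.norm le_rfl (by linarith) hR0 hτ).trans (by gcongr)
    _ = shellConst ^ 3 * (R⁻¹ * (A * R ^ α * interpBound p q (A * R ^ β) H)) := by
        have : R ^ (3 / 1 - 3 / p) = R ^ 3 / R ^ (3 / p) := by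
          rw [Real.rpow_sub hR0, div_one, ← Real.rpow_natCast, Nat.cast_ofNat]
        rw [this]
        field_simp
    _ ≤ shellConst ^ 3 * (A ^ 3 * H ^ (1 - interpExponent p q)) :=
        mul_le_mul_of_nonneg_left
          (h.inv_mul_interpBound_le hp1 hA hR ((sq_nonneg _).trans hH)) (by positivity)
    _ = _ := by ring

theorem IsAdmissible.exists_stressBound_le (h : IsAdmissible p α q β) (hp1 : 3 / 2 < p)
    (hA : 1 ≤ A) (hR : 1 ≤ R) (hH0 : 0 < H) (hqs : q ≤ s) (hs6 : s ≤ 6) (hw : Continuous w)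
    (hup : lpS (fun x => ‖u x‖) p (shell R τ) ≤ A * R ^ α)
    (hq : lpS (fun x => ‖w x‖) q (shell R τ) ≤ A * R ^ β)
    (hH : lpS (fun x => ‖w x‖) 6 (shell R τ) ^ 2 ≤ H)
    (hgrad : lpS (fun x => ‖w x‖ * √(gradSq w x)) (3 / 2) (shell R τ) ≤ H) :
    ∃ l, 0 < l ∧ R⁻¹ * (lpS (fun x => ‖u x‖) p (shell R τ) * stressBound w p s (shell R τ) l) ≤
      2 * A ^ 3 * H ^ (1 - interpExponent p q) := by
  obtain ⟨l, hl, hstress⟩ := exists_stressBound_le_interpBound (M := A * R ^ β) hw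
    (isBounded_shell R τ) (by linarith : 0 < p) h.pos (h.lt_six hp1) hqs hs6 (by positivity) hH0
    hq hH hgrad
  refine ⟨l, hl, ?_⟩
  calc R⁻¹ * (lpS (fun x => ‖u x‖) p (shell R τ) * stressBound w p s (shell R τ) l)
      ≤ R⁻¹ * (A * R ^ α * (2 * interpBound p q (A * R ^ β) H)) := by
        gcongr
        exact stressBound_nonneg hl
    _ = 2 * (R⁻¹ * (A * R ^ α * interpBound p q (A * R ^ β) H)) := by ring
    _ ≤ 2 * (A ^ 3 * H ^ (1 - interpExponent p q)) :=
        mul_le_mul_of_nonneg_left (h.inv_mul_interpBound_le hp1 hA hR hH0.le) zero_le_two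
    _ = _ := by ring

theorem lpS_one_sq_scale_le (hR : 0 < R) (hτ : τ ≤ 2 * R) (hw : Continuous w) :
    R⁻¹ ^ 5 * lpS (fun x => ‖w x‖) 1 (shell R τ) ^ 2 ≤
      shellConst ^ 2 * (R⁻¹ ^ 2 * lpS (fun x => ‖w x‖) 2 (shell R τ) ^ 2) := by
  calc R⁻¹ ^ 5 * lpS (fun x => ‖w x‖) 1 (shell R τ) ^ 2
      ≤ R⁻¹ ^ 5 * (shellConst * R ^ ((3 : ℝ) / 1 - 3 / 2) *
          lpS (fun x => ‖w x‖) 2 (shell R τ)) ^ 2 := by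
        gcongr
        · exact lpS_nonneg
        · exact lpS_shell_le hw.norm le_rfl one_le_two hR hτ
    _ = _ := by
        have : (R ^ ((3 : ℝ) / 1 - 3 / 2)) ^ 2 = R ^ 3 := by
          rw [← Real.rpow_mul_natCast hR.le, ← Real.rpow_natCast]
          norm_num
        rw [mul_pow, mul_pow, this]
        field_simp

theorem coupling_le {f g : R3 → ℝ} (hf : Continuous f) (hg : Continuous g) (hq : 2 ≤ q)
    (hr : 2 ≤ r) (hA : 0 ≤ A) (hR : 0 < R) (hτ : τ ≤ 2 * R)
    (hfq : lpS f q (shell R τ) ≤ A * R ^ β) (hgr : lpS g r (shell R τ) ≤ A * R ^ γ) :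
    R⁻¹ * ∫ x in shell R τ, |f x * g x| ≤
      (shellConst * A) ^ 2 * R ^ (-(3 / q + 3 / r - 2 - (β + γ))) := by
  have hV := one_le_shellConst
  calc R⁻¹ * ∫ x in shell R τ, |f x * g x|
      ≤ R⁻¹ * (lpS f 2 (shell R τ) * lpS g 2 (shell R τ)) := by
        gcongr
        exact integral_abs_mul_le_lpS_mul_lpS (isBounded_shell R τ) hf hg two_pos two_pos
          (by norm_num)
    _ ≤ R⁻¹ * ((shellConst * R ^ (3 / 2 - 3 / q) * (A * R ^ β)) *
          (shellConst * R ^ (3 / 2 - 3 / r) * (A * R ^ γ))) := by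
        gcongr
        · exact lpS_nonneg
        · exact (lpS_shell_le hf one_le_two hq hR hτ).trans (by gcongr)
        · exact (lpS_shell_le hg one_le_two hr hR hτ).trans (by gcongr)
    _ = (shellConst * A) ^ 2 *
          (R ^ (-1 : ℝ) * R ^ (3 / 2 - 3 / q) * R ^ β * R ^ (3 / 2 - 3 / r) * R ^ γ) := by
        rw [Real.rpow_neg_one]
        ring
    _ = _ := by
        simp only [← Real.rpow_add hR]
        ring_nf

end GrowthOfFluxes

section ShellGrowth

/-- The growth data on `shell R τ`: the `k`-th field grows at the rate `b k` in `L^{e k}`, with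
constant `A`, and the energy of the shell is at most `H`. -/
structure HasShellGrowth (u v : R3 → R3) (θ : R3 → ℝ) (e b : Fin 3 → ℝ) (A R τ H : ℝ) : Prop where
  one_le_const : 1 ≤ A
  one_le_radius : 1 ≤ R
  le_two_mul : τ ≤ 2 * R
  energy_pos : 0 < H
  lpS_le : ∀ k, lpS (fun x => ‖fields u v θ k x‖) (e k) (shell R τ) ≤ A * R ^ b k
  localEnergy_le : localEnergy (fields u v θ) (shell R τ) ≤ H

variable {u v : R3 → R3} {pr θ : R3 → ℝ} {e b : Fin 3 → ℝ} {s A R τ H : ℝ}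

theorem HasShellGrowth.lpS_six_sq_le (hg : HasShellGrowth u v θ e b A R τ H) (k : Fin 3) :
    lpS (fun x => ‖fields u v θ k x‖) 6 (shell R τ) ^ 2 ≤ H :=
  (lpS_six_sq_le_localEnergy _ _ k).trans hg.localEnergy_le

theorem HasShellGrowth.fluxDensity_le (hg : HasShellGrowth u v θ e b A R τ H)
    (h : IsSmoothTCM u v pr θ) (hp1 : 3 / 2 < e 0)
    (hadm : ∀ k, IsAdmissible (e 0) (b 0) (e k) (b k)) (he1 : 2 ≤ e 1) (he2 : 2 ≤ e 2) :
    R⁻¹ * ∫ x in shell R τ, fluxDensity u v θ x ≤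
      A ^ 3 * (∑ k, H ^ (1 - interpExponent (e 0) (e k))) +
        (shellConst * A) ^ 2 * R ^ (-(3 / e 1 + 3 / e 2 - 2 - (b 1 + b 2))) := by
  have hR0 : 0 < R := zero_lt_one.trans_le hg.one_le_radius
  have hu := h.contDiff_u.continuous
  have hv := h.contDiff_v.continuous
  have hθ := h.contDiff_θ.continuous
  have hW := fun k => (h.contDiff_field k).continuous
  have hsplit : ∫ x in shell R τ, fluxDensity u v θ x =
      (∑ k, ∫ x in shell R τ, ‖fields u v θ k x‖ ^ 2 * ‖u x‖) +
        ∫ x in shell R τ, |‖v x‖ * θ x| := by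
    simp only [fluxDensity, Finset.sum_mul]
    rw [integral_add (integrableOn_of_isBounded (isBounded_shell R τ) (by fun_prop))
      (integrableOn_of_isBounded (isBounded_shell R τ) (by fun_prop)),
      integral_finsetSum _ fun k _ =>
        integrableOn_of_isBounded (isBounded_shell R τ) (by have := hW k; fun_prop)]
    simp only [abs_mul, abs_norm, mul_comm |θ _|]
  have hθ_growth : lpS θ (e 2) (shell R τ) ≤ A * R ^ b 2 := by
    simpa [lpS, fields, norm_scalarField] using hg.lpS_le 2
  rw [hsplit, mul_add, Finset.mul_sum, Finset.mul_sum]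
  refine add_le_add (Finset.sum_le_sum fun k _ => ?_) ?_
  · exact (hadm k).convection_le hp1 hg.one_le_const hg.one_le_radius hu (hW k) (hg.lpS_le 0)
      (hg.lpS_le k) (hg.lpS_six_sq_le k)
  · exact coupling_le hv.norm hθ he1 he2 (zero_le_one.trans hg.one_le_const) hR0 hg.le_two_mul
      (hg.lpS_le 1) hθ_growth

theorem HasShellGrowth.diffusion_le (hg : HasShellGrowth u v θ e b A R τ H)
    (h : IsSmoothTCM u v pr θ) (hp1 : 3 / 2 < e 0)
    (hadm : ∀ k, IsAdmissible (e 0) (b 0) (e k) (b k)) :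
    R⁻¹ ^ 2 * (∑ k, lpS (fun x => ‖fields u v θ k x‖) 2 (shell R τ) ^ 2) ≤
      shellConst ^ 2 * A ^ 2 * ∑ k, H ^ (1 - interpExponent (e 0) (e k)) := by
  rw [Finset.mul_sum, Finset.mul_sum]
  exact Finset.sum_le_sum fun k _ => (hadm k).diffusion_le hp1 hg.one_le_const hg.one_le_radius
    hg.le_two_mul (h.contDiff_field k).continuous (hg.lpS_le k) (hg.lpS_six_sq_le k)

theorem HasShellGrowth.pressureGradBound_le (hg : HasShellGrowth u v θ e b A R τ H)
    (h : IsSmoothTCM u v pr θ) (hp1 : 3 / 2 < e 0)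
    (hadm : ∀ k, IsAdmissible (e 0) (b 0) (e k) (b k)) :
    pressureGradBound u v (shell R τ) R * lpS (fun x => ‖u x‖) 1 (shell R τ) ≤
      shellConst ^ 4 * A ^ 2 * H ^ (1 - interpExponent (e 0) (e 0)) +
        shellConst ^ 3 * A ^ 3 * (H ^ (1 - interpExponent (e 0) (e 0)) +
          H ^ (1 - interpExponent (e 0) (e 1))) := by
  have hR0 : 0 < R := zero_lt_one.trans_le hg.one_le_radius
  have hu := h.contDiff_u.continuous
  have hmean := (lpS_one_sq_scale_le hR0 hg.le_two_mul hu).trans (mul_le_mul_of_nonneg_left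
    ((hadm 0).diffusion_le hp1 hg.one_le_const hg.one_le_radius hg.le_two_mul hu (hg.lpS_le 0)
      (hg.lpS_six_sq_le 0)) (sq_nonneg shellConst))
  have hfar_u := (hadm 0).far_pressure_le hp1 hg.one_le_const hg.one_le_radius hg.le_two_mul hu hu
    (hg.lpS_le 0) (hg.lpS_le 0) (hg.lpS_six_sq_le 0)
  have hfar_v := (hadm 1).far_pressure_le hp1 hg.one_le_const hg.one_le_radius hg.le_two_mul hu
    h.contDiff_v.continuous (hg.lpS_le 0) (hg.lpS_le 1) (hg.lpS_six_sq_le 1)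
  rw [pressureGradBound]
  linear_combination hmean + hfar_u + hfar_v

theorem HasShellGrowth.exists_stressBound_le (hg : HasShellGrowth u v θ e b A R τ H)
    (h : IsSmoothTCM u v pr θ) (hp1 : 3 / 2 < e 0) {k : Fin 3}
    (hadm : IsAdmissible (e 0) (b 0) (e k) (b k)) (hks : e k ≤ s) (hs6 : s ≤ 6) :
    ∃ l, 0 < l ∧ R⁻¹ * (lpS (fun x => ‖u x‖) (e 0) (shell R τ) *
      stressBound (fields u v θ k) (e 0) s (shell R τ) l) ≤
        2 * A ^ 3 * H ^ (1 - interpExponent (e 0) (e k)) :=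
  hadm.exists_stressBound_le hp1 hg.one_le_const hg.one_le_radius hg.energy_pos hks hs6
    (h.contDiff_field k).continuous (hg.lpS_le 0) (hg.lpS_le k) (hg.lpS_six_sq_le k)
    ((lpS_norm_mul_sqrt_gradSq_le_localEnergy h.contDiff_field (isBounded_shell R τ) k).trans
      hg.localEnergy_le)

theorem HasShellGrowth.exists_caccioppoliBound_le (hg : HasShellGrowth u v θ e b A R τ H)
    (h : IsSmoothTCM u v pr θ) (hp1 : 3 / 2 < e 0)
    (hadm : ∀ k, IsAdmissible (e 0) (b 0) (e k) (b k)) (he1 : 2 ≤ e 1) (he2 : 2 ≤ e 2)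
    (h0s : e 0 ≤ s) (h1s : e 1 ≤ s) (hs6 : s ≤ 6) :
    ∃ l₁ l₂, 0 < l₁ ∧ 0 < l₂ ∧ caccioppoliBound u v θ (e 0) s R (shell R τ) l₁ l₂ ≤
      6 * (shellConst ^ 4 * A ^ 3) * (∑ k, H ^ (1 - interpExponent (e 0) (e k)) +
        R ^ (-(3 / e 1 + 3 / e 2 - 2 - (b 1 + b 2)))) := by
  obtain ⟨l₁, hl₁, hstress_u⟩ := hg.exists_stressBound_le h hp1 (hadm 0) h0s hs6
  obtain ⟨l₂, hl₂, hstress_v⟩ := hg.exists_stressBound_le h hp1 (hadm 1) h1s hs6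
  refine ⟨l₁, l₂, hl₁, hl₂, ?_⟩
  have hdiffusion := hg.diffusion_le h hp1 hadm
  have hflux := hg.fluxDensity_le h hp1 hadm he1 he2
  have hmean := hg.pressureGradBound_le h hp1 hadm
  have hA := hg.one_le_const
  have hV := one_le_shellConst
  have hε : 0 ≤ R ^ (-(3 / e 1 + 3 / e 2 - 2 - (b 1 + b 2))) :=
    Real.rpow_nonneg (zero_le_one.trans hg.one_le_radius) _
  have hpow : ∀ k, 0 ≤ H ^ (1 - interpExponent (e 0) (e k)) := fun k =>
    Real.rpow_nonneg hg.energy_pos.le _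
  have hcoef : ∀ {m n : ℕ} {y : ℝ}, m ≤ 4 → n ≤ 3 → 0 ≤ y →
      shellConst ^ m * A ^ n * y ≤ shellConst ^ 4 * A ^ 3 * y :=
    fun hm hn hy => mul_le_mul_of_nonneg_right (by gcongr) hy
  have hsum := add_nonneg (add_nonneg (hpow 0) (hpow 1)) (hpow 2)
  have hslack : 0 ≤ shellConst ^ 4 * A ^ 3 * (H ^ (1 - interpExponent (e 0) (e 1)) +
      4 * H ^ (1 - interpExponent (e 0) (e 2)) +
        5 * R ^ (-(3 / e 1 + 3 / e 2 - 2 - (b 1 + b 2)))) :=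
    mul_nonneg (by positivity) (by linarith [hpow 1, hpow 2])
  change R⁻¹ * (_ * stressBound u _ _ _ _) ≤ _ at hstress_u
  change R⁻¹ * (_ * stressBound v _ _ _ _) ≤ _ at hstress_v
  rw [caccioppoliBound, pressureWork]
  simp only [Fin.sum_univ_three] at hdiffusion hflux ⊢
  linear_combination hdiffusion + hflux + hmean + hstress_u + hstress_v +
    hcoef (m := 2) (n := 2) (by simp) (by simp) hsum +
    hcoef (m := 0) (n := 3) (by simp) le_rfl hsum +
    hcoef (m := 2) (n := 2) (by simp) (by simp) hε +
    hcoef (m := 4) (n := 2) le_rfl (by simp) (hpow 0) +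
    hcoef (m := 3) (n := 3) (by simp) le_rfl (add_nonneg (hpow 0) (hpow 1)) +
    2 * hcoef (m := 0) (n := 3) (by simp) le_rfl (add_nonneg (hpow 0) (hpow 1)) + hslack

theorem exists_localEnergy_ball_le (hp1 : 3 / 2 < e 0) (hp2 : e 0 < 3) (he1 : 2 ≤ e 1)
    (he2 : 2 ≤ e 2) (hadm : ∀ k, IsAdmissible (e 0) (b 0) (e k) (b k)) (hA : 0 ≤ A) :
    ∃ C, 0 ≤ C ∧ ∀ {u v : R3 → R3} {pr θ : R3 → ℝ} {R ρ τ H : ℝ}, IsSmoothTCM u v pr θ →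
      HasShellGrowth u v θ e b A R τ H → 9 / 5 * R ≤ ρ → ρ < τ →
        localEnergy (fields u v θ) (ball 0 ρ) ≤ C * (R / (τ - ρ)) ^ 6 *
          (∑ k, H ^ (1 - interpExponent (e 0) (e k)) +
            R ^ (-(3 / e 1 + 3 / e 2 - 2 - (b 1 + b 2)))) := by
  have hs2 : 2 ≤ max (e 0) (e 1) := he1.trans (le_max_right _ _)
  have hs := max_lt (hadm 0).lt_two_mul_conj (hadm 1).lt_two_mul_conj
  obtain ⟨C, hC0, hC⟩ := exists_localEnergy_ball_le_caccioppoliBound hp1 hp2 hs2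
    (one_lt_one_div_add_two_div hp1 (by linarith) hs)
  refine ⟨C * (6 * (shellConst ^ 4 * A ^ 3)),
    mul_nonneg hC0 (mul_nonneg (by norm_num) (mul_nonneg
      (pow_nonneg (zero_le_one.trans one_le_shellConst) 4) (pow_nonneg hA 3))),
    fun {u v pr θ R ρ τ H} h hg hρ hρτ => ?_⟩
  have hR : 0 < R := zero_lt_one.trans_le hg.one_le_radius
  obtain ⟨l₁, l₂, hl₁, hl₂, hbound⟩ := hg.exists_caccioppoliBound_le h hp1 hadm he1 he2
    (le_max_left _ _) (le_max_right _ _) (hs.trans (two_mul_conj_lt_six hp1)).le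
  calc localEnergy (fields u v θ) (ball 0 ρ)
      ≤ C * ((R / (τ - ρ)) ^ 6 *
          caccioppoliBound u v θ (e 0) (max (e 0) (e 1)) R (shell R τ) l₁ l₂) :=
        hC h hR hρ hρτ hg.le_two_mul hl₁ hl₂
    _ ≤ _ := by
        refine (mul_le_mul_of_nonneg_left (mul_le_mul_of_nonneg_left hbound ?_) hC0).trans_eq
          (by ring)
        exact pow_nonneg (div_nonneg hR.le (sub_nonneg.2 hρτ.le)) 6

end ShellGrowth

/-! ### Iteration and decay of the energy -/

section Iteration

theorem le_rpow_of_le_mul_rpow {S K κ : ℝ} (hS : 0 < S) (hκ : κ < 1) (h : S ≤ K * S ^ κ) :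
    S ≤ K ^ (1 / (1 - κ)) := by
  have hκ' : 0 < 1 - κ := sub_pos.2 hκ
  have hpow : S ^ (1 - κ) ≤ K := by
    rwa [Real.rpow_sub hS, Real.rpow_one, div_le_iff₀ (Real.rpow_pos_of_pos hS κ)]
  calc S = (S ^ (1 - κ)) ^ (1 / (1 - κ)) := by
        rw [← Real.rpow_mul hS.le, mul_one_div_cancel hκ'.ne', Real.rpow_one]
    _ ≤ K ^ (1 / (1 - κ)) := Real.rpow_le_rpow (by positivity) hpow (by positivity)

theorem mul_rpow_one_div_one_sub_rpow {c κ : ℝ} (hc : 0 < c) (hκ : κ < 1) :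
    c * (c ^ (1 / (1 - κ))) ^ κ = c ^ (1 / (1 - κ)) := by
  have hκ' : 1 - κ ≠ 0 := (sub_pos.2 hκ).ne'
  calc c * (c ^ (1 / (1 - κ))) ^ κ = c ^ (1 + 1 / (1 - κ) * κ) := by
        rw [← Real.rpow_mul hc.le, Real.rpow_add hc, Real.rpow_one]
    _ = c ^ (1 / (1 - κ)) := by
        congr 1
        field_simp
        ring

theorem le_of_le_mul_pow_mul_rpow {B c κ G : ℝ} (hc : 1 ≤ c) (hκ0 : 0 ≤ κ) (hκ1 : κ < 1)
    {g : ℕ → ℝ} (hg0 : ∀ n, 0 < g n) (hgG : ∀ n, g n ≤ G)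
    (h : ∀ n, g n ≤ B * c ^ n * g (n + 1) ^ κ) :
    g 0 ≤ (B * (c ^ (1 / (1 - κ))) ^ κ) ^ (1 / (1 - κ)) := by
  have hB : 0 < B := by
    have := (hg0 0).trans_le (h 0)
    rw [pow_zero, mul_one] at this
    exact pos_of_mul_pos_left this (Real.rpow_nonneg (hg0 1).le κ)
  have ha_fix := mul_rpow_one_div_one_sub_rpow (zero_lt_one.trans_le hc) hκ1
  have ha1 : 1 ≤ c ^ (1 / (1 - κ)) := Real.one_le_rpow hc (one_div_pos.2 (sub_pos.2 hκ1)).le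
  set a : ℝ := c ^ (1 / (1 - κ))
  have ha0 : 0 < a := zero_lt_one.trans_le ha1
  have hbdd : BddAbove (Set.range fun n => g n / a ^ n) := by
    refine ⟨G, ?_⟩
    rintro _ ⟨n, rfl⟩
    exact (div_le_self (hg0 n).le (one_le_pow₀ ha1)).trans (hgG n)
  set S := ⨆ n, g n / a ^ n
  have hgS : ∀ n, g n ≤ S * a ^ n := fun n =>
    (div_le_iff₀ (by positivity)).1 (le_ciSup hbdd n)
  have hg0S : g 0 ≤ S := by simpa using hgS 0
  have hS0 : 0 < S := (hg0 0).trans_le hg0S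
  refine hg0S.trans (le_rpow_of_le_mul_rpow hS0 hκ1 (ciSup_le fun n => ?_))
  rw [div_le_iff₀ (by positivity)]
  calc g n ≤ B * c ^ n * g (n + 1) ^ κ := h n
    _ ≤ B * c ^ n * (S * a ^ (n + 1)) ^ κ := by
        gcongr
        exacts [(hg0 _).le, hgS _]
    _ = B * a ^ κ * S ^ κ * (c * a ^ κ) ^ n := by
        rw [Real.mul_rpow hS0.le (by positivity), ← Real.rpow_pow_comm ha0.le]
        ring
    _ = B * a ^ κ * S ^ κ * a ^ n := by rw [ha_fix]

/-- The energy estimate at the scale `R`: the local energy of a ball of radius between `9 / 5 * R`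
and `2 * R` is bounded by the powers `κ k` of the energy of a surrounding shell, up to an error
`R ^ (-ε)`. -/
def HasEnergyEstimate (W : Fin 3 → R3 → R3) (C ε : ℝ) (κ : Fin 3 → ℝ) (R : ℝ) : Prop :=
  ∀ ρ τ H : ℝ, 9 / 5 * R ≤ ρ → ρ < τ → τ ≤ 2 * R → 0 < H → localEnergy W (shell R τ) ≤ H →
    localEnergy W (ball 0 ρ) ≤ C * (R / (τ - ρ)) ^ 6 * (∑ k, H ^ κ k + R ^ (-ε))

variable {W : Fin 3 → R3 → R3} {C ε R : ℝ} {κ : Fin 3 → ℝ}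

theorem HasEnergyEstimate.one_add_localEnergy_le (hE : HasEnergyEstimate W C ε κ R)
    (hW : ∀ k, ContDiff ℝ ∞ (W k)) (hC : 0 ≤ C) (hε : 0 ≤ ε) (hR : 1 ≤ R) {μ : ℝ} (hμ0 : 0 ≤ μ)
    (hκμ : ∀ k, κ k ≤ μ) (n : ℕ) {ρ τ : ℝ} (hρ : 9 / 5 * R ≤ ρ) (hτ : τ ≤ 2 * R)
    (hρτ : τ - ρ = R / (10 * 2 ^ n)) :
    1 + localEnergy W (ball 0 ρ) ≤
      (1 + 4 * C * 10 ^ 6) * 64 ^ n * (1 + localEnergy W (ball 0 τ)) ^ μ := by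
  have hR0 : 0 < R := zero_lt_one.trans_le hR
  have hgap : 0 < τ - ρ := hρτ ▸ by positivity
  set H := 1 + localEnergy W (ball 0 τ)
  have hH : 1 ≤ H := le_add_of_nonneg_right (localEnergy_nonneg _ _)
  have hshell : localEnergy W (shell R τ) ≤ H :=
    (localEnergy_mono hW isBounded_ball Set.sdiff_subset).trans
      (le_add_of_nonneg_left zero_le_one)
  have hHμ : 1 ≤ H ^ μ := Real.one_le_rpow hH hμ0
  have hpowers : ∑ k, H ^ κ k + R ^ (-ε) ≤ 4 * H ^ μ := by
    have hκ k : H ^ κ k ≤ H ^ μ := Real.rpow_le_rpow_of_exponent_le hH (hκμ k)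
    have hRε : R ^ (-ε) ≤ 1 := Real.rpow_le_one_of_one_le_of_nonpos hR (neg_nonpos.2 hε)
    rw [Fin.sum_univ_three]
    linarith [hκ 0, hκ 1, hκ 2]
  have hratio : (R / (τ - ρ)) ^ 6 = 10 ^ 6 * 64 ^ n := by
    rw [hρτ, div_div_cancel₀ hR0.ne', mul_pow, ← pow_mul, mul_comm n 6, pow_mul]
    norm_num
  have hball := hE ρ τ H hρ (sub_pos.1 hgap) hτ (zero_lt_one.trans_le hH) hshell
  calc 1 + localEnergy W (ball 0 ρ)
      ≤ 64 ^ n * H ^ μ + C * (10 ^ 6 * 64 ^ n) * (4 * H ^ μ) :=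
        add_le_add (one_le_mul_of_one_le_of_one_le (one_le_pow₀ (by norm_num)) hHμ)
          (hball.trans (hratio ▸ by gcongr))
    _ = (1 + 4 * C * 10 ^ 6) * 64 ^ n * H ^ μ := by ring

theorem exists_forall_hasEnergyEstimate_localEnergy_le (hW : ∀ k, ContDiff ℝ ∞ (W k)) (hC : 0 ≤ C)
    (hε : 0 ≤ ε) (hκ0 : ∀ k, 0 ≤ κ k) (hκ1 : ∀ k, κ k < 1) :
    ∃ M, ∀ R, 1 ≤ R → HasEnergyEstimate W C ε κ R → localEnergy W (ball 0 (9 / 5 * R)) ≤ M := by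
  obtain ⟨j, hj⟩ := Finite.exists_max κ
  refine ⟨((1 + 4 * C * 10 ^ 6) * (64 ^ (1 / (1 - κ j))) ^ κ j) ^ (1 / (1 - κ j)),
    fun R hR hE => ?_⟩
  set s : ℕ → ℝ := fun n => (2 - 1 / 5 * (1 / 2) ^ n) * R with hs
  have hhalf n : 0 < (1 / 2 : ℝ) ^ n ∧ (1 / 2 : ℝ) ^ n ≤ 1 :=
    ⟨by positivity, pow_le_one₀ (by norm_num) (by norm_num)⟩
  have hs_ge n : 9 / 5 * R ≤ s n :=
    mul_le_mul_of_nonneg_right (by linarith [(hhalf n).2]) (by linarith)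
  have hs_le n : s n ≤ 2 * R :=
    mul_le_mul_of_nonneg_right (by linarith [(hhalf n).1]) (by linarith)
  have hs_sub n : s (n + 1) - s n = R / (10 * 2 ^ n) := by
    simp only [hs, one_div_pow, pow_succ]
    field_simp
    ring
  have hs0 : s 0 = 9 / 5 * R := by norm_num [hs]
  have hiter := le_of_le_mul_pow_mul_rpow (g := fun n => 1 + localEnergy W (ball 0 (s n)))
    (G := 1 + localEnergy W (ball 0 (2 * R))) (by norm_num) (hκ0 j) (hκ1 j)
    (fun n => add_pos_of_pos_of_nonneg one_pos (localEnergy_nonneg _ _))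
    (fun n => by gcongr; exact localEnergy_mono hW isBounded_ball (ball_subset_ball (hs_le n)))
    (fun n => hE.one_add_localEnergy_le hW hC hε hR (hκ0 j) hj n (hs_ge n) (hs_le _) (hs_sub n))
  rw [← hs0]
  exact (le_add_of_nonneg_left zero_le_one).trans hiter

end Iteration

section Decay

variable {f : R3 → ℝ} {W : Fin 3 → R3 → R3} {C ε M p : ℝ} {κ : Fin 3 → ℝ}

theorem integrable_of_setIntegral_ball_le (hf : Continuous f) (hf0 : ∀ x, 0 ≤ f x)
    (hM : ∀ R, ∫ x in ball 0 R, f x ≤ M) : Integrable f :=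
  (aecover_ball (μ := volume) (x := (0 : R3)) tendsto_natCast_atTop_atTop)
    |>.integrable_of_integral_norm_bounded M
      (fun _ => integrableOn_of_isBounded isBounded_ball hf)
      (Eventually.of_forall fun n => by simpa only [Real.norm_of_nonneg (hf0 _)] using hM n)

theorem tendsto_setIntegral_compl_ball (hf : Integrable f) :
    Tendsto (fun R => ∫ x in (ball 0 R)ᶜ, f x) atTop (nhds 0) := by
  have hball := (aecover_ball (μ := volume) (x := (0 : R3)) tendsto_id)
    |>.integral_tendsto_of_countably_generated hf
  simpa only [setIntegral_compl measurableSet_ball hf, sub_self, id] using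
    hball.const_sub (∫ x, f x)

theorem integrable_gradSq_of_localEnergy_le (hW : ∀ k, ContDiff ℝ ∞ (W k))
    (hM : ∀ R, localEnergy W (ball 0 R) ≤ M) (k : Fin 3) : Integrable (gradSq (W k)) :=
  integrable_of_setIntegral_ball_le (continuous_gradSq (hW k)) (gradSq_nonneg _)
    fun R => (integral_gradSq_le_localEnergy W _ k).trans (hM R)

theorem integrable_rpow_six_of_localEnergy_le (hW : ∀ k, ContDiff ℝ ∞ (W k))
    (hM : ∀ R, localEnergy W (ball 0 R) ≤ M) (k : Fin 3) :
    Integrable fun x => |‖W k x‖| ^ (6 : ℝ) := by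
  refine integrable_of_setIntegral_ball_le (M := M ^ 3)
    (continuous_abs_rpow (hW k).continuous.norm (by norm_num))
    (fun x => Real.rpow_nonneg (abs_nonneg _) 6) fun R => ?_
  have hcube : (lpS (fun x => ‖W k x‖) 6 (ball 0 R) ^ 2) ^ 3 =
      ∫ x in ball 0 R, |‖W k x‖| ^ (6 : ℝ) := by
    rw [← pow_mul, ← Real.rpow_natCast, ← Real.rpow_one (∫ x in ball 0 R, |‖W k x‖| ^ (6 : ℝ)),
      ← lpS_rpow (by norm_num)]
    norm_num
  rw [← hcube]
  exact pow_le_pow_left₀ (sq_nonneg _) ((lpS_six_sq_le_localEnergy W _ k).trans (hM R)) 3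

theorem tendsto_localEnergy_compl_ball (hW : ∀ k, ContDiff ℝ ∞ (W k))
    (hM : ∀ R, localEnergy W (ball 0 R) ≤ M) :
    Tendsto (fun R => localEnergy W (ball 0 R)ᶜ) atTop (nhds 0) := by
  have hterm k : Tendsto (fun R => (∫ x in (ball 0 R)ᶜ, gradSq (W k) x) +
      lpS (fun x => ‖W k x‖) 6 (ball 0 R)ᶜ ^ 2) atTop (nhds 0) := by
    have hgrad := tendsto_setIntegral_compl_ball (integrable_gradSq_of_localEnergy_le hW hM k)
    have hsix := (tendsto_setIntegral_compl_ball (integrable_rpow_six_of_localEnergy_le hW hM k))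
      |>.rpow_const (p := 1 / 6) (Or.inr (by norm_num))
    simpa [lpS] using hgrad.add (hsix.pow 2)
  simpa [localEnergy] using tendsto_finsetSum Finset.univ fun k _ => hterm k

theorem localEnergy_shell_le_localEnergy_compl_ball (hW : ∀ k, ContDiff ℝ ∞ (W k))
    (hM : ∀ R, localEnergy W (ball 0 R) ≤ M) (R τ : ℝ) :
    localEnergy W (shell R τ) ≤ localEnergy W (ball 0 R)ᶜ := by
  have hsub : shell R τ ⊆ (ball 0 R)ᶜ := fun x hx => hx.2
  have hmono {f : R3 → ℝ} (hf : Integrable f) (hf0 : ∀ x, 0 ≤ f x) :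
      ∫ x in shell R τ, f x ≤ ∫ x in (ball 0 R)ᶜ, f x :=
    setIntegral_mono_set hf.integrableOn (ae_of_all _ hf0) hsub.eventuallyLE
  refine Finset.sum_le_sum fun k _ => add_le_add
    (hmono (integrable_gradSq_of_localEnergy_le hW hM k) (gradSq_nonneg _))
    (pow_le_pow_left₀ lpS_nonneg ?_ 2)
  exact Real.rpow_le_rpow integral_abs_rpow_nonneg
    (hmono (integrable_rpow_six_of_localEnergy_le hW hM k)
      fun _ => Real.rpow_nonneg (abs_nonneg _) _) (by norm_num)

theorem localEnergy_ball_eq_zero_of_frequently (hW : ∀ k, ContDiff ℝ ∞ (W k)) (hC : 0 ≤ C)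
    (hε : 0 < ε) (hκ0 : ∀ k, 0 < κ k) (hM : ∀ R, localEnergy W (ball 0 R) ≤ M)
    (hE : ∃ᶠ R in atTop, HasEnergyEstimate W C ε κ R) (ρ : ℝ) :
    localEnergy W (ball 0 ρ) = 0 := by
  refine le_antisymm (le_of_forall_pos_le_add fun η hη => ?_) (localEnergy_nonneg _ _)
  have hsmall : ∀ᶠ δ in nhdsWithin (0 : ℝ) (Set.Ioi 0),
      C * 5 ^ 6 * (∑ k, δ ^ κ k + δ) < η := by
    have hcont : Continuous fun δ : ℝ => C * 5 ^ 6 * (∑ k, δ ^ κ k + δ) :=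
      continuous_const.mul ((continuous_finsetSum _ fun k _ =>
        Real.continuous_rpow_const (hκ0 k).le).add continuous_id)
    refine (hcont.tendsto 0).mono_left nhdsWithin_le_nhds |>.eventually_lt_const ?_
    simpa [Real.zero_rpow (hκ0 _).ne'] using hη
  obtain ⟨δ, hδη, hδ⟩ := (hsmall.and self_mem_nhdsWithin).exists
  have hδ0 : 0 < δ := hδ
  have htail := (tendsto_localEnergy_compl_ball hW hM).eventually_le_const hδ0
  have herror := (tendsto_rpow_neg_atTop hε).eventually_le_const hδ0
  obtain ⟨R, hRE, ⟨hRtail, hRerror⟩, hR⟩ :=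
    (hE.and_eventually ((htail.and herror).and (eventually_ge_atTop (max 1 ρ)))).exists
  have hR1 : 1 ≤ R := (le_max_left _ _).trans hR
  have hRρ : ρ ≤ R := (le_max_right _ _).trans hR
  have hratio : R / (2 * R - 9 / 5 * R) = 5 := by
    rw [← sub_mul]
    field_simp
    norm_num
  calc localEnergy W (ball 0 ρ) ≤ localEnergy W (ball 0 (9 / 5 * R)) :=
        localEnergy_mono hW isBounded_ball (ball_subset_ball (by linarith))
    _ ≤ C * (R / (2 * R - 9 / 5 * R)) ^ 6 * (∑ k, δ ^ κ k + R ^ (-ε)) :=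
        hRE (9 / 5 * R) (2 * R) δ le_rfl (by linarith) le_rfl hδ0
          ((localEnergy_shell_le_localEnergy_compl_ball hW hM _ _).trans hRtail)
    _ = C * 5 ^ 6 * (∑ k, δ ^ κ k + R ^ (-ε)) := by rw [hratio]
    _ ≤ C * 5 ^ 6 * (∑ k, δ ^ κ k + δ) := by gcongr
    _ ≤ 0 + η := by rw [zero_add]; exact hδη.le

theorem eqOn_zero_of_lpS_eq_zero (hf : Continuous f) (hp : 0 < p) {U : Set R3} (hU : IsOpen U)
    (hbdd : Bornology.IsBounded U) (h : lpS f p U = 0) : Set.EqOn f 0 U := by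
  have hpow := continuous_abs_rpow hf hp.le
  have hint : ∫ x in U, |f x| ^ p = 0 :=
    (Real.rpow_eq_zero integral_abs_rpow_nonneg (one_div_pos.2 hp).ne').1 h
  have hae := (integral_eq_zero_iff_of_nonneg (fun _ => Real.rpow_nonneg (abs_nonneg _) _)
    (integrableOn_of_isBounded hbdd hpow)).1 hint
  intro x hx
  have hx0 := Measure.eqOn_open_of_ae_eq hae hU hpow.continuousOn continuousOn_const hx
  exact abs_eq_zero.1 ((Real.rpow_eq_zero (abs_nonneg _) hp.ne').1 hx0)

theorem eq_zero_of_frequently_hasEnergyEstimate (hW : ∀ k, ContDiff ℝ ∞ (W k)) (hC : 0 ≤ C)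
    (hε : 0 < ε) (hκ0 : ∀ k, 0 < κ k) (hκ1 : ∀ k, κ k < 1)
    (hE : ∃ᶠ R in atTop, HasEnergyEstimate W C ε κ R) (k : Fin 3) (x : R3) : W k x = 0 := by
  obtain ⟨M, hM⟩ := exists_forall_hasEnergyEstimate_localEnergy_le hW hC hε.le
    (fun k => (hκ0 k).le) hκ1
  have hbound ρ : localEnergy W (ball 0 ρ) ≤ M := by
    obtain ⟨R, hRE, hR⟩ := (hE.and_eventually (eventually_ge_atTop (max 1 ρ))).exists
    have hR1 : 1 ≤ R := (le_max_left _ _).trans hR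
    have hRρ : ρ ≤ R := (le_max_right _ _).trans hR
    exact (localEnergy_mono hW isBounded_ball (ball_subset_ball (by linarith))).trans
      (hM R hR1 hRE)
  have hzero := localEnergy_ball_eq_zero_of_frequently hW hC hε hκ0 hbound hE (‖x‖ + 1)
  have hsix : lpS (fun x => ‖W k x‖) 6 (ball 0 (‖x‖ + 1)) = 0 :=
    pow_eq_zero_iff two_ne_zero |>.1
      (le_antisymm (hzero ▸ lpS_six_sq_le_localEnergy W _ k) (sq_nonneg _))
  exact norm_eq_zero.1 (eqOn_zero_of_lpS_eq_zero (hW k).continuous.norm (by norm_num) isOpen_ball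
    isBounded_ball hsix (by simp))

end Decay

section AnnulusGrowth

variable {a p R τ A : ℝ}

theorem two_mul_interpExponent (p q : ℝ) :
    2 * interpExponent p q = (4 * p - 6) * q / ((6 - q) * p) := by
  rw [interpExponent]
  ring

theorem isBounded_annulus (R : ℝ) : Bornology.IsBounded (annulus R) :=
  isBounded_ball.subset Set.sdiff_subset

theorem lpS_shell_le_of_annulus {f : R3 → ℝ} (hf : Continuous f) (hp : 0 < p) (hR : 0 < R)
    (hτ : τ ≤ 2 * R) (h : R ^ (-a) * lpS f p (annulus R) ≤ A) :
    lpS f p (shell R τ) ≤ A * R ^ a := by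
  refine (lpS_mono_set (isBounded_annulus R) (shell_subset_annulus hτ) hf hp).trans ?_
  rwa [Real.rpow_neg hR.le, inv_mul_le_iff₀ (by positivity), mul_comm] at h

theorem IsSmoothTCM.lpS_shell_le {u v : R3 → R3} {pr θ : R3 → ℝ} {e b : Fin 3 → ℝ}
    (h : IsSmoothTCM u v pr θ) (he : ∀ k, 0 < e k) (hR : 0 < R) (hτ : τ ≤ 2 * R)
    (hA : XnV u (b 0) (e 0) R + XnV v (b 1) (e 1) R + XnS θ (b 2) (e 2) R ≤ A) (k : Fin 3) :
    lpS (fun x => ‖fields u v θ k x‖) (e k) (shell R τ) ≤ A * R ^ b k := by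
  refine lpS_shell_le_of_annulus (h.contDiff_field k).continuous.norm (he k) hR hτ ?_
  have hnonneg (f : R3 → ℝ) (a p : ℝ) : 0 ≤ R ^ (-a) * lpS f p (annulus R) :=
    mul_nonneg (Real.rpow_nonneg hR.le _) lpS_nonneg
  have hu : 0 ≤ XnV u (b 0) (e 0) R := hnonneg _ _ _
  have hv : 0 ≤ XnV v (b 1) (e 1) R := hnonneg _ _ _
  have hθ : 0 ≤ XnS θ (b 2) (e 2) R := hnonneg _ _ _
  fin_cases k
  · exact (show XnV u (b 0) (e 0) R ≤ A by linarith)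
  · exact (show XnV v (b 1) (e 1) R ≤ A by linarith)
  · refine (le_of_eq ?_).trans (show XnS θ (b 2) (e 2) R ≤ A by linarith)
    simp [XnS, lpS, fields, norm_scalarField]

end AnnulusGrowth

theorem liouville_tcm_A14 (u v : R3 → R3) (pr θ : R3 → ℝ)
    (hu : ContDiff ℝ (⊤ : ℕ∞) u) (hv : ContDiff ℝ (⊤ : ℕ∞) v)
    (hpr : ContDiff ℝ (⊤ : ℕ∞) pr) (hθ : ContDiff ℝ (⊤ : ℕ∞) θ)
    (hsol : TCM u v pr θ)
    (p q r α β γ : ℝ)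
    (hp1 : 3 / 2 < p) (hp2 : p < 3)
    (hq1 : 2 ≤ q) (hq2 : q < 2 * (p / (p - 1)))
    (hr1 : 2 ≤ r) (hr2 : r < 2 * (p / (p - 1)))
    (hα1 : 0 ≤ α) (hα2 : α ≤ 2 / p - 1 / 3)
    (hβ1 : 0 ≤ β) (hβ2 : β ≤ 3 / q - 1 / 2)
    (hγ1 : 0 ≤ γ) (hγ2 : γ ≤ 3 / r - 1 / 2)
    (hc1 : α + ((4 * p - 6) * q / ((6 - q) * p)) * β ≤ 1)
    (hc2 : α + ((4 * p - 6) * r / ((6 - r) * p)) * γ ≤ 1)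
    (hc3 : β + γ < 3 / q + 3 / r - 2)
    (hliminf : ∃ C : ℝ, ∃ᶠ R in (atTop : Filter ℝ),
      XnV u α p R + XnV v β q R + XnS θ γ r R ≤ C) :
    (∀ x, u x = 0) ∧ (∀ x, v x = 0) ∧ (∀ x, θ x = 0) := by
  obtain ⟨C, hC⟩ := hliminf
  have h : IsSmoothTCM u v pr θ := ⟨hu, hv, hpr, hθ, hsol⟩
  have hadm : ∀ k, IsAdmissible p α (![p, q, r] k) (![α, β, γ] k) := Fin.forall_fin_succ.2
    ⟨isAdmissible_self hp1 hp2 hα2, Fin.forall_fin_two.2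
      ⟨⟨two_pos.trans_le hq1, hq2, by simpa [two_mul_interpExponent] using hc1, hβ2⟩,
        ⟨two_pos.trans_le hr1, hr2, by simpa [two_mul_interpExponent] using hc2, hγ2⟩⟩⟩
  obtain ⟨K, hK0, hK⟩ := exists_localEnergy_ball_le (e := ![p, q, r]) (b := ![α, β, γ])
    (A := max C 1) hp1 hp2 hq1 hr1 hadm (zero_le_one.trans (le_max_right C 1))
  have hestimate : ∃ᶠ R in atTop, HasEnergyEstimate (fields u v θ) K
      (3 / q + 3 / r - 2 - (β + γ)) (fun k => 1 - interpExponent p (![p, q, r] k)) R := by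
    refine (hC.and_eventually (eventually_ge_atTop 1)).mono ?_
    rintro R ⟨hX, hR⟩ ρ τ H hρ hρτ hτ hH hle
    refine hK h ⟨le_max_right C 1, hR, hτ, hH, ?_, hle⟩ hρ hρτ
    exact h.lpS_shell_le (fun k => (hadm k).pos) (zero_lt_one.trans_le hR) hτ
      (hX.trans (le_max_left C 1))
  have hzero := eq_zero_of_frequently_hasEnergyEstimate h.contDiff_field hK0 (sub_pos.2 hc3)
    (fun k => sub_pos.2 (interpExponent_lt_one hp1 (hadm k).lt_two_mul_conj))
    (fun k => sub_lt_self 1 ((hadm k).interpExponent_pos hp1)) hestimate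
  refine ⟨hzero 0, hzero 1, fun x => abs_eq_zero.1 ?_⟩
  rw [← norm_scalarField, norm_eq_zero]
  exact hzero 2 x
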